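/- Let Ω ⊂ ℝ² be a compact convex set of positive measure, let D ⊂ ℝ² be a closed convex set of finite positive measure with 0 in its interior, and let Q = {q_k} ⊂ (0,∞) be a uniformly discrete set. Then the union of dilated boundary curves P = Q∂D = ⋃_k q_k ∂D is a sampling set for B_Ω if and only if d⁻(Q)·v ∉ Ω − Ω for every v ∈ Ext(D°). -/

import Mathlib

open MeasureTheory FourierTransform Filter Metric
open scoped Pointwise RealInnerProductSpace ENNReal NNReal

noncomputable section

variable {V : Type*} [NormedAddCommGroup V] [InnerProductSpace ℝ V]
  [FiniteDimensional ℝ V] [MeasurableSpace V] [BorelSpace V]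

/-- `f` belongs to the Bernstein space `B_Ω`: it is a continuous bounded function which is the
inverse Fourier transform of a tempered distribution supported in `Ω`, i.e. its distributional
Fourier transform annihilates every test function whose support is disjoint from `Ω`. -/
def MemBernstein (Ω : Set V) (f : V → ℂ) : Prop :=
  Continuous f ∧ (∃ C, ∀ x, ‖f x‖ ≤ C) ∧
    ∀ ψ : V → ℂ, ContDiff ℝ (⊤ : ℕ∞) ψ → HasCompactSupport ψ → tsupport ψ ∩ Ω = ∅ →
      ∫ x, f x * 𝓕 ψ x = 0

/-- `P` is a sampling set for the Bernstein space `B_Ω`: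
`‖f‖_∞ ≤ C · sup_{x ∈ P} ‖f x‖` for all `f ∈ B_Ω`. -/
def IsSamplingSet (Ω P : Set V) : Prop :=
  ∃ C > 0, ∀ f : V → ℂ, MemBernstein Ω f →
    ∀ x : V, ‖f x‖ ≤ C * sSup ((fun p => ‖f p‖) '' P)

/-- A set is uniformly discrete if distinct points are separated by a fixed positive distance. -/
def UniformlyDiscrete {X : Type*} [PseudoMetricSpace X] (Λ : Set X) : Prop :=
  ∃ δ > 0, ∀ x ∈ Λ, ∀ y ∈ Λ, x ≠ y → δ ≤ dist x y

/-- The lower uniform (Beurling) density of a set: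
`D⁻(Λ) = lim_{r→∞} inf_x #(Λ ∩ B_r(x)) / |B_r(x)|`. -/
def lowerUniformDensity {X : Type*} [NormedAddCommGroup X] [MeasureSpace X] (Λ : Set X) : ℝ :=
  liminf (fun r : ℝ => ⨅ x : X,
    (Nat.card ↥(Λ ∩ closedBall x r) : ℝ) / (volume (closedBall x r)).toReal) atTop

set_option linter.unusedSectionVars false

lemma integrable_fourier_of_hasCompactSupport {ψ : V → ℂ} (hψ : ContDiff ℝ (⊤ : ℕ∞) ψ)
    (hc : HasCompactSupport ψ) : Integrable (𝓕 ψ) := by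
  have h := (𝓕 (hc.toSchwartzMap hψ)).integrable (μ := volume)
  exact h

lemma continuous_fourier_of_integrable {ψ : V → ℂ} (hψ : Integrable ψ) : Continuous (𝓕 ψ) :=
  VectorFourier.fourierIntegral_continuous Real.continuous_fourierChar
    (by exact continuous_inner) hψ

lemma norm_fourier_le_integral_norm (ψ : V → ℂ) (x : V) : ‖𝓕 ψ x‖ ≤ ∫ v, ‖ψ v‖ :=
  VectorFourier.norm_fourierIntegral_le_integral_norm _ _ _ _ _

lemma fourier_fourierChar_mul (ψ : V → ℂ) (a x : V) :
    𝓕 (fun v => (Real.fourierChar ⟪a, v⟫ : ℂ) * ψ v) x = 𝓕 ψ (x - a) := by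
  rw [Real.fourier_eq, Real.fourier_eq]
  congr 1 with v
  simp only [Circle.smul_def, smul_eq_mul]
  rw [← mul_assoc, ← Circle.coe_mul, ← AddChar.map_add_eq_mul, inner_sub_right,
    real_inner_comm a v]
  ring_nf

lemma fourier_comp_add_right' (ψ : V → ℂ) (a x : V) :
    𝓕 (fun v => ψ (v + a)) x = (Real.fourierChar ⟪a, x⟫ : ℂ) * 𝓕 ψ x := by
  rw [Real.fourier_eq, Real.fourier_eq, ← integral_const_mul,
    ← integral_add_right_eq_self (fun v => (Real.fourierChar ⟪a, x⟫ : ℂ) *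
      (Real.fourierChar (-⟪v, x⟫) • ψ v)) a]
  congr 1 with v
  simp only [Circle.smul_def, smul_eq_mul]
  rw [← mul_assoc, ← Circle.coe_mul, ← AddChar.map_add_eq_mul, inner_add_left]
  ring_nf

lemma fourier_comp_smul' (ψ : V → ℂ) {s : ℝ} (hs : s ≠ 0) (x : V) :
    𝓕 (fun v => ψ (s • v)) x = |(s ^ Module.finrank ℝ V)⁻¹| • 𝓕 ψ (s⁻¹ • x) := by
  rw [Real.fourier_eq, Real.fourier_eq,
    ← Measure.integral_comp_smul volume
      (fun v => Real.fourierChar (-⟪v, s⁻¹ • x⟫) • ψ v) s]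
  congr 1 with v
  simp only [inner_smul_left, inner_smul_right]
  simp [← mul_assoc, inv_mul_cancel₀ hs]

lemma contDiff_fourierChar_inner (a : V) :
    ContDiff ℝ (⊤ : ℕ∞) (fun v : V => (Real.fourierChar ⟪a, v⟫ : ℂ)) := by
  simp only [Real.fourierChar_apply]
  exact Complex.contDiff_exp.comp (ContDiff.mul (Complex.ofRealCLM.contDiff.comp
    ((contDiff_const (c := 2 * Real.pi)).mul (contDiff_const.inner ℝ contDiff_id))) contDiff_const)

namespace MemBernstein

variable {Ω Ω' : Set V} {f g : V → ℂ}

lemma mono (h : MemBernstein Ω f) (hΩ : Ω ⊆ Ω') : MemBernstein Ω' f :=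
  ⟨h.1, h.2.1, fun ψ h1 h2 h3 => h.2.2 ψ h1 h2
    (Set.subset_empty_iff.1 (h3 ▸ Set.inter_subset_inter_right _ hΩ))⟩

lemma integrable_mul (h : MemBernstein Ω f) {φ : V → ℂ} (hφ : Integrable φ) :
    Integrable (fun x => f x * φ x) := by
  obtain ⟨C, hC⟩ := h.2.1
  exact hφ.bdd_mul h.1.aestronglyMeasurable (Eventually.of_forall hC)

lemma const_mul (h : MemBernstein Ω f) (c : ℂ) : MemBernstein Ω (fun x => c * f x) := by
  obtain ⟨h1, ⟨C, hC⟩, h3⟩ := h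
  refine ⟨by fun_prop, ⟨‖c‖ * C, fun x => ?_⟩, fun ψ a b d => ?_⟩
  · rw [norm_mul]; gcongr; exact hC x
  · simp_rw [mul_assoc]
    rw [integral_const_mul, h3 ψ a b d, mul_zero]

lemma add (hf : MemBernstein Ω f) (hg : MemBernstein Ω g) :
    MemBernstein Ω (fun x => f x + g x) := by
  obtain ⟨C, hC⟩ := hf.2.1
  obtain ⟨C', hC'⟩ := hg.2.1
  refine ⟨hf.1.add hg.1, ⟨C + C', fun x => (norm_add_le _ _).trans (add_le_add (hC x) (hC' x))⟩,
    fun ψ a b d => ?_⟩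
  simp_rw [add_mul]
  have hi := integrable_fourier_of_hasCompactSupport a b
  rw [integral_add (hf.integrable_mul hi) (hg.integrable_mul hi), hf.2.2 ψ a b d,
    hg.2.2 ψ a b d, add_zero]

lemma zero : MemBernstein Ω (fun _ => (0 : ℂ)) :=
  ⟨continuous_const, ⟨0, by simp⟩, by simp⟩

lemma sum {ι : Type*} (s : Finset ι) {F : ι → V → ℂ} (h : ∀ i ∈ s, MemBernstein Ω (F i)) :
    MemBernstein Ω (fun x => ∑ i ∈ s, F i x) := by
  classical
  induction s using Finset.induction_on with
  | empty => simpa using zero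
  | insert a s ha ih =>
    simp_rw [Finset.sum_insert ha]
    exact (h a (by simp)).add (ih fun i hi => h i (by simp [hi]))

lemma fourierChar {ω : V} (hω : ω ∈ Ω) :
    MemBernstein Ω (fun x => (Real.fourierChar ⟪ω, x⟫ : ℂ)) := by
  refine ⟨(contDiff_fourierChar_inner ω).continuous, ⟨1, fun x => (Circle.norm_coe _).le⟩,
    fun ψ a b d => ?_⟩
  have hψ : Integrable ψ := a.continuous.integrable_of_hasCompactSupport b
  have h := hψ.fourierInv_fourier_eq (integrable_fourier_of_hasCompactSupport a b)
    (v := ω) a.continuous.continuousAt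
  rw [Real.fourierInv_eq] at h
  have h0 : ψ ω = 0 := by
    by_contra hne
    have : ω ∈ tsupport ψ ∩ Ω := ⟨subset_tsupport _ hne, hω⟩
    simp [d] at this
  rw [← h0, ← h]
  congr 1 with v
  simp [Circle.smul_def, real_inner_comm]

lemma comp_add_right (h : MemBernstein Ω f) (a : V) : MemBernstein Ω (fun x => f (x + a)) := by
  obtain ⟨h1, ⟨C, hC⟩, h3⟩ := h
  refine ⟨by fun_prop, ⟨C, fun x => hC _⟩, fun ψ p q r => ?_⟩
  rw [← h3 (fun v => (Real.fourierChar ⟪a, v⟫ : ℂ) * ψ v)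
    ((contDiff_fourierChar_inner a).mul p) q.mul_left ?_,
    ← integral_add_right_eq_self (fun x => f x * _) a]
  · congr 1 with x
    rw [fourier_fourierChar_mul, add_sub_cancel_right]
  · refine Set.subset_empty_iff.1 (r ▸ Set.inter_subset_inter_left _ ?_)
    exact tsupport_mul_subset_right

lemma fourierChar_mul (h : MemBernstein Ω f) (ω : V) (hΩ : ∀ ξ ∈ Ω, ξ + ω ∈ Ω') :
    MemBernstein Ω' (fun x => (Real.fourierChar ⟪ω, x⟫ : ℂ) * f x) := by
  obtain ⟨h1, ⟨C, hC⟩, h3⟩ := h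
  refine ⟨(contDiff_fourierChar_inner ω).continuous.mul h1, ⟨C, fun x => ?_⟩, fun ψ p q r => ?_⟩
  · simpa [norm_mul, Circle.norm_coe] using hC x
  · rw [← h3 (fun v => ψ (v + ω)) (by fun_prop)
      (q.comp_homeomorph (Homeomorph.addRight ω)) ?_]
    · congr 1 with x
      rw [fourier_comp_add_right']; ring
    · rw [Set.eq_empty_iff_forall_notMem] at r ⊢
      rintro x ⟨hx, hx'⟩
      refine r (x + ω) ⟨?_, hΩ x hx'⟩
      exact tsupport_comp_subset_preimage ψ (by fun_prop : Continuous fun v : V => v + ω) hx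

lemma comp_smul (h : MemBernstein Ω f) {s : ℝ} (hs : s ≠ 0) (hΩ : ∀ ξ ∈ Ω, s • ξ ∈ Ω') :
    MemBernstein Ω' (fun x => f (s • x)) := by
  obtain ⟨h1, ⟨C, hC⟩, h3⟩ := h
  refine ⟨by fun_prop, ⟨C, fun x => hC _⟩, fun ψ p q r => ?_⟩
  have h4 := h3 (fun v => ψ (s • v)) (by fun_prop)
    (q.comp_homeomorph (Homeomorph.smulOfNeZero s hs)) ?_
  · have h5 := Measure.integral_comp_smul volume (fun x => f x * 𝓕 ψ (s⁻¹ • x)) s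
    simp only [smul_smul, inv_mul_cancel₀ hs, one_smul] at h5
    rw [h5]
    simp_rw [fourier_comp_smul' ψ hs, Complex.real_smul] at h4
    have h6 : ∫ x, f x * ((|(s ^ Module.finrank ℝ V)⁻¹| : ℝ) * 𝓕 ψ (s⁻¹ • x)) =
      (|(s ^ Module.finrank ℝ V)⁻¹| : ℝ) * ∫ x, f x * 𝓕 ψ (s⁻¹ • x) := by
      rw [← integral_const_mul]; congr 1 with x; ring
    rw [h6] at h4
    rw [Complex.real_smul, h4]
  · rw [Set.eq_empty_iff_forall_notMem] at r ⊢
    rintro x ⟨hx, hx'⟩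
    exact r (s • x) ⟨tsupport_comp_subset_preimage ψ (by fun_prop : Continuous fun v : V => s • v)
      hx, hΩ x hx'⟩

lemma mul_fourier (h : MemBernstein Ω f) {η : V → ℂ} (hη : Integrable η)
    (hΩ : ∀ ω ∈ Ω, ∀ ξ, η ξ ≠ 0 → ω - ξ ∈ Ω') :
    MemBernstein Ω' (fun x => f x * 𝓕 η x) := by
  have hc := continuous_fourier_of_integrable hη
  obtain ⟨C, hC⟩ := h.2.1
  refine ⟨h.1.mul hc, ⟨C * ∫ v, ‖η v‖, fun x => ?_⟩, fun ψ p q r => ?_⟩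
  · rw [norm_mul]
    have := norm_fourier_le_integral_norm η x
    have h0 := (norm_nonneg _).trans (hC x)
    gcongr
    exact hC x
  have hi := integrable_fourier_of_hasCompactSupport p q
  have hF : Integrable (fun z : V × V => (Real.fourierChar (-⟪z.2, z.1⟫) : ℂ) *
      ((f z.1 * 𝓕 ψ z.1) * η z.2)) (volume.prod volume) := by
    refine ((h.integrable_mul hi).mul_prod hη).bdd_mul (c := 1) ?_ (Eventually.of_forall ?_)
    · refine Continuous.aestronglyMeasurable ?_
      have : Continuous (fun z : V × V => Real.fourierChar (-⟪z.2, z.1⟫)) :=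
        Real.continuous_fourierChar.comp (by fun_prop)
      fun_prop
    · exact fun z => (Circle.norm_coe _).le
  have key : ∀ ξ : V, ∫ x, (Real.fourierChar (-⟪ξ, x⟫) : ℂ) * ((f x * 𝓕 ψ x) * η ξ) = 0 := by
    intro ξ
    by_cases hξ : η ξ = 0
    · simp [hξ]
    · have := (h.fourierChar_mul (-ξ) (Ω' := Ω') fun ω hω => by
        simpa [sub_eq_add_neg] using hΩ ω hω ξ hξ).2.2 ψ p q r
      calc _ = ∫ x, η ξ * ((Real.fourierChar ⟪-ξ, x⟫ : ℂ) * f x * 𝓕 ψ x) := by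
            congr 1 with x; rw [inner_neg_left]; ring
        _ = 0 := by rw [integral_const_mul, this, mul_zero]
  calc ∫ x, f x * 𝓕 η x * 𝓕 ψ x
      = ∫ x, ∫ ξ, (Real.fourierChar (-⟪ξ, x⟫) : ℂ) * ((f x * 𝓕 ψ x) * η ξ) := by
        congr 1 with x
        rw [Real.fourier_eq η x]
        rw [show f x * (∫ v, Real.fourierChar (-⟪v, x⟫) • η v) * 𝓕 ψ x =
          (f x * 𝓕 ψ x) * ∫ v, Real.fourierChar (-⟪v, x⟫) • η v by ring, ← integral_const_mul]
        congr 1 with v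
        rw [Circle.smul_def, smul_eq_mul]; ring
    _ = ∫ ξ, ∫ x, (Real.fourierChar (-⟪ξ, x⟫) : ℂ) * ((f x * 𝓕 ψ x) * η ξ) :=
        integral_integral_swap hF
    _ = 0 := by simp [key]

end MemBernstein

lemma integral_fourier_eq_apply_zero {ψ : V → ℂ} (hψ : ContDiff ℝ (⊤ : ℕ∞) ψ)
    (hc : HasCompactSupport ψ) : ∫ x, 𝓕 ψ x = ψ 0 := by
  have hψi : Integrable ψ := hψ.continuous.integrable_of_hasCompactSupport hc
  have h := hψi.fourierInv_fourier_eq (integrable_fourier_of_hasCompactSupport hψ hc)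
    (v := 0) hψ.continuous.continuousAt
  rw [← h, Real.fourierInv_eq]
  simp

/-- A smooth cutoff: equal to one near `Ω` and supported close to `Ω`. -/
lemma exists_smooth_cutoff {Ω : Set V} (hΩ : IsCompact Ω) {θ : ℝ} (hθ : 0 < θ) :
    ∃ χ : V → ℂ, ContDiff ℝ (⊤ : ℕ∞) χ ∧ HasCompactSupport χ ∧
      tsupport χ ⊆ cthickening θ Ω ∧ ∀ ξ ∈ thickening (θ / 2) Ω, χ ξ = 1 := by
  obtain ⟨f, hf, -, hs, h1⟩ := exists_contMDiff_support_eq_eq_one_iff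
    (modelWithCornersSelf ℝ V) (n := ⊤) (s := thickening θ Ω) (t := cthickening (θ / 2) Ω)
    isOpen_thickening isClosed_cthickening (cthickening_subset_thickening' hθ (by linarith) Ω)
  have hts : tsupport (fun x => (f x : ℂ)) ⊆ cthickening θ Ω := by
    refine (closure_mono ?_).trans (closure_thickening_subset_cthickening θ Ω)
    rw [← hs]
    intro x hx
    simpa using hx
  refine ⟨fun x => (f x : ℂ), Complex.ofRealCLM.contDiff.comp (contMDiff_iff_contDiff.1 hf), ?_,
    hts, fun ξ hξ => ?_⟩
  · exact hΩ.cthickening.of_isClosed_subset (isClosed_tsupport _) hts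
  · have := (h1 ξ).1 (thickening_subset_cthickening _ _ hξ)
    simp [this]

/-- Reproducing property at the origin. -/
lemma MemBernstein.integral_mul_fourier_eq {Ω : Set V} {f : V → ℂ} (h : MemBernstein Ω f)
    (hΩ : IsCompact Ω) {χ : V → ℂ} (hχ : ContDiff ℝ (⊤ : ℕ∞) χ) (hc : HasCompactSupport χ)
    {U : Set V} (hU : IsOpen U) (hΩU : Ω ⊆ U) (h1 : ∀ ξ ∈ U, χ ξ = 1) :
    ∫ t, f t * 𝓕 χ t = f 0 := by
  obtain ⟨ρ, hρ, hρc, -, hρ1⟩ := exists_smooth_cutoff (isCompact_singleton (x := (0 : V)))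
    (θ := 2) (by norm_num)
  obtain ⟨C, hC⟩ := h.2.1
  have hρi := integrable_fourier_of_hasCompactSupport hρ hρc
  obtain ⟨R, hR⟩ := hΩ.isBounded.subset_ball 0
  have h0 : ρ 0 = 1 := hρ1 0 (self_subset_thickening (by norm_num) _ rfl)
  have hlim : Tendsto (fun k : ℕ => ∫ t, f (((k : ℝ) + 1)⁻¹ • t) * 𝓕 ρ t) atTop
      (nhds (∫ t, f 0 * 𝓕 ρ t)) := by
    refine tendsto_integral_of_dominated_convergence (fun t => C * ‖𝓕 ρ t‖) (fun k => ?_)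
      (hρi.norm.const_mul C) (fun k => Eventually.of_forall fun t => ?_)
      (Eventually.of_forall fun t => ?_)
    · have := h.1
      exact ((by fun_prop : Continuous fun t : V => f (((k : ℝ) + 1)⁻¹ • t)).mul
        (continuous_fourier_of_integrable
        (hρ.continuous.integrable_of_hasCompactSupport hρc))).aestronglyMeasurable
    · rw [norm_mul]
      gcongr
      exact hC _
    · refine Tendsto.mul_const _ ?_
      have h2 : Tendsto (fun k : ℕ => ((k : ℝ) + 1)⁻¹ • t) atTop (nhds ((0 : ℝ) • t)) := by
        refine Tendsto.smul_const ?_ t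
        simpa using tendsto_one_div_add_atTop_nhds_zero_nat (𝕜 := ℝ)
      rw [zero_smul] at h2
      exact (h.1.tendsto 0).comp h2
  rw [integral_const_mul, integral_fourier_eq_apply_zero hρ hρc, h0, mul_one] at hlim
  refine tendsto_nhds_unique (Tendsto.congr' ?_ tendsto_const_nhds) hlim
  obtain ⟨k0, hk0⟩ := exists_nat_gt R
  filter_upwards [eventually_ge_atTop k0] with k hk
  have hkpos : (0 : ℝ) < (k : ℝ) + 1 := by positivity
  have hs : ((k : ℝ) + 1)⁻¹ ≠ 0 := by positivity
  set s := ((k : ℝ) + 1)⁻¹ with hsdef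
  have hρs : ContDiff ℝ (⊤ : ℕ∞) fun v : V => ρ (s • v) := by fun_prop
  have hρsc : HasCompactSupport fun v : V => ρ (s • v) :=
    hρc.comp_homeomorph (Homeomorph.smulOfNeZero s hs)
  have hi1 := integrable_fourier_of_hasCompactSupport hρs hρsc
  have hi2 := integrable_fourier_of_hasCompactSupport hχ hc
  have hsub : HasCompactSupport fun v : V => ρ (s • v) - χ v := by
    have := hρsc.add hc.neg
    rwa [← sub_eq_add_neg] at this
  have h3 := h.2.2 (fun v => ρ (s • v) - χ v) (hρs.sub hχ) hsub ?_
  · have h4 : 𝓕 (fun v => ρ (s • v) - χ v) = fun x => 𝓕 (fun v => ρ (s • v)) x - 𝓕 χ x := by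
      ext x
      have a1 : Integrable fun v => Real.fourierChar (-⟪v, x⟫) • ρ (s • v) :=
        (Real.fourierIntegral_convergent_iff x).2
          (hρs.continuous.integrable_of_hasCompactSupport hρsc)
      have a2 : Integrable fun v => Real.fourierChar (-⟪v, x⟫) • χ v :=
        (Real.fourierIntegral_convergent_iff x).2
          (hχ.continuous.integrable_of_hasCompactSupport hc)
      rw [Real.fourier_eq, Real.fourier_eq, Real.fourier_eq, ← integral_sub a1 a2]
      simp only [smul_sub]
    rw [h4] at h3
    simp_rw [mul_sub] at h3
    rw [integral_sub (h.integrable_mul hi1) (h.integrable_mul hi2), sub_eq_zero] at h3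
    rw [← h3]
    simp_rw [fourier_comp_smul' ρ hs]
    have h5 := Measure.integral_comp_smul volume (fun x => f (s • x) * 𝓕 ρ x) s⁻¹
    simp only [smul_smul, mul_inv_cancel₀ hs, one_smul, inv_pow, inv_inv] at h5
    have h6 : ∀ x, f x * |(s ^ Module.finrank ℝ V)⁻¹| • 𝓕 ρ (s⁻¹ • x) =
        |(s ^ Module.finrank ℝ V)⁻¹| • (f x * 𝓕 ρ (s⁻¹ • x)) := fun x => by
      simp only [Complex.real_smul]; ring
    simp_rw [h6]
    rw [integral_smul, h5, smul_smul, ← abs_mul, inv_mul_cancel₀ (pow_ne_zero _ hs)]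
    simp
  · rw [Set.eq_empty_iff_forall_notMem]
    rintro x ⟨hx, hxΩ⟩
    refine (notMem_tsupport_iff_eventuallyEq.2 ?_) hx
    have hxR : ‖x‖ < R := by simpa using hR hxΩ
    filter_upwards [hU.mem_nhds (hΩU hxΩ),
      (isOpen_lt continuous_norm continuous_const).mem_nhds (show x ∈ {y : V | ‖y‖ < R} from hxR)]
      with y hy hyR
    have : ρ (s • y) = 1 := by
      refine hρ1 _ ?_
      rw [thickening_singleton, mem_ball_zero_iff, norm_smul, hsdef, Real.norm_eq_abs, abs_inv,
        abs_of_pos hkpos, inv_mul_lt_iff₀ hkpos]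
      have : (k0 : ℝ) ≤ k := by exact_mod_cast hk
      have hyR' : ‖y‖ < R := hyR
      linarith
    simp [this, h1 y hy]

/-- The exponential `ξ ↦ exp (2πi z ⟪u, ξ⟫)` with complex parameter `z`. -/
def complexChar (u : V) (z : ℂ) (ξ : V) : ℂ :=
  Complex.exp (2 * Real.pi * Complex.I * z * (⟪u, ξ⟫ : ℝ))

lemma complexChar_ofReal (u : V) (t : ℝ) (ξ : V) :
    complexChar u t ξ = (Real.fourierChar ⟪t • u, ξ⟫ : ℂ) := by
  rw [complexChar, Real.fourierChar_apply, real_inner_smul_left]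
  congr 1
  push_cast
  ring

lemma norm_complexChar (u : V) (z : ℂ) (ξ : V) :
    ‖complexChar u z ξ‖ = Real.exp (2 * Real.pi * (-z.im * ⟪u, ξ⟫)) := by
  rw [complexChar, Complex.norm_exp]
  congr 1
  simp
  ring

lemma contDiff_complexChar (u : V) (z : ℂ) : ContDiff ℝ (⊤ : ℕ∞) (complexChar u z) :=
  Complex.contDiff_exp.comp (contDiff_const.mul
    (Complex.ofRealCLM.contDiff.comp (contDiff_const.inner ℝ contDiff_id)))

lemma iteratedDeriv_cexp_const_mul_ofReal (n : ℕ) (c : ℂ) :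
    iteratedDeriv n (fun r : ℝ => Complex.exp (c * r)) =
      fun r : ℝ => c ^ n * Complex.exp (c * r) := by
  induction n with
  | zero => simp
  | succ n ih =>
    rw [iteratedDeriv_succ, ih]
    ext r
    have h1 : HasDerivAt (fun r : ℝ => c * (r : ℂ)) c r := by
      simpa using (Complex.ofRealCLM.hasDerivAt (x := r)).const_mul c
    rw [(h1.cexp.const_mul (c ^ n)).deriv]
    ring

lemma norm_iteratedFDeriv_complexChar_le {u : V} (hu : ‖u‖ ≤ 1) (z : ℂ) (n : ℕ) (ξ : V) :
    ‖iteratedFDeriv ℝ n (complexChar u z) ξ‖ ≤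
      (2 * Real.pi * ‖z‖) ^ n * Real.exp (2 * Real.pi * (-z.im * ⟪u, ξ⟫)) := by
  have h : complexChar u z = (fun r : ℝ => Complex.exp (2 * Real.pi * Complex.I * z * r)) ∘
      (innerSL ℝ u) := by
    ext ξ; simp [complexChar]
  have hg : ContDiff ℝ (⊤ : ℕ∞) (fun r : ℝ => Complex.exp (2 * Real.pi * Complex.I * z * r)) :=
    Complex.contDiff_exp.comp (contDiff_const.mul Complex.ofRealCLM.contDiff)
  rw [← norm_complexChar, h, ContinuousLinearMap.iteratedFDeriv_comp_right _ hg ξ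
    (by exact_mod_cast le_top)]
  refine (ContinuousMultilinearMap.norm_compContinuousLinearMap_le _ _).trans ?_
  rw [norm_iteratedFDeriv_eq_norm_iteratedDeriv, iteratedDeriv_cexp_const_mul_ofReal,
    Finset.prod_const, Finset.card_univ, Fintype.card_fin, innerSL_apply_norm, norm_mul, norm_pow]
  have e : ‖2 * (Real.pi : ℂ) * Complex.I * z‖ = 2 * Real.pi * ‖z‖ := by
    simp [abs_of_pos Real.pi_pos]
  rw [e]
  simp only [Function.comp]
  calc _ ≤ _ * (1 : ℝ) ^ n := by gcongr
    _ = _ := by simp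

/-- Decay of the Fourier transform of a test function times a complex exponential. -/
lemma exists_norm_fourier_complexChar_le {χ : V → ℂ} (hχ : ContDiff ℝ (⊤ : ℕ∞) χ)
    (hc : HasCompactSupport χ) (n : ℕ) :
    ∃ A ≥ 0, ∀ u : V, ‖u‖ ≤ 1 → ∀ (z : ℂ) (s : ℝ), (∀ ξ ∈ tsupport χ, -z.im * ⟪u, ξ⟫ ≤ s) →
      ∀ t, ‖𝓕 (fun ξ => χ ξ * complexChar u z ξ) t‖ ≤
        A * (1 + ‖z‖) ^ n * Real.exp (2 * Real.pi * s) * (1 + ‖t‖) ^ (-(n : ℝ)) := by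
  set G : V → ℝ := fun ξ => ∑ j ∈ Finset.range (n + 1), ∑ i ∈ Finset.range (j + 1),
    (j.choose i : ℝ) * ‖iteratedFDeriv ℝ i χ ξ‖ with hG
  have hint : ∀ {g : V → ℂ}, ContDiff ℝ (⊤ : ℕ∞) g → HasCompactSupport g → ∀ i : ℕ,
      Integrable fun ξ => ‖iteratedFDeriv ℝ i g ξ‖ := fun hg hgc i =>
    ((hg.continuous_iteratedFDeriv (by exact_mod_cast le_top)).integrable_of_hasCompactSupport
      (hgc.iteratedFDeriv i)).norm
  have hGi : Integrable G := integrable_finsetSum _ fun j _ =>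
    integrable_finsetSum _ fun i _ => (hint hχ hc i).const_mul _
  have hG0 : 0 ≤ ∫ ξ, G ξ := integral_nonneg fun ξ => by positivity
  refine ⟨2 ^ n * (2 * (2 ^ n * ((n + 1) * ((2 * Real.pi) ^ n * ∫ ξ, G ξ)))), by positivity,
    fun u hu z s hs t => ?_⟩
  set g : V → ℂ := fun ξ => χ ξ * complexChar u z ξ with hg
  have hgs : ContDiff ℝ (⊤ : ℕ∞) g := hχ.mul (contDiff_complexChar u z)
  have hgc : HasCompactSupport g := hc.mul_right
  set W := (2 * Real.pi) ^ n * (1 + ‖z‖) ^ n * Real.exp (2 * Real.pi * s) with hW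
  have hpi : 1 ≤ 2 * Real.pi := by linarith [Real.pi_gt_three]
  have hpt : ∀ j ≤ n, ∀ ξ, ‖iteratedFDeriv ℝ j g ξ‖ ≤ W * G ξ := by
    intro j hj ξ
    have h1 := norm_iteratedFDeriv_mul_le hχ (contDiff_complexChar u z) ξ (n := j)
      (by exact_mod_cast le_top)
    refine h1.trans ?_
    rw [hG, Finset.mul_sum]
    refine le_trans ?_ (Finset.single_le_sum (f := fun j => W * ∑ i ∈ Finset.range (j + 1),
      (j.choose i : ℝ) * ‖iteratedFDeriv ℝ i χ ξ‖) (fun j _ => by positivity)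
      (Finset.mem_range.2 (Nat.lt_succ_of_le hj)))
    rw [Finset.mul_sum]
    refine Finset.sum_le_sum fun i hi => ?_
    by_cases hξ : ξ ∈ tsupport χ
    · have h2 := norm_iteratedFDeriv_complexChar_le hu z (j - i) ξ
      have h3 : Real.exp (2 * Real.pi * (-z.im * ⟪u, ξ⟫)) ≤ Real.exp (2 * Real.pi * s) := by
        gcongr; exact hs ξ hξ
      have h4 : (2 * Real.pi * ‖z‖) ^ (j - i) ≤ (2 * Real.pi) ^ n * (1 + ‖z‖) ^ n := by
        rw [← mul_pow]
        have h5 : 1 ≤ 2 * Real.pi * (1 + ‖z‖) := by nlinarith [norm_nonneg z]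
        calc (2 * Real.pi * ‖z‖) ^ (j - i) ≤ (2 * Real.pi * (1 + ‖z‖)) ^ (j - i) := by
              gcongr; linarith
          _ ≤ _ := pow_le_pow_right₀ h5 (by omega)
      calc _ ≤ (j.choose i : ℝ) * ‖iteratedFDeriv ℝ i χ ξ‖ * W := by
            gcongr
            refine h2.trans ?_
            rw [hW]; gcongr
        _ = _ := by ring
    · have h0 : iteratedFDeriv ℝ i χ ξ = 0 := by
        by_contra hne
        exact hξ (support_iteratedFDeriv_subset i hne)
      simp [h0]
  have hsum : ∑ j ∈ Finset.range (n + 1), ∫ ξ, ‖iteratedFDeriv ℝ j g ξ‖ ≤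
      (n + 1) * (W * ∫ ξ, G ξ) := by
    have : ∀ j ∈ Finset.range (n + 1), ∫ ξ, ‖iteratedFDeriv ℝ j g ξ‖ ≤ W * ∫ ξ, G ξ := by
      intro j hj
      rw [← integral_const_mul]
      exact integral_mono (hint hgs hgc j) (hGi.const_mul _)
        (hpt j (Nat.lt_succ_iff.1 (Finset.mem_range.1 hj)))
    simpa using Finset.sum_le_card_nsmul _ _ _ this
  have hm : ∀ m ≤ n, ‖t‖ ^ m * ‖𝓕 g t‖ ≤ 2 ^ n * ((n + 1) * (W * ∫ ξ, G ξ)) := by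
    intro m hmn
    have h1 := Real.pow_mul_norm_iteratedFDeriv_fourier_le (K := 0) (N := ⊤) (f := g)
      (by exact_mod_cast hgs) (fun k m hk _ => by
        have : k = 0 := by simpa using hk
        subst this
        simpa using hint hgs hgc m) (k := 0) (n := m) (by simp) (by simp) t
    rw [norm_iteratedFDeriv_zero] at h1
    refine h1.trans ?_
    simp only [Finset.sum_product, zero_add, Finset.sum_range_one, pow_zero, one_mul,
      Nat.cast_zero, mul_zero]
    gcongr
    · exact Finset.sum_nonneg fun i _ => integral_nonneg fun _ => norm_nonneg _
    · norm_num
    · refine le_trans ?_ hsum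
      exact Finset.sum_le_sum_of_subset_of_nonneg (Finset.range_mono (by omega))
        fun i _ _ => integral_nonneg fun _ => norm_nonneg _
  rw [Real.rpow_neg (by positivity), Real.rpow_natCast, ← div_eq_mul_inv,
    le_div_iff₀ (by positivity)]
  have h2 : (1 + ‖t‖) ^ n ≤ 2 ^ n * (1 + ‖t‖ ^ n) := by
    have := add_pow_le zero_le_one (norm_nonneg t) n
    rw [one_pow] at this
    refine this.trans ?_
    gcongr
    · norm_num
    · omega
  have h3 := hm 0 (Nat.zero_le _)
  have h4 := hm n le_rfl
  rw [pow_zero, one_mul] at h3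
  calc ‖𝓕 g t‖ * (1 + ‖t‖) ^ n ≤ ‖𝓕 g t‖ * (2 ^ n * (1 + ‖t‖ ^ n)) := by gcongr
    _ = 2 ^ n * (‖𝓕 g t‖ + ‖t‖ ^ n * ‖𝓕 g t‖) := by ring
    _ ≤ 2 ^ n * (2 ^ n * ((n + 1) * (W * ∫ ξ, G ξ)) + 2 ^ n * ((n + 1) * (W * ∫ ξ, G ξ))) := by
        gcongr
    _ = _ := by rw [hW]; ring

lemma rpow_one_add_norm_integrable (n : ℕ) (hn : Module.finrank ℝ V < n) :
    Integrable fun t : V => (1 + ‖t‖) ^ (-(n : ℝ)) :=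
  integrable_one_add_norm (by exact_mod_cast hn)

lemma hasDerivAt_complexChar (u ξ : V) (z : ℂ) :
    HasDerivAt (fun z => complexChar u z ξ)
      (2 * Real.pi * Complex.I * (⟪u, ξ⟫ : ℝ) * complexChar u z ξ) z := by
  have h1 : HasDerivAt (fun z : ℂ => 2 * Real.pi * Complex.I * z * (⟪u, ξ⟫ : ℝ))
      (2 * Real.pi * Complex.I * (⟪u, ξ⟫ : ℝ)) z := by
    simpa using ((hasDerivAt_id z).const_mul (2 * Real.pi * Complex.I : ℂ)).mul_const
      ((⟪u, ξ⟫ : ℝ) : ℂ)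
  exact h1.cexp.congr_deriv (by rw [complexChar]; ring)

lemma contDiff_inner_mul {χ : V → ℂ} (hχ : ContDiff ℝ (⊤ : ℕ∞) χ) (u : V) :
    ContDiff ℝ (⊤ : ℕ∞) fun ξ => 2 * Real.pi * Complex.I * (⟪u, ξ⟫ : ℝ) * χ ξ :=
  (contDiff_const.mul (Complex.ofRealCLM.contDiff.comp (contDiff_const.inner ℝ contDiff_id))).mul hχ

lemma hasDerivAt_fourier_complexChar {χ : V → ℂ} (hχ : ContDiff ℝ (⊤ : ℕ∞) χ)
    (hc : HasCompactSupport χ) (u t : V) (z : ℂ) :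
    HasDerivAt (fun z => 𝓕 (fun ξ => χ ξ * complexChar u z ξ) t)
      (𝓕 (fun ξ => (2 * Real.pi * Complex.I * (⟪u, ξ⟫ : ℝ) * χ ξ) * complexChar u z ξ) t) z := by
  simp only [Real.fourier_eq]
  have hχ' := contDiff_inner_mul hχ u
  have hcc : ∀ z, Continuous (complexChar u z) := fun z => (contDiff_complexChar u z).continuous
  have he : Continuous fun v : V => Real.fourierChar (-⟪v, t⟫) :=
    Real.continuous_fourierChar.comp (by fun_prop)
  have hb : Continuous fun ξ : V => Real.exp (2 * Real.pi * ((‖z‖ + 1) * (‖u‖ * ‖ξ‖))) *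
      ‖2 * Real.pi * Complex.I * (⟪u, ξ⟫ : ℝ) * χ ξ‖ := by
    have := hχ'.continuous
    fun_prop
  refine (hasDerivAt_integral_of_dominated_loc_of_deriv_le (ball_mem_nhds z one_pos)
    (F' := fun z v => Real.fourierChar (-⟪v, t⟫) •
      (2 * Real.pi * Complex.I * (⟪u, v⟫ : ℝ) * χ v * complexChar u z v))
    (bound := fun ξ : V => Real.exp (2 * Real.pi * ((‖z‖ + 1) * (‖u‖ * ‖ξ‖))) *
      ‖2 * Real.pi * Complex.I * (⟪u, ξ⟫ : ℝ) * χ ξ‖) ?_ ?_ ?_ ?_ ?_ ?_).2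
  · refine Eventually.of_forall fun w => Continuous.aestronglyMeasurable ?_
    exact he.smul (hχ.continuous.mul (hcc w))
  · refine Continuous.integrable_of_hasCompactSupport (he.smul (hχ.continuous.mul (hcc z))) ?_
    exact HasCompactSupport.smul_left hc.mul_right
  · exact (he.smul (hχ'.continuous.mul (hcc z))).aestronglyMeasurable
  · refine Eventually.of_forall fun ξ w hw => ?_
    rw [Circle.norm_smul, norm_mul, mul_comm, norm_complexChar]
    refine mul_le_mul_of_nonneg_right (Real.exp_le_exp.2 (mul_le_mul_of_nonneg_left ?_
      (by positivity))) (norm_nonneg _)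
    calc -w.im * ⟪u, ξ⟫ ≤ |w.im| * |⟪u, ξ⟫| := by
          rw [← abs_mul]; exact (le_abs_self _).trans_eq (by rw [abs_mul, abs_mul, abs_neg])
      _ ≤ (‖z‖ + 1) * (‖u‖ * ‖ξ‖) := by
          have h1 := Complex.abs_im_le_norm w
          have h2 : ‖w - z‖ < 1 := by simpa [dist_eq_norm] using hw
          have h3 := norm_le_norm_add_norm_sub' w z
          have h4 := abs_real_inner_le_norm u ξ
          gcongr
          linarith
  · refine hb.integrable_of_hasCompactSupport ?_
    exact HasCompactSupport.mul_left (HasCompactSupport.norm (HasCompactSupport.mul_left hc))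
  · refine Eventually.of_forall fun ξ w _ => ?_
    have := ((hasDerivAt_complexChar u ξ w).const_mul (χ ξ)).const_mul
      (Real.fourierChar (-⟪ξ, t⟫) : ℂ)
    simp only [Circle.smul_def, smul_eq_mul]
    refine this.congr_deriv ?_
    ring

lemma im_mul_inner_le_of_tsupport {χ : V → ℂ} (hc : HasCompactSupport χ) :
    ∃ B, ∀ u : V, ‖u‖ ≤ 1 → ∀ z : ℂ, ∀ ξ ∈ tsupport χ, -z.im * ⟪u, ξ⟫ ≤ B * ‖z‖ := by
  obtain ⟨B, hB⟩ := hc.isBounded.exists_norm_le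
  refine ⟨B, fun u hu z ξ hξ => ?_⟩
  calc -z.im * ⟪u, ξ⟫ ≤ |z.im| * |⟪u, ξ⟫| := by
        rw [← abs_mul]; exact (le_abs_self _).trans_eq (by rw [abs_mul, abs_mul, abs_neg])
    _ ≤ ‖z‖ * (1 * B) := by
        have h4 := abs_real_inner_le_norm u ξ
        have h5 := hB ξ hξ
        have h1 := Complex.abs_im_le_norm z
        gcongr
        exact h4.trans (by gcongr)
    _ = _ := by ring

lemma continuous_mul_complexChar {χ : V → ℂ} (hχ : ContDiff ℝ (⊤ : ℕ∞) χ)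
    (hc : HasCompactSupport χ) (u : V) (z : ℂ) :
    Continuous (𝓕 fun ξ => χ ξ * complexChar u z ξ) :=
  continuous_fourier_of_integrable ((hχ.continuous.mul
    (contDiff_complexChar u z).continuous).integrable_of_hasCompactSupport hc.mul_right)

lemma differentiable_integral_fourier_complexChar {χ : V → ℂ} (hχ : ContDiff ℝ (⊤ : ℕ∞) χ)
    (hc : HasCompactSupport χ) {u : V} (hu : ‖u‖ ≤ 1) {f : V → ℂ} (hf : Continuous f) {C : ℝ}
    (hC : ∀ x, ‖f x‖ ≤ C) :
    Differentiable ℂ fun z : ℂ => ∫ t, f t * 𝓕 (fun ξ => χ ξ * complexChar u z ξ) t := by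
  intro z
  have hC0 : 0 ≤ C := (norm_nonneg _).trans (hC 0)
  have hχ' := contDiff_inner_mul hχ u
  have hc' : HasCompactSupport fun ξ => 2 * Real.pi * Complex.I * (⟪u, ξ⟫ : ℝ) * χ ξ := hc.mul_left
  set n := Module.finrank ℝ V + 1
  obtain ⟨A, hA0, hA⟩ := exists_norm_fourier_complexChar_le hχ hc n
  obtain ⟨A', hA0', hA'⟩ := exists_norm_fourier_complexChar_le hχ' hc' n
  obtain ⟨B, hB⟩ := im_mul_inner_le_of_tsupport hc
  obtain ⟨B', hB'⟩ := im_mul_inner_le_of_tsupport hc'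
  have hi := rpow_one_add_norm_integrable (V := V) n (Nat.lt_succ_self _)
  refine (hasDerivAt_integral_of_dominated_loc_of_deriv_le (ball_mem_nhds z one_pos)
    (F' := fun z t => f t * 𝓕 (fun ξ => (2 * Real.pi * Complex.I * (⟪u, ξ⟫ : ℝ) * χ ξ) *
      complexChar u z ξ) t)
    (bound := fun t : V => C * (A' * (1 + (‖z‖ + 1)) ^ n *
      Real.exp (2 * Real.pi * (|B'| * (‖z‖ + 1))) *
      (1 + ‖t‖) ^ (-(n : ℝ)))) ?_ ?_ ?_ ?_ ?_ ?_).2.differentiableAt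
  · exact Eventually.of_forall fun w =>
      (hf.mul (continuous_mul_complexChar hχ hc u w)).aestronglyMeasurable
  · refine Integrable.mono' ((hi.const_mul (A * (1 + ‖z‖) ^ n *
      Real.exp (2 * Real.pi * (B * ‖z‖)))).const_mul C)
      (hf.mul (continuous_mul_complexChar hχ hc u z)).aestronglyMeasurable
      (Eventually.of_forall fun t => ?_)
    rw [norm_mul]
    exact mul_le_mul (hC t) (hA u hu z _ (hB u hu z) t) (norm_nonneg _) hC0
  · exact (hf.mul (continuous_mul_complexChar hχ' hc' u z)).aestronglyMeasurable
  · refine Eventually.of_forall fun t w hw => ?_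
    have h2 : ‖w - z‖ < 1 := by simpa [dist_eq_norm] using hw
    have h3 := norm_le_norm_add_norm_sub' w z
    have h4 : ‖w‖ ≤ ‖z‖ + 1 := by linarith
    rw [norm_mul]
    refine mul_le_mul (hC t) ((hA' u hu w _ (hB' u hu w) t).trans ?_) (norm_nonneg _) hC0
    gcongr
    exact le_abs_self _
  · exact (hi.const_mul _).const_mul _
  · exact Eventually.of_forall fun t w _ =>
      (hasDerivAt_fourier_complexChar hχ hc u t w).const_mul (f t)

/-- Entire extension of a Bernstein function along lines, with uniform growth bounds. -/
lemma MemBernstein.exists_entire {Ω : Set V} (hΩ : IsCompact Ω) {θ : ℝ} (hθ : 0 < θ) :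
    ∃ A ≥ 0, ∃ n : ℕ, ∀ f : V → ℂ, MemBernstein Ω f → ∀ M : ℝ, (∀ x, ‖f x‖ ≤ M) →
      ∀ u : V, ‖u‖ ≤ 1 → ∀ x : V, ∃ F : ℂ → ℂ, Differentiable ℂ F ∧
        (∀ t : ℝ, F t = f (x + t • u)) ∧
        ∀ (z : ℂ) (s : ℝ), (∀ ξ ∈ Ω, -z.im * ⟪u, ξ⟫ ≤ s) →
          ‖F z‖ ≤ A * M * (1 + ‖z‖) ^ n * Real.exp (2 * Real.pi * (s + θ * |z.im|)) := by
  obtain ⟨χ, hχ, hc, hts, h1⟩ := exists_smooth_cutoff hΩ hθ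
  set n := Module.finrank ℝ V + 1
  obtain ⟨A, hA0, hA⟩ := exists_norm_fourier_complexChar_le hχ hc n
  have hi := rpow_one_add_norm_integrable (V := V) n (Nat.lt_succ_self _)
  refine ⟨A * ∫ t : V, (1 + ‖t‖) ^ (-(n : ℝ)), by positivity, n, fun f hf M hM u hu x => ?_⟩
  have hM0 : 0 ≤ M := (norm_nonneg _).trans (hM 0)
  refine ⟨fun z => ∫ t, f (t + x) * 𝓕 (fun ξ => χ ξ * complexChar u z ξ) t,
    differentiable_integral_fourier_complexChar hχ hc hu (hf.comp_add_right x).1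
      (fun t => hM _), fun t => ?_, fun z s hs => ?_⟩
  · have h2 := (hf.comp_add_right (x + t • u)).integral_mul_fourier_eq hΩ hχ hc
      isOpen_thickening (self_subset_thickening (half_pos hθ) Ω) h1
    simp only [zero_add] at h2
    beta_reduce
    rw [← h2, ← integral_add_right_eq_self (fun t' => f (t' + x) * _) (t • u)]
    congr 1 with y
    simp_rw [complexChar_ofReal, mul_comm (χ _)]
    rw [fourier_fourierChar_mul, add_sub_cancel_right, add_assoc, add_comm x]
  · have hs' : ∀ ξ ∈ tsupport χ, -z.im * ⟪u, ξ⟫ ≤ s + θ * |z.im| := by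
      intro ξ hξ
      have h3 := hts hξ
      rw [hΩ.cthickening_eq_biUnion_closedBall hθ.le] at h3
      simp only [Set.mem_iUnion, mem_closedBall, dist_eq_norm] at h3
      obtain ⟨ω, hω, h4⟩ := h3
      have h5 : |⟪u, ξ - ω⟫| ≤ θ := (abs_real_inner_le_norm u _).trans
        (by nlinarith [norm_nonneg (ξ - ω), norm_nonneg u])
      have h6 : -z.im * ⟪u, ξ - ω⟫ ≤ |z.im| * θ := by
        refine (le_abs_self _).trans ?_
        rw [abs_mul, abs_neg]
        gcongr
      rw [inner_sub_right] at h6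
      linarith [hs ω hω]
    have hb := hA u hu z _ hs'
    refine (norm_integral_le_of_norm_le (((hi.const_mul (A * (1 + ‖z‖) ^ n *
      Real.exp (2 * Real.pi * (s + θ * |z.im|)))).const_mul M))
      (Eventually.of_forall fun t => ?_)).trans_eq ?_
    · rw [norm_mul]
      exact mul_le_mul (hM _) (hb t) (norm_nonneg _) hM0
    · rw [integral_const_mul, integral_const_mul]; ring

lemma MemBernstein.exists_lipschitz {Ω : Set V} (hΩ : IsCompact Ω) :
    ∃ K ≥ 0, ∀ f : V → ℂ, MemBernstein Ω f → ∀ M : ℝ, (∀ x, ‖f x‖ ≤ M) →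
      ∀ x y, ‖f x - f y‖ ≤ K * M * ‖x - y‖ := by
  obtain ⟨A, hA0, n, hA⟩ := MemBernstein.exists_entire hΩ one_pos
  obtain ⟨R, hR⟩ := hΩ.isBounded.exists_norm_le
  set B := A * 3 ^ n * Real.exp (2 * Real.pi * (2 * |R| + 1 * 2)) with hB
  have hB0 : 0 ≤ B := by positivity
  refine ⟨B + 2, by positivity, fun f hf M hM x y => ?_⟩
  have hM0 : 0 ≤ M := (norm_nonneg _).trans (hM 0)
  rcases eq_or_ne x y with rfl | hxy
  · simp
  have hd : 0 < ‖x - y‖ := norm_pos_iff.2 (sub_ne_zero.2 hxy)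
  rcases le_or_gt ‖x - y‖ 1 with h1 | h1
  · set u := ‖x - y‖⁻¹ • (x - y) with hu
    have hun : ‖u‖ ≤ 1 := by
      rw [hu, norm_smul, norm_inv, norm_norm, inv_mul_cancel₀ hd.ne']
    obtain ⟨F, hF, hFt, hFb⟩ := hA f hf M hM u hun y
    have hbd : ∀ z : ℂ, ‖z‖ ≤ 2 → ‖F z‖ ≤ B * M := by
      intro z hz
      have him : |z.im| ≤ 2 := (Complex.abs_im_le_norm z).trans hz
      refine (hFb z (2 * |R|) fun ξ hξ => ?_).trans ?_
      · calc -z.im * ⟪u, ξ⟫ ≤ |z.im| * |⟪u, ξ⟫| := by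
              rw [← abs_mul]; exact (le_abs_self _).trans_eq (by rw [abs_mul, abs_mul, abs_neg])
          _ ≤ 2 * (1 * |R|) := by
              gcongr
              refine (abs_real_inner_le_norm u ξ).trans ?_
              gcongr
              exact (hR ξ hξ).trans (le_abs_self _)
          _ = _ := by ring
      · calc _ ≤ A * M * (1 + 2) ^ n * Real.exp (2 * Real.pi * (2 * |R| + 1 * 2)) := by gcongr
          _ = _ := by rw [hB]; ring
    have hder : ∀ z ∈ closedBall (0 : ℂ) 1, ‖deriv F z‖ ≤ B * M := by
      intro z hz
      have := Complex.norm_deriv_le_of_forall_mem_sphere_norm_le (c := z) (R := 1) (C := B * M)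
        one_pos hF.diffContOnCl fun w hw => hbd w ?_
      · simpa using this
      · have h2 : ‖w - z‖ = 1 := by simpa [dist_eq_norm] using hw
        have h3 := norm_le_norm_add_norm_sub' w z
        have h4 : ‖z‖ ≤ 1 := by simpa using hz
        linarith
    have h5 := (convex_closedBall (0 : ℂ) 1).norm_image_sub_le_of_norm_deriv_le
      (fun z _ => hF z) hder (x := 0)
      (y := ((‖x - y‖ : ℝ) : ℂ)) (by simp) (by simpa using h1)
    have h6 := hFt 0
    have h7 := hFt ‖x - y‖
    rw [Complex.ofReal_zero, zero_smul, add_zero] at h6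
    rw [hu, smul_smul, mul_inv_cancel₀ hd.ne', one_smul, add_sub_cancel] at h7
    rw [h6, h7, sub_zero, Complex.norm_real, norm_norm] at h5
    refine h5.trans ?_
    gcongr
    linarith
  · calc ‖f x - f y‖ ≤ ‖f x‖ + ‖f y‖ := norm_sub_le _ _
      _ ≤ 2 * M * 1 := by linarith [hM x, hM y]
      _ ≤ (B + 2) * M * ‖x - y‖ := by
          gcongr
          linarith

lemma MemBernstein.exists_entire_of_width {Ω : Set V} (hΩ : IsCompact Ω) {f : V → ℂ}
    (hf : MemBernstein Ω f) {u : V} {σ : ℝ} (hσ : ∀ ω ∈ Ω, ∀ ω' ∈ Ω, ⟪u, ω - ω'⟫ ≤ σ)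
    {η : ℝ} (hη : 0 < η) :
    ∃ A > 0, ∀ x, ∃ F : ℂ → ℂ, Differentiable ℂ F ∧ (∀ t : ℝ, ‖F t‖ = ‖f (x + t • u)‖) ∧
      ∀ z, ‖F z‖ ≤ A * Real.exp (η * ‖z‖ + Real.pi * σ * |z.im|) := by
  obtain ⟨c, hc⟩ : ∃ c : ℝ, ∀ ξ ∈ Ω, |⟪u, ξ⟫ - c| ≤ σ / 2 := by
    rcases Ω.eq_empty_or_nonempty with rfl | hne
    · exact ⟨0, by simp⟩
    · obtain ⟨ξ₀, h0, hmax⟩ := hΩ.exists_isMaxOn hne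
        (f := fun ξ => ⟪u, ξ⟫) (by fun_prop)
      refine ⟨⟪u, ξ₀⟫ - σ / 2, fun ξ hξ => abs_le.2 ⟨?_, ?_⟩⟩
      · have := hσ ξ₀ h0 ξ hξ
        rw [inner_sub_right] at this
        linarith
      · have : ⟪u, ξ⟫ ≤ ⟪u, ξ₀⟫ := hmax hξ
        linarith
  set r := max 1 ‖u‖ with hr
  have hr1 : 1 ≤ r := le_max_left _ _
  have hr0 : 0 < r := by linarith
  set θ := η / (4 * Real.pi * r) with hθ
  have hpi := Real.pi_pos
  have hθ0 : 0 < θ := by positivity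
  obtain ⟨A, hA0, n, hA⟩ := MemBernstein.exists_entire hΩ hθ0
  obtain ⟨M, hM⟩ := hf.2.1
  have hM0 : 0 ≤ M := (norm_nonneg _).trans (hM 0)
  set A' := (2 * r / η) ^ n * n.factorial * Real.exp (η / (2 * r)) with hA'
  have hA'0 : 0 < A' := by positivity
  have hpoly : ∀ y : ℝ, 0 ≤ y → (1 + r * y) ^ n ≤ A' * Real.exp (η / 2 * y) := by
    intro y hy
    have h1 := Real.pow_div_factorial_le_exp (η / (2 * r) * (1 + r * y)) (by positivity) n
    rw [div_le_iff₀ (by positivity), mul_pow] at h1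
    have h2 : (1 + r * y) ^ n = (2 * r / η) ^ n * ((η / (2 * r)) ^ n * (1 + r * y) ^ n) := by
      rw [← mul_assoc, ← mul_pow]
      rw [show 2 * r / η * (η / (2 * r)) = 1 by field_simp]
      simp
    rw [h2]
    calc _ ≤ (2 * r / η) ^ n * (Real.exp (η / (2 * r) * (1 + r * y)) * n.factorial) := by gcongr
      _ = _ := by
        rw [hA', show η / (2 * r) * (1 + r * y) = η / (2 * r) + η / 2 * y by field_simp,
          Real.exp_add]
        ring
  refine ⟨A * M * A' + 1, by positivity, fun x => ?_⟩
  have hun : ‖r⁻¹ • u‖ ≤ 1 := by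
    rw [norm_smul, norm_inv, Real.norm_of_nonneg hr0.le, inv_mul_le_iff₀ hr0, mul_one]
    exact le_max_right _ _
  obtain ⟨F, hF, hFt, hFb⟩ := hA f hf M hM (r⁻¹ • u) hun x
  have hexp : ∀ z : ℂ, ‖Complex.exp (-(2 * Real.pi * c * Complex.I * z))‖ =
      Real.exp (2 * Real.pi * c * z.im) := by
    intro z; rw [Complex.norm_exp]; congr 1; simp
  refine ⟨fun z => F (r * z) * Complex.exp (-(2 * Real.pi * c * Complex.I * z)), by fun_prop,
    fun t => ?_, fun z => ?_⟩
  · rw [norm_mul, hexp, ← Complex.ofReal_mul, hFt, smul_smul, mul_right_comm,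
      mul_inv_cancel₀ hr0.ne', one_mul]
    simp
  · have him : (r * z : ℂ).im = r * z.im := by simp
    have hnz : ‖(r * z : ℂ)‖ = r * ‖z‖ := by simp [abs_of_pos hr0]
    have h1 := hFb (r * z) (-c * z.im + σ / 2 * |z.im|) fun ξ hξ => by
      rw [him, inner_smul_left]
      simp only [conj_trivial]
      rw [show -(r * z.im) * (r⁻¹ * ⟪u, ξ⟫) = -(z.im * (⟪u, ξ⟫ - c)) - c * z.im by
        field_simp; ring]
      have : -(z.im * (⟪u, ξ⟫ - c)) ≤ |z.im| * (σ / 2) := by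
        refine (neg_le_abs _).trans ?_
        rw [abs_mul]
        exact mul_le_mul_of_nonneg_left (hc ξ hξ) (abs_nonneg _)
      linarith
    rw [him, hnz, abs_mul, abs_of_pos hr0] at h1
    rw [norm_mul, hexp]
    have h2 : Real.exp (2 * Real.pi * (-c * z.im + σ / 2 * |z.im| + θ * (r * |z.im|))) *
        Real.exp (2 * Real.pi * c * z.im) ≤
        Real.exp (η / 2 * ‖z‖ + Real.pi * σ * |z.im|) := by
      rw [← Real.exp_add, Real.exp_le_exp]
      have h3 : 2 * Real.pi * (θ * (r * |z.im|)) = η / 2 * |z.im| := by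
        rw [hθ]; field_simp; ring
      have h4 := mul_le_mul_of_nonneg_left (Complex.abs_im_le_norm z) (half_pos hη).le
      linarith
    calc ‖F (r * z)‖ * Real.exp (2 * Real.pi * c * z.im)
        ≤ A * M * (1 + r * ‖z‖) ^ n * Real.exp (2 * Real.pi * (-c * z.im + σ / 2 * |z.im| +
          θ * (r * |z.im|))) * Real.exp (2 * Real.pi * c * z.im) := by gcongr
      _ ≤ A * M * (A' * Real.exp (η / 2 * ‖z‖)) *
          Real.exp (η / 2 * ‖z‖ + Real.pi * σ * |z.im|) := by
          rw [mul_assoc (A * M * _)]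
          have := hpoly ‖z‖ (norm_nonneg z)
          gcongr
      _ = A * M * A' * Real.exp (η * ‖z‖ + Real.pi * σ * |z.im|) := by
          rw [show η * ‖z‖ + Real.pi * σ * |z.im| = η / 2 * ‖z‖ +
            (η / 2 * ‖z‖ + Real.pi * σ * |z.im|) by ring,
            Real.exp_add (η / 2 * ‖z‖) (η / 2 * ‖z‖ + Real.pi * σ * |z.im|)]
          ring
      _ ≤ _ := by gcongr; linarith

lemma exists_subseq_tendsto_of_lipschitz (f : ℕ → V → ℂ) {K M : ℝ}
    (hK : ∀ n x y, ‖f n x - f n y‖ ≤ K * ‖x - y‖) (hM : ∀ n x, ‖f n x‖ ≤ M) :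
    ∃ (g : V → ℂ) (φ : ℕ → ℕ), StrictMono φ ∧
      ∀ x, Tendsto (fun n => f (φ n) x) atTop (nhds (g x)) := by
  have hcomp : IsCompact (Set.pi Set.univ fun _ : ℕ => closedBall (0 : ℂ) M) :=
    isCompact_univ_pi fun _ => isCompact_closedBall _ _
  obtain ⟨a, -, φ, hφ, ha⟩ := hcomp.tendsto_subseq
    (x := fun n k => f n (TopologicalSpace.denseSeq V k)) fun n k _ => by simpa using hM n _
  rw [tendsto_pi_nhds] at ha
  have hcau : ∀ x, ∃ c, Tendsto (fun n => f (φ n) x) atTop (nhds c) := by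
    intro x
    refine cauchySeq_tendsto_of_complete (Metric.cauchySeq_iff'.2 fun ε hε => ?_)
    obtain ⟨k, hk⟩ : ∃ k, (|K| + 1) * ‖x - TopologicalSpace.denseSeq V k‖ < ε / 4 := by
      have := (TopologicalSpace.denseRange_denseSeq V).exists_dist_lt x
        (ε := ε / 4 / (|K| + 1)) (by positivity)
      obtain ⟨k, hk⟩ := this
      refine ⟨k, ?_⟩
      rw [dist_eq_norm, lt_div_iff₀ (by positivity)] at hk
      linarith
    have hk' : K * ‖x - TopologicalSpace.denseSeq V k‖ < ε / 4 := by
      refine lt_of_le_of_lt ?_ hk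
      gcongr
      linarith [le_abs_self K]
    obtain ⟨N, hN⟩ := Metric.cauchySeq_iff'.1 (ha k).cauchySeq (ε / 4) (by positivity)
    refine ⟨N, fun n hn => ?_⟩
    have h1 := hN n hn
    have h2 := hK (φ n) x (TopologicalSpace.denseSeq V k)
    have h3 := hK (φ N) x (TopologicalSpace.denseSeq V k)
    simp only [Function.comp, dist_eq_norm] at h1 ⊢
    set y := TopologicalSpace.denseSeq V k
    have h4 : f (φ n) x - f (φ N) x = (f (φ n) x - f (φ n) y) +
      (f (φ n) y - f (φ N) y) - (f (φ N) x - f (φ N) y) := by ring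
    rw [h4]
    refine (norm_sub_le _ _).trans_lt ?_
    have := norm_add_le (f (φ n) x - f (φ n) y) (f (φ n) y - f (φ N) y)
    linarith
  choose g hg using hcau
  exact ⟨g, φ, hφ, hg⟩

/-- Normal families: bounded sequences of functions with spectrum shrinking to `Ω`
subconverge pointwise to an element of `B_Ω`. -/
lemma MemBernstein.exists_subseq_limit {Ω : Set V} (hΩ : IsCompact Ω) {f : ℕ → V → ℂ}
    {ε : ℕ → ℝ} (hε1 : ∀ n, ε n ≤ 1) (hε : Tendsto ε atTop (nhds 0))
    (hf : ∀ n, MemBernstein (cthickening (ε n) Ω) (f n)) {M : ℝ} (hM : ∀ n x, ‖f n x‖ ≤ M) :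
    ∃ (g : V → ℂ) (φ : ℕ → ℕ), StrictMono φ ∧
      (∀ x, Tendsto (fun n => f (φ n) x) atTop (nhds (g x))) ∧ MemBernstein Ω g := by
  obtain ⟨K, hK0, hK⟩ := MemBernstein.exists_lipschitz (hΩ.cthickening (r := 1))
  have hlip : ∀ n x y, ‖f n x - f n y‖ ≤ K * M * ‖x - y‖ := fun n =>
    hK (f n) ((hf n).mono (cthickening_mono (hε1 n) _)) M (hM n)
  obtain ⟨g, φ, hφ, hg⟩ := exists_subseq_tendsto_of_lipschitz f hlip hM
  have hgM : ∀ x, ‖g x‖ ≤ M := fun x => le_of_tendsto (hg x).norm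
    (Eventually.of_forall fun n => hM _ _)
  have hM0 : 0 ≤ M := (norm_nonneg _).trans (hgM 0)
  have hglip : ∀ x y, ‖g x - g y‖ ≤ K * M * ‖x - y‖ := fun x y =>
    le_of_tendsto ((hg x).sub (hg y)).norm (Eventually.of_forall fun n => hlip _ _ _)
  have hgc : Continuous g := by
    refine LipschitzWith.continuous (K := (K * M).toNNReal) (LipschitzWith.of_dist_le_mul ?_)
    intro x y
    rw [Real.coe_toNNReal _ (by positivity), dist_eq_norm, dist_eq_norm]
    exact hglip x y
  refine ⟨g, φ, hφ, hg, hgc, ⟨M, hgM⟩, fun ψ p q r => ?_⟩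
  have hi := integrable_fourier_of_hasCompactSupport p q
  have hlim : Tendsto (fun n => ∫ x, f (φ n) x * 𝓕 ψ x) atTop (nhds (∫ x, g x * 𝓕 ψ x)) := by
    refine tendsto_integral_of_dominated_convergence (fun x => M * ‖𝓕 ψ x‖) (fun n => ?_)
      (hi.norm.const_mul M) (fun n => Eventually.of_forall fun x => ?_)
      (Eventually.of_forall fun x => (hg x).mul_const _)
    · exact ((hf (φ n)).integrable_mul hi).aestronglyMeasurable
    · rw [norm_mul]
      gcongr
      exact hM _ _
  refine tendsto_nhds_unique hlim (Tendsto.congr' ?_ tendsto_const_nhds)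
  obtain ⟨δ, hδ, hdisj⟩ := (Set.disjoint_iff_inter_eq_empty.2 r).exists_cthickenings
    q hΩ.isClosed
  filter_upwards [(hε.comp hφ.tendsto_atTop).eventually (gt_mem_nhds hδ)] with n hn
  refine ((hf (φ n)).2.2 ψ p q ?_).symm
  exact Set.disjoint_iff_inter_eq_empty.1 (hdisj.mono (self_subset_cthickening _)
    (cthickening_mono hn.le _))

lemma sum_log_add_log_le_circleAverage {F : ℂ → ℂ} (hF : Differentiable ℂ F) (h0 : F 0 ≠ 0)
    {R : ℝ} (hR : 0 < R) (T : Finset ℂ) (hT : ∀ u ∈ T, F u = 0 ∧ ‖u‖ ≤ R) :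
    ∑ u ∈ T, Real.log (R / ‖u‖) + Real.log ‖F 0‖ ≤
      Real.circleAverage (fun z => Real.log ‖F z‖) 0 R := by
  have han : AnalyticOnNhd ℂ F Set.univ := hF.differentiableOn.analyticOnNhd isOpen_univ
  have han' : AnalyticOnNhd ℂ F (closedBall 0 |R|) := han.mono (Set.subset_univ _)
  rw [han'.circleAverage_log_norm hR.ne' h0]
  set d := MeromorphicOn.divisor F (closedBall 0 |R|) with hd
  have hfin : (Function.support fun u => (d u : ℝ) * Real.log (R * ‖0 - u‖⁻¹)).Finite := by
    refine (d.finiteSupport (isCompact_closedBall 0 |R|)).subset fun u hu => ?_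
    rw [Function.mem_support] at hu ⊢
    intro h
    exact hu (by simp [h])
  have hd0 : ∀ u, 0 ≤ d u := fun u => (MeromorphicOn.AnalyticOnNhd.divisor_nonneg han') u
  have hnn : ∀ u, 0 ≤ (d u : ℝ) * Real.log (R * ‖0 - u‖⁻¹) := by
    intro u
    by_cases hu : u ∈ closedBall (0 : ℂ) |R|
    · refine mul_nonneg (by exact_mod_cast hd0 u) ?_
      rw [zero_sub, norm_neg]
      rw [mem_closedBall_zero_iff, abs_of_pos hR] at hu
      rcases eq_or_ne u 0 with rfl | hne
      · simp
      · refine Real.log_nonneg ?_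
        rw [← div_eq_mul_inv, le_div_iff₀ (norm_pos_iff.2 hne), one_mul]
        exact hu
    · have : d u = 0 := d.apply_eq_zero_of_notMem hu
      simp [this]
  have hone : ∀ u ∈ T, (1 : ℝ) ≤ d u := by
    intro u hu
    have huB : u ∈ closedBall (0 : ℂ) |R| := by
      rw [mem_closedBall_zero_iff, abs_of_pos hR]; exact (hT u hu).2
    have h1 : d u = ((analyticOrderAt F u).map (↑)).untop₀ :=
      MeromorphicOn.AnalyticOnNhd.divisor_apply han' huB
    have h2 : analyticOrderAt F u ≠ ⊤ := by
      refine han.analyticOrderAt_ne_top_of_isPreconnected isPreconnected_univ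
        (Set.mem_univ 0) (Set.mem_univ u) ?_
      rw [(han 0 (Set.mem_univ _)).analyticOrderAt_eq_zero.2 h0]
      exact ENat.zero_ne_top
    have h3 : analyticOrderAt F u ≠ 0 := by
      rw [Ne, (han u (Set.mem_univ _)).analyticOrderAt_eq_zero]
      exact fun h => h (hT u hu).1
    obtain ⟨m, hm⟩ := ENat.ne_top_iff_exists.1 h2
    rw [← hm] at h1 h3
    have h4 : d u = (m : ℤ) := by rw [h1]; rfl
    have h5 : m ≠ 0 := by rintro rfl; exact h3 rfl
    rw [h4]
    exact_mod_cast Nat.one_le_iff_ne_zero.2 h5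
  have hle : ∑ u ∈ T, Real.log (R / ‖u‖) ≤ ∑ᶠ u, (d u : ℝ) * Real.log (R * ‖0 - u‖⁻¹) := by
    classical
    rw [finsum_eq_sum_of_support_subset (s := hfin.toFinset ∪ T) _ (by simp)]
    refine le_trans ?_ (Finset.sum_le_sum_of_subset_of_nonneg Finset.subset_union_right
      fun u _ _ => hnn u)
    refine Finset.sum_le_sum fun u hu => ?_
    have h1 := hone u hu
    have h2 := hnn u
    rw [zero_sub, norm_neg, ← div_eq_mul_inv] at h2 ⊢
    nlinarith [nonneg_of_mul_nonneg_right h2 (by linarith)]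
  linarith

lemma circleAverage_abs_im {R : ℝ} (hR : 0 ≤ R) :
    Real.circleAverage (fun z : ℂ => |z.im|) 0 R = 2 * R / Real.pi := by
  have hpi := Real.pi_pos
  have h1 : ∀ θ : ℝ, |(circleMap 0 R θ).im| = R * |Real.sin θ| := by
    intro θ
    simp [circleMap, Complex.exp_ofReal_mul_I_im, abs_mul, abs_of_nonneg hR]
  have hci : ∀ a b : ℝ, IntervalIntegrable (fun θ => |Real.sin θ|) volume a b := fun a b =>
    (Real.continuous_sin.abs).intervalIntegrable a b
  have h2 : ∫ θ in (0 : ℝ)..(2 * Real.pi), |Real.sin θ| = 4 := by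
    rw [← intervalIntegral.integral_add_adjacent_intervals (hci 0 Real.pi) (hci _ _)]
    have e1 : ∫ θ in (0 : ℝ)..Real.pi, |Real.sin θ| = ∫ θ in (0 : ℝ)..Real.pi, Real.sin θ := by
      refine intervalIntegral.integral_congr fun θ hθ => ?_
      rw [Set.uIcc_of_le hpi.le] at hθ
      exact abs_of_nonneg (Real.sin_nonneg_of_mem_Icc hθ)
    have e2 : ∫ θ in Real.pi..(2 * Real.pi), |Real.sin θ| =
        ∫ θ in Real.pi..(2 * Real.pi), -Real.sin θ := by
      refine intervalIntegral.integral_congr fun θ hθ => ?_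
      rw [Set.uIcc_of_le (by linarith)] at hθ
      refine abs_of_nonpos ?_
      have := Real.sin_nonneg_of_nonneg_of_le_pi (x := θ - Real.pi) (by linarith [hθ.1])
        (by linarith [hθ.2])
      rw [Real.sin_sub_pi] at this
      linarith
    rw [e1, e2, intervalIntegral.integral_neg, integral_sin, integral_sin]
    simp
    norm_num
  rw [Real.circleAverage]
  simp_rw [h1]
  rw [intervalIntegral.integral_const_mul, h2, smul_eq_mul]
  field_simp
  ring

lemma sum_log_succ_le (J : ℕ) (hJ : 1 ≤ J) :
    ∑ j ∈ Finset.range J, Real.log (j + 1) ≤ J * Real.log J - J + 1 + Real.log J := by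
  induction J, hJ using Nat.le_induction with
  | base => simp
  | succ n hn ih =>
    rw [Finset.sum_range_succ]
    have hn0 : (0 : ℝ) < n := by exact_mod_cast hn
    have h1 := Real.one_sub_inv_le_log_of_pos (x := ((n : ℝ) + 1) / n) (by positivity)
    rw [Real.log_div (by positivity) (by positivity)] at h1
    have h2 : 1 - (((n : ℝ) + 1) / n)⁻¹ = 1 / (n + 1) := by field_simp; ring
    rw [h2, div_le_iff₀ (by positivity)] at h1
    push_cast
    nlinarith

/-- An entire function of exponential type with too many real zeros on both sides of the origin
is small at the origin. -/
lemma exists_norm_apply_zero_le_of_zeros {D σ ℓ : ℝ} (hσ : 0 ≤ σ) (hD : σ < D) (hℓ : 0 < ℓ) :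
    ∃ J₀ : ℕ, ∀ J : ℕ, J₀ ≤ J → ∀ (F : ℂ → ℂ) (A : ℝ), Differentiable ℂ F → 1 ≤ A →
      (∀ z, ‖F z‖ ≤ A * Real.exp ((D - σ) * ‖z‖ + Real.pi * σ * |z.im|)) →
      (∀ a : ℝ, -(J * ℓ) ≤ a → a + ℓ ≤ J * ℓ → ∃ S : Finset ℝ, D * ℓ ≤ S.card ∧
        ∀ s ∈ S, a ≤ s ∧ s < a + ℓ ∧ F s = 0) →
      ‖F 0‖ ≤ A * Real.exp (-((D - σ) / 2 * (J * ℓ))) := by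
  have hDpos : 0 < D := by linarith
  have hpi := Real.pi_pos
  obtain ⟨J₁, hJ₁⟩ : ∃ J₁ : ℕ, ∀ J : ℕ, J₁ ≤ J →
      2 * D * (1 + Real.log J) ≤ (D - σ) / 2 * J := by
    have h1 : Tendsto (fun J : ℕ => 2 * D * (1 + Real.log J) / J) atTop (nhds 0) := by
      have h2 : Tendsto (fun x : ℝ => Real.log x / x) atTop (nhds 0) := by
        simpa using Real.isLittleO_log_id_atTop.tendsto_div_nhds_zero
      have h3 : Tendsto (fun J : ℕ => 2 * D * ((J : ℝ)⁻¹ + Real.log J / J)) atTop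
          (nhds (2 * D * (0 + 0))) :=
        ((tendsto_inv_atTop_nhds_zero_nat (𝕜 := ℝ)).add
          (h2.comp tendsto_natCast_atTop_atTop)).const_mul _
      simp only [add_zero, mul_zero] at h3
      refine h3.congr fun J => ?_
      ring
    obtain ⟨J₁, hJ₁⟩ := eventually_atTop.1
      ((h1.eventually (gt_mem_nhds (show 0 < (D - σ) / 2 by linarith))).and
        (eventually_gt_atTop 0))
    refine ⟨J₁, fun J hJ => ?_⟩
    obtain ⟨h2, h3⟩ := hJ₁ J hJ
    have h4 : (0 : ℝ) < J := by exact_mod_cast h3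
    exact ((div_lt_iff₀ h4).1 h2).le
  refine ⟨max J₁ 1, fun J hJ F A hF hA hb hz => ?_⟩
  have hJ1 : J₁ ≤ J := (le_max_left _ _).trans hJ
  have hJ0 : 1 ≤ J := (le_max_right _ _).trans hJ
  have hJpos : (0 : ℝ) < J := by exact_mod_cast hJ0
  rcases eq_or_ne (F 0) 0 with h0 | h0
  · rw [h0, norm_zero]; positivity
  set R := J * ℓ with hR
  have hRpos : 0 < R := by positivity
  have hpos : ∀ j : Fin J, ∃ S : Finset ℝ, D * ℓ ≤ S.card ∧
      ∀ s ∈ S, j * ℓ ≤ s ∧ s < j * ℓ + ℓ ∧ F s = 0 := by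
    intro j
    refine hz _ ?_ ?_
    · have : 0 ≤ (j : ℝ) * ℓ := by positivity
      linarith
    · have : ((j : ℕ) + 1 : ℝ) ≤ J := by exact_mod_cast j.2
      nlinarith
  have hneg : ∀ j : Fin J, ∃ S : Finset ℝ, D * ℓ ≤ S.card ∧
      ∀ s ∈ S, -((j + 1) * ℓ) ≤ s ∧ s < -((j + 1) * ℓ) + ℓ ∧ F s = 0 := by
    intro j
    refine hz _ ?_ ?_
    · have : ((j : ℕ) + 1 : ℝ) ≤ J := by exact_mod_cast j.2
      nlinarith
    · have : 0 ≤ (j : ℝ) * ℓ := by positivity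
      linarith
  choose Sp hSp hSp' using hpos
  choose Sn hSn hSn' using hneg
  classical
  set Tp := (Finset.univ.sigma Sp).image (fun x => ((x.2 : ℝ) : ℂ)) with hTp
  set Tn := (Finset.univ.sigma Sn).image (fun x => ((x.2 : ℝ) : ℂ)) with hTn
  have hspos : ∀ j, ∀ s ∈ Sp j, 0 < s ∧ s ≤ (j + 1) * ℓ := by
    intro j s hs
    obtain ⟨h1, h2, h3⟩ := hSp' j s hs
    refine ⟨lt_of_le_of_ne ((by positivity : (0 : ℝ) ≤ j * ℓ).trans h1) ?_, by linarith⟩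
    rintro rfl
    exact h0 (by simpa using h3)
  have hsneg : ∀ j, ∀ s ∈ Sn j, s < 0 ∧ -s ≤ (j + 1) * ℓ := by
    intro j s hs
    obtain ⟨h1, h2, h3⟩ := hSn' j s hs
    have : (0 : ℝ) ≤ j * ℓ := by positivity
    exact ⟨by linarith, by linarith⟩
  have hjJ : ∀ j : Fin J, ((j : ℕ) + 1 : ℝ) * ℓ ≤ R := by
    intro j
    have : ((j : ℕ) + 1 : ℝ) ≤ J := by exact_mod_cast j.2
    rw [hR]; gcongr
  have hdisj : Disjoint Tp Tn := by
    rw [Finset.disjoint_left]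
    intro u hu hu'
    simp only [hTp, hTn, Finset.mem_image, Finset.mem_sigma, Finset.mem_univ, true_and] at hu hu'
    obtain ⟨⟨j, s⟩, hs, rfl⟩ := hu
    obtain ⟨⟨j', s'⟩, hs', he⟩ := hu'
    have h1 := (hspos j s hs).1
    have h2 := (hsneg j' s' hs').1
    have h3 : s' = s := by exact_mod_cast he
    linarith
  have hsum := sum_log_add_log_le_circleAverage hF h0 hRpos (Tp ∪ Tn) (by
    intro u hu
    rw [Finset.mem_union] at hu
    rcases hu with hu | hu
    · simp only [hTp, Finset.mem_image, Finset.mem_sigma, Finset.mem_univ, true_and] at hu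
      obtain ⟨⟨j, s⟩, hs, rfl⟩ := hu
      refine ⟨(hSp' j s hs).2.2, ?_⟩
      obtain ⟨h1, h2⟩ := hspos j s hs
      rw [Complex.norm_real, Real.norm_of_nonneg h1.le]
      exact h2.trans (hjJ j)
    · simp only [hTn, Finset.mem_image, Finset.mem_sigma, Finset.mem_univ, true_and] at hu
      obtain ⟨⟨j, s⟩, hs, rfl⟩ := hu
      refine ⟨(hSn' j s hs).2.2, ?_⟩
      obtain ⟨h1, h2⟩ := hsneg j s hs
      rw [Complex.norm_real, Real.norm_of_nonpos h1.le]
      exact h2.trans (hjJ j))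
  have hlow : D * ℓ * (J - 1 - Real.log J) ≤ ∑ j : Fin J, D * ℓ * Real.log (J / (j + 1)) := by
    rw [← Finset.mul_sum]
    gcongr
    rw [Fin.sum_univ_eq_sum_range (fun j : ℕ => Real.log (J / ((j : ℝ) + 1))) J]
    have h1 := sum_log_succ_le J hJ0
    have h2 : ∑ j ∈ Finset.range J, Real.log ((J : ℝ) / (j + 1)) =
        J * Real.log J - ∑ j ∈ Finset.range J, Real.log (j + 1) := by
      have h3 : ∀ j : ℕ, Real.log ((J : ℝ) / (j + 1)) = Real.log J - Real.log (j + 1) :=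
        fun j => Real.log_div hJpos.ne' (by positivity)
      simp_rw [h3]
      rw [Finset.sum_sub_distrib]
      simp
    rw [h2]; linarith
  have hterm : ∀ (j : Fin J) (s : ℝ), s ≠ 0 → |s| ≤ (j + 1) * ℓ →
      Real.log (J / (j + 1)) ≤ Real.log (R / ‖(s : ℂ)‖) := by
    intro j s hs0 hs
    have : 0 < |s| := abs_pos.2 hs0
    rw [Complex.norm_real, Real.norm_eq_abs]
    refine Real.log_le_log (by positivity) ?_
    rw [div_le_div_iff₀ (by positivity) this, hR]
    calc (J : ℝ) * |s| ≤ J * ((j + 1) * ℓ) := by gcongr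
      _ = _ := by ring
  have hlogj : ∀ j : Fin J, 0 ≤ Real.log (J / (j + 1)) := by
    intro j
    refine Real.log_nonneg ?_
    rw [le_div_iff₀ (by positivity), one_mul]
    exact_mod_cast j.2
  have hsp : D * ℓ * (J - 1 - Real.log J) ≤ ∑ u ∈ Tp, Real.log (R / ‖u‖) := by
    refine hlow.trans ?_
    rw [hTp, Finset.sum_image, Finset.sum_sigma]
    · refine Finset.sum_le_sum fun j _ => ?_
      have h1 : ∀ s ∈ Sp j, Real.log (J / (j + 1)) ≤ Real.log (R / ‖(s : ℂ)‖) := fun s hs => by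
        obtain ⟨h2, h3⟩ := hspos j s hs
        exact hterm j s h2.ne' (by rwa [abs_of_pos h2])
      have h2 := Finset.card_nsmul_le_sum _ _ _ h1
      rw [nsmul_eq_mul] at h2
      exact (mul_le_mul_of_nonneg_right (hSp j) (hlogj j)).trans h2
    · rintro ⟨j, s⟩ hs ⟨j', s'⟩ hs' he
      simp only [Finset.coe_sigma, Finset.coe_univ, Set.mem_sigma_iff, Set.mem_univ, true_and,
        Finset.mem_coe] at hs hs'
      have h3 : s = s' := by simpa using he
      subst h3
      obtain ⟨a1, a2, -⟩ := hSp' j s hs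
      obtain ⟨b1, b2, -⟩ := hSp' j' s hs'
      have c1 : (j : ℝ) < j' + 1 := by nlinarith
      have c2 : (j' : ℝ) < j + 1 := by nlinarith
      have c3 : (j : ℕ) < j' + 1 := by exact_mod_cast c1
      have c4 : (j' : ℕ) < j + 1 := by exact_mod_cast c2
      have : j = j' := Fin.ext (by omega)
      subst this
      rfl
  have hsn : D * ℓ * (J - 1 - Real.log J) ≤ ∑ u ∈ Tn, Real.log (R / ‖u‖) := by
    refine hlow.trans ?_
    rw [hTn, Finset.sum_image, Finset.sum_sigma]
    · refine Finset.sum_le_sum fun j _ => ?_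
      have h1 : ∀ s ∈ Sn j, Real.log (J / (j + 1)) ≤ Real.log (R / ‖(s : ℂ)‖) := fun s hs => by
        obtain ⟨h2, h3⟩ := hsneg j s hs
        exact hterm j s h2.ne (by rwa [abs_of_neg h2])
      have h2 := Finset.card_nsmul_le_sum _ _ _ h1
      rw [nsmul_eq_mul] at h2
      exact (mul_le_mul_of_nonneg_right (hSn j) (hlogj j)).trans h2
    · rintro ⟨j, s⟩ hs ⟨j', s'⟩ hs' he
      simp only [Finset.coe_sigma, Finset.coe_univ, Set.mem_sigma_iff, Set.mem_univ, true_and,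
        Finset.mem_coe] at hs hs'
      have h3 : s = s' := by simpa using he
      subst h3
      obtain ⟨a1, a2, -⟩ := hSn' j s hs
      obtain ⟨b1, b2, -⟩ := hSn' j' s hs'
      have c1 : (j : ℝ) < j' + 1 := by nlinarith
      have c2 : (j' : ℝ) < j + 1 := by nlinarith
      have c3 : (j : ℕ) < j' + 1 := by exact_mod_cast c1
      have c4 : (j' : ℕ) < j + 1 := by exact_mod_cast c2
      have : j = j' := Fin.ext (by omega)
      subst this
      rfl
  rw [Finset.sum_union hdisj] at hsum
  have hup : Real.circleAverage (fun z => Real.log ‖F z‖) 0 R ≤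
      Real.log A + (D - σ) * R + 2 * σ * R := by
    have hint : CircleIntegrable (fun z : ℂ => Real.pi * σ * |z.im|) 0 R :=
      (by fun_prop : Continuous fun z : ℂ => Real.pi * σ * |z.im|).continuousOn.circleIntegrable
        hRpos.le
    have h1 : Real.circleAverage (fun z : ℂ => (Real.log A + (D - σ) * R) +
        Real.pi * σ * |z.im|) 0 R = Real.log A + (D - σ) * R + 2 * σ * R := by
      rw [Real.circleAverage_fun_add (circleIntegrable_const _ _ _) hint,
        Real.circleAverage_const]
      have := Real.circleAverage_fun_smul (a := Real.pi * σ) (c := 0) (R := R)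
        (f := fun z : ℂ => |z.im|)
      simp only [smul_eq_mul] at this
      rw [this, circleAverage_abs_im hRpos.le]
      field_simp
    rw [← h1]
    refine Real.circleAverage_mono ?_ ?_ ?_
    · exact MeromorphicOn.circleIntegrable_log_norm fun z _ =>
        (hF.analyticAt z).meromorphicAt
    · exact (circleIntegrable_const _ _ _).add hint
    · intro z hzR
      have hzR' : ‖z‖ = R := by simpa [abs_of_pos hRpos] using hzR
      have hA0 : 0 ≤ Real.log A := Real.log_nonneg hA
      rcases eq_or_ne (F z) 0 with hz0 | hz0
      · rw [hz0, norm_zero, Real.log_zero]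
        have : 0 ≤ (D - σ) * R := mul_nonneg (by linarith) hRpos.le
        positivity
      · have h2 := Real.log_le_log (norm_pos_iff.2 hz0) (hb z)
        rw [Real.log_mul (by positivity) (by positivity), Real.log_exp, hzR'] at h2
        linarith
  have hJ2 := hJ₁ J hJ1
  have hfin : Real.log ‖F 0‖ ≤ Real.log A - (D - σ) / 2 * R := by
    have h1 : ℓ * (2 * D * (1 + Real.log J)) ≤ ℓ * ((D - σ) / 2 * J) := by gcongr
    rw [hR] at hup ⊢
    nlinarith
  have h2 := Real.exp_le_exp.2 hfin
  rwa [Real.exp_log (norm_pos_iff.2 h0), sub_eq_add_neg, Real.exp_add, Real.exp_log (by linarith)]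
    at h2

lemma norm_log_one_add_le {z : ℂ} (hz : 0 ≤ z.re) :
    ‖Complex.log (1 + z)‖ ≤ 2 * √‖z‖ + Real.pi := by
  have h1 : 1 ≤ ‖1 + z‖ := by
    refine le_trans ?_ (Complex.re_le_norm _)
    simp [hz]
  have h2 : Real.log ‖1 + z‖ ≤ 2 * √‖z‖ := by
    set s := √‖z‖ with hs
    have hs0 : 0 ≤ s := Real.sqrt_nonneg _
    have hs2 : ‖z‖ = s ^ 2 := (Real.sq_sqrt (norm_nonneg z)).symm
    have h3 : ‖1 + z‖ ≤ (1 + s) ^ 2 := by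
      refine (norm_add_le _ _).trans ?_
      rw [norm_one, hs2]; nlinarith
    calc Real.log ‖1 + z‖ ≤ Real.log ((1 + s) ^ 2) := Real.log_le_log (by linarith) h3
      _ = 2 * Real.log (1 + s) := by rw [Real.log_pow]; norm_cast
      _ ≤ 2 * s := by have := Real.log_le_sub_one_of_pos (x := 1 + s) (by positivity); linarith
  rw [Complex.norm_def]
  refine (Real.sqrt_le_sqrt (Complex.normSq_apply _).le).trans ?_
  rw [Complex.log_re, Complex.log_im]
  have h4 := Complex.abs_arg_le_pi (1 + z)
  have h5 := Real.log_nonneg h1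
  refine (Real.sqrt_le_left (by positivity)).2 ?_
  have h6 : (1 + z).arg * (1 + z).arg ≤ Real.pi * Real.pi := by
    rw [← abs_mul_abs_self]; gcongr
  nlinarith [mul_nonneg (h5.trans h2) Real.pi_pos.le]

/-- An entire function of exponential type which is bounded on the real line and decays
exponentially along the positive half-line vanishes at the origin. -/
lemma Differentiable.apply_zero_eq_zero_of_exp_decay {H : ℂ → ℂ} (hH : Differentiable ℂ H)
    {A B M c : ℝ} (hc : 0 < c) (hA : ∀ z, ‖H z‖ ≤ A * Real.exp (B * ‖z‖))
    (hM : ∀ t : ℝ, ‖H t‖ ≤ M) (hdec : ∀ t : ℝ, 0 ≤ t → ‖H t‖ ≤ M * Real.exp (-(c * t))) :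
    H 0 = 0 := by
  have hpi := Real.pi_pos
  have hM0 : 0 ≤ M := (norm_nonneg _).trans (hM 0)
  have hA0 : 0 ≤ A := by
    have := (norm_nonneg _).trans (hA 0)
    simpa using this
  have hB' : ∀ z, ‖H z‖ ≤ A * Real.exp (|B| * ‖z‖) := fun z => (hA z).trans (by
    gcongr; exact le_abs_self B)
  set k := c / Real.pi with hk
  have hkpos : 0 < k := by positivity
  have hkpi : k * Real.pi = c := by rw [hk]; field_simp
  let m : ℝ → ℂ → ℂ := fun a z =>
    (a : ℂ) * z - (k : ℂ) * ((1 + z) * Complex.log (1 + z)) + Complex.I * ((c / 2 : ℝ) : ℂ) * z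
  let f : ℝ → ℂ → ℂ := fun a z => H (Complex.I * z) * Complex.exp (m a z)
  have hslit : ∀ z : ℂ, 0 ≤ z.re → 1 + z ∈ Complex.slitPlane := fun z hz => by
    left; simp; linarith
  have hdiff : ∀ a z, 0 ≤ z.re → DifferentiableAt ℂ (f a) z := by
    intro a z hz
    have h1 : DifferentiableAt ℂ (fun z : ℂ => Complex.log (1 + z)) z :=
      DifferentiableAt.clog (by fun_prop) (hslit z hz)
    have h2 : DifferentiableAt ℂ (fun z => H (Complex.I * z)) z := by fun_prop
    refine h2.mul (DifferentiableAt.cexp ?_)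
    fun_prop
  have hre : ∀ (a r : ℝ), 0 ≤ r → (m a r).re = a * r - k * ((1 + r) * Real.log (1 + r)) := by
    intro a r hr
    have : Complex.log (1 + (r : ℂ)) = ((Real.log (1 + r) : ℝ) : ℂ) := by
      rw [Complex.ofReal_log (by linarith)]; push_cast; rfl
    simp only [m, this]
    simp [Complex.mul_re]
  have hkey : ∀ a r : ℝ, 0 ≤ r → ‖f a r‖ ≤ M := by
    intro a r hr
    refine PhragmenLindelof.right_half_plane_of_bounded_on_real (f := f a) (z := (r : ℂ))
      ?_ ⟨3 / 2, by norm_num, |B| + |a| + k * (4 + 2 * Real.pi) + c, ?_⟩ ?_ ?_ (by simpa using hr)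
    · have hcl : closure {z : ℂ | 0 < z.re} ⊆ {z : ℂ | 0 ≤ z.re} :=
        closure_minimal (fun z (hz : 0 < z.re) => hz.le)
          (isClosed_le continuous_const Complex.continuous_re)
      refine ⟨fun z hz => (hdiff a z (hcl (subset_closure hz))).differentiableWithinAt,
        fun z hz => (hdiff a z (hcl hz)).continuousAt.continuousWithinAt⟩
    · refine Asymptotics.IsBigO.of_bound A ?_
      have h1 : ∀ᶠ z : ℂ in Bornology.cobounded ℂ, 1 ≤ ‖z‖ :=
        tendsto_norm_cobounded_atTop.eventually_ge_atTop 1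
      filter_upwards [h1.filter_mono inf_le_left,
        eventually_inf_principal.2 (Eventually.of_forall fun z (hz : z ∈ {z : ℂ | 0 < z.re}) => hz)]
        with z hz1 (hz0 : 0 < z.re)
      have hL := norm_log_one_add_le hz0.le
      set s := √‖z‖ with hs
      have hs0 : 0 ≤ s := Real.sqrt_nonneg _
      have hs2 : ‖z‖ = s ^ 2 := (Real.sq_sqrt (norm_nonneg z)).symm
      have hs1 : 1 ≤ s := Real.one_le_sqrt.2 hz1
      have hs3 : ‖z‖ ^ (3 / 2 : ℝ) = s ^ 3 := by
        rw [hs, Real.sqrt_eq_rpow, ← Real.rpow_natCast, ← Real.rpow_mul (norm_nonneg z)]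
        norm_num
      have hz3 : ‖z‖ ≤ s ^ 3 := by rw [hs2]; nlinarith [sq_nonneg s]
      have hlog : ‖(1 + z) * Complex.log (1 + z)‖ ≤ (4 + 2 * Real.pi) * s ^ 3 := by
        rw [norm_mul]
        have h2 : ‖1 + z‖ ≤ 2 * s ^ 2 := by
          refine (norm_add_le _ _).trans ?_
          rw [norm_one, ← hs2]; linarith
        calc ‖1 + z‖ * ‖Complex.log (1 + z)‖ ≤ (2 * s ^ 2) * (2 * s + Real.pi) := by gcongr
          _ ≤ (2 * s ^ 2) * (2 * s + Real.pi * s) := by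
            gcongr; nlinarith
          _ = _ := by ring
      have hm : (m a z).re ≤ (|a| + k * (4 + 2 * Real.pi) + c) * s ^ 3 := by
        refine (Complex.re_le_norm _).trans ?_
        refine (norm_add_le _ _).trans ?_
        refine (add_le_add_left (norm_sub_le _ _) _).trans ?_
        rw [norm_mul (a : ℂ), norm_mul (k : ℂ), norm_mul _ z, norm_mul Complex.I, Complex.norm_I,
          Complex.norm_real, Complex.norm_real, Complex.norm_real, Real.norm_eq_abs,
          Real.norm_of_nonneg hkpos.le, Real.norm_of_nonneg (by positivity)]
        have e1 : |a| * ‖z‖ ≤ |a| * s ^ 3 := mul_le_mul_of_nonneg_left hz3 (abs_nonneg a)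
        have e2 := mul_le_mul_of_nonneg_left hlog hkpos.le
        have e3 := mul_le_mul_of_nonneg_left hz3 hc.le
        nlinarith [norm_nonneg z]
      rw [hs3, Real.norm_of_nonneg (Real.exp_pos _).le]
      calc ‖f a z‖ = ‖H (Complex.I * z)‖ * Real.exp (m a z).re := by
            rw [norm_mul, Complex.norm_exp]
        _ ≤ (A * Real.exp (|B| * s ^ 3)) *
            Real.exp ((|a| + k * (4 + 2 * Real.pi) + c) * s ^ 3) := by
            refine mul_le_mul ((hB' _).trans ?_) (Real.exp_le_exp.2 hm) (by positivity)
              (by positivity)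
            rw [norm_mul, Complex.norm_I, one_mul]
            gcongr
        _ = _ := by rw [mul_assoc, ← Real.exp_add]; ring_nf
    · have h1 : ∀ᶠ x : ℝ in atTop, (|B| + a) / k ≤ Real.log (1 + x) :=
        (Real.tendsto_log_atTop.comp
          (tendsto_atTop_add_const_left _ 1 tendsto_id)).eventually_ge_atTop _
      refine isBoundedUnder_of_eventually_le (a := A) ?_
      filter_upwards [h1, eventually_ge_atTop 0] with x hx hx0
      rw [norm_mul, Complex.norm_exp, hre a x hx0]
      have h2 := hB' (Complex.I * x)
      rw [norm_mul, Complex.norm_I, one_mul, Complex.norm_real, Real.norm_of_nonneg hx0] at h2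
      calc _ ≤ (A * Real.exp (|B| * x)) *
            Real.exp (a * x - k * ((1 + x) * Real.log (1 + x))) := by gcongr
        _ = A * Real.exp (|B| * x + (a * x - k * ((1 + x) * Real.log (1 + x)))) := by
            rw [mul_assoc, ← Real.exp_add]
        _ ≤ A * Real.exp 0 := by
            gcongr
            rw [div_le_iff₀ hkpos] at hx
            have h3 : 0 ≤ Real.log (1 + x) := Real.log_nonneg (by linarith)
            nlinarith [mul_nonneg hkpos.le h3, mul_le_mul_of_nonneg_right hx hx0]
        _ = A := by simp
    · intro x
      rw [norm_mul, Complex.norm_exp]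
      have e1 : Complex.I * (x * Complex.I) = ((-x : ℝ) : ℂ) := by
        push_cast; linear_combination (x : ℂ) * Complex.I_mul_I
      have e2 : (m a (x * Complex.I)).re =
          - k * (Real.log ‖1 + x * Complex.I‖ - x * (1 + x * Complex.I).arg) - c / 2 * x := by
        simp only [m]
        simp [Complex.mul_re, Complex.log_re, Complex.log_im]
        ring
      have h1 : 1 ≤ ‖1 + x * Complex.I‖ := by
        refine le_trans ?_ (Complex.re_le_norm _)
        simp
      have h2 := Real.log_nonneg h1
      have h3 : |(1 + x * Complex.I).arg| ≤ Real.pi / 2 := by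
        rw [Complex.abs_arg_le_pi_div_two_iff]; simp
      have h4 : x * (1 + x * Complex.I).arg ≤ |x| * (Real.pi / 2) := by
        refine (le_abs_self _).trans ?_
        rw [abs_mul]; gcongr
      have h5 : (m a (x * Complex.I)).re ≤ c / 2 * |x| - c / 2 * x := by
        rw [e2]
        have h6 := mul_le_mul_of_nonneg_left h4 hkpos.le
        have h7 := mul_nonneg hkpos.le h2
        have h8 : k * (|x| * (Real.pi / 2)) = c / 2 * |x| := by rw [← hkpi]; ring
        nlinarith
      rw [e1]
      rcases le_total 0 x with hx | hx
      · rw [abs_of_nonneg hx, sub_self] at h5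
        calc _ ≤ M * Real.exp 0 := by gcongr; exact hM _
          _ = M := by simp
      · rw [abs_of_nonpos hx] at h5
        calc _ ≤ (M * Real.exp (-(c * -x))) * Real.exp (c / 2 * -x - c / 2 * x) := by
              gcongr; exact hdec _ (by linarith)
          _ = M := by
              rw [mul_assoc, ← Real.exp_add]
              ring_nf
              simp
  have hzero : ∀ r : ℝ, 0 < r → H (Complex.I * r) = 0 := by
    intro r hr
    by_contra hne
    have hpos := norm_pos_iff.2 hne
    set K := Real.exp (-(k * ((1 + r) * Real.log (1 + r)))) with hK
    have h1 : ∀ a : ℝ, ‖H (Complex.I * r)‖ * K * Real.exp (a * r) ≤ M := by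
      intro a
      have h2 := hkey a r hr.le
      rw [norm_mul, Complex.norm_exp, hre a r hr.le, sub_eq_add_neg, Real.exp_add] at h2
      rw [hK]; linarith
    have h3 := h1 (M / (‖H (Complex.I * r)‖ * K) / r)
    have h4 := Real.add_one_le_exp (M / (‖H (Complex.I * r)‖ * K) / r * r)
    have hKp : 0 < ‖H (Complex.I * r)‖ * K := by positivity
    have h5 := mul_le_mul_of_nonneg_left h4 hKp.le
    rw [div_mul_cancel₀ _ hr.ne', mul_add, mul_div_cancel₀ _ hKp.ne', mul_one] at h5
    rw [div_mul_cancel₀ _ hr.ne'] at h3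
    linarith
  have hlim : Tendsto (fun r : ℝ => H (Complex.I * r)) (nhdsWithin 0 (Set.Ioi 0)) (nhds (H 0)) := by
    have : Continuous fun r : ℝ => H (Complex.I * r) :=
      hH.continuous.comp (by fun_prop)
    have h := this.tendsto 0
    simp only [Complex.ofReal_zero, mul_zero] at h
    exact h.mono_left nhdsWithin_le_nhds
  refine tendsto_nhds_unique hlim (tendsto_const_nhds.congr' ?_)
  filter_upwards [self_mem_nhdsWithin] with r hr
  exact (hzero r hr).symm

/-- Two nonzero orthogonal vectors determine a vector of the plane by its inner products. -/
lemma eq_zero_of_inner_eq_zero_of_orthogonal {w e z : EuclideanSpace ℝ (Fin 2)} (hw : w ≠ 0)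
    (he : e ≠ 0) (hwe : ⟪w, e⟫ = 0) (h1 : ⟪z, w⟫ = 0) (h2 : ⟪z, e⟫ = 0) : z = 0 := by
  have hw' : w 0 ^ 2 + w 1 ^ 2 ≠ 0 := by
    have := pow_ne_zero 2 (norm_ne_zero_iff.2 hw)
    rwa [EuclideanSpace.norm_sq_eq, Fin.sum_univ_two, Real.norm_eq_abs, Real.norm_eq_abs, sq_abs,
      sq_abs] at this
  have he' : e 0 ^ 2 + e 1 ^ 2 ≠ 0 := by
    have := pow_ne_zero 2 (norm_ne_zero_iff.2 he)
    rwa [EuclideanSpace.norm_sq_eq, Fin.sum_univ_two, Real.norm_eq_abs, Real.norm_eq_abs, sq_abs,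
      sq_abs] at this
  simp only [PiLp.inner_apply, Fin.sum_univ_two, RCLike.inner_apply, conj_trivial] at hwe h1 h2
  have hdet : (w 0 * e 1 - w 1 * e 0) ≠ 0 := by
    intro h
    have : (w 0 ^ 2 + w 1 ^ 2) * (e 0 ^ 2 + e 1 ^ 2) = 0 := by
      linear_combination (w 0 * e 1 - w 1 * e 0) * h + (e 0 * w 0 + e 1 * w 1) * hwe
    exact (mul_ne_zero hw' he') this
  have z0 : z 0 = 0 := by
    have : z 0 * (w 0 * e 1 - w 1 * e 0) = 0 := by linear_combination e 1 * h1 - w 1 * h2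
    exact (mul_eq_zero.1 this).resolve_right hdet
  have z1 : z 1 = 0 := by
    have : z 1 * (w 0 * e 1 - w 1 * e 0) = 0 := by linear_combination w 0 * h2 - e 0 * h1
    exact (mul_eq_zero.1 this).resolve_right hdet
  ext i
  fin_cases i
  · exact z0
  · exact z1

lemma exists_orthogonal_ne_zero {w : EuclideanSpace ℝ (Fin 2)} (hw : w ≠ 0) :
    ∃ e : EuclideanSpace ℝ (Fin 2), e ≠ 0 ∧ ⟪w, e⟫ = 0 := by
  refine ⟨!₂[-w 1, w 0], ?_, ?_⟩
  · intro h
    apply hw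
    have h0 := congrArg (fun v : EuclideanSpace ℝ (Fin 2) => v 0) h
    have h1 := congrArg (fun v : EuclideanSpace ℝ (Fin 2) => v 1) h
    simp at h0 h1
    ext i
    fin_cases i
    · exact h1
    · exact h0
  · simp [PiLp.inner_apply, Fin.sum_univ_two]
    ring

/-- The closed planar cone spanned by `w` and `w + τ • e`. -/
def sideCone (w e : V) (τ : ℝ) : Set V :=
  {x | ∃ α β : ℝ, 0 ≤ β ∧ β ≤ τ * α ∧ x = α • w + β • e}

/-- `v` is the gradient of the homogeneous function `p` at `w`, from the side of `e`, in the
strong (strict differentiability) sense. -/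
def IsSideGradient (p : V → ℝ) (w e v : V) : Prop :=
  ∀ κ > 0, ∃ τ > 0, ∀ x ∈ sideCone w e τ, ∀ y ∈ sideCone w e τ,
    |p x - p y - ⟪v, x - y⟫| ≤ κ * ‖x - y‖

/-- The polar set of `D`. -/
def polarSet (D : Set V) : Set V := {x | ∀ y ∈ D, ⟪x, y⟫ ≤ 1}

lemma isClosed_polarSet (D : Set V) : IsClosed (polarSet D) := by
  simp only [polarSet, Set.ofPred_forall]
  exact isClosed_biInter fun y _ => isClosed_le (by fun_prop) continuous_const

lemma isCompact_polarSet {D : Set V} (hD0 : 0 ∈ interior D) : IsCompact (polarSet D) := by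
  obtain ⟨r, hr, hrD⟩ := Metric.mem_nhds_iff.1 (mem_interior_iff_mem_nhds.1 hD0)
  refine Metric.isCompact_of_isClosed_isBounded (isClosed_polarSet D)
    (isBounded_iff_forall_norm_le.2 ⟨2 / r, fun x hx => ?_⟩)
  rcases eq_or_ne x 0 with rfl | hx0
  · rw [norm_zero]; positivity
  have hxp := norm_pos_iff.2 hx0
  have h1 := hx ((r / 2 / ‖x‖) • x) (hrD (by
    rw [mem_ball_zero_iff, norm_smul, Real.norm_of_nonneg (by positivity),
      div_mul_cancel₀ _ hxp.ne']
    linarith))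
  rw [inner_smul_right, real_inner_self_eq_norm_sq] at h1
  rw [le_div_iff₀ hr]
  have h2 : r / 2 / ‖x‖ * ‖x‖ ^ 2 = r / 2 * ‖x‖ := by field_simp
  linarith

lemma inner_le_gauge_of_mem_polarSet {D : Set V} (hD0 : 0 ∈ interior D) {v : V}
    (hv : v ∈ polarSet D) (x : V) : ⟪v, x⟫ ≤ gauge D x := by
  have habs : Absorbent ℝ D := absorbent_nhds_zero (mem_interior_iff_mem_nhds.1 hD0)
  refine le_of_forall_gt_imp_ge_of_dense fun t ht => ?_
  obtain ⟨b, hb, hbt, y, hy, rfl⟩ := exists_lt_of_gauge_lt habs ht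
  have h2 := hv y hy
  simp only [inner_smul_right]
  nlinarith

lemma exists_mem_polarSet_inner_eq_gauge {D : Set V}
    (hDconvex : Convex ℝ D) (hD0 : 0 ∈ interior D) {x : V} (hx : 0 < gauge D x) :
    ∃ v ∈ polarSet D, ⟪v, x⟫ = gauge D x := by
  have hnhds := mem_interior_iff_mem_nhds.1 hD0
  set x₀ := (gauge D x)⁻¹ • x with hx₀
  have hx₀1 : gauge D x₀ = 1 := by
    rw [hx₀, gauge_smul_of_nonneg (by positivity), smul_eq_mul, inv_mul_cancel₀ hx.ne']
  have hnot : x₀ ∉ interior D := fun h => by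
    have := (gauge_lt_one_iff_mem_interior hDconvex hnhds).2 h
    linarith
  obtain ⟨f, hf⟩ := geometric_hahn_banach_open_point hDconvex.interior isOpen_interior hnot
  have hf0 : 0 < f x₀ := by simpa using hf 0 hD0
  have hle : ∀ y ∈ D, f y ≤ f x₀ := by
    have h1 : D ⊆ closure (interior D) := by
      rw [hDconvex.closure_interior_eq_closure_of_nonempty_interior ⟨0, hD0⟩]
      exact subset_closure
    have h2 : closure (interior D) ⊆ {y | f y ≤ f x₀} :=
      closure_minimal (fun y hy => (hf y hy).le) (isClosed_le f.continuous continuous_const)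
    exact fun y hy => h2 (h1 hy)
  set g := (InnerProductSpace.toDual ℝ V).symm f with hg
  have hgf : ∀ y, ⟪g, y⟫ = f y := fun y => InnerProductSpace.toDual_symm_apply
  refine ⟨(f x₀)⁻¹ • g, fun y hy => ?_, ?_⟩
  · rw [real_inner_smul_left, hgf, inv_mul_le_iff₀ hf0, mul_one]
    exact hle y hy
  · rw [real_inner_smul_left, hgf, hx₀, map_smul, smul_eq_mul]
    have : f x ≠ 0 := by
      intro h
      rw [hx₀, map_smul, h] at hf0
      simp at hf0
    field_simp

/-- A convex set of finite volume with nonempty interior is bounded. -/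
lemma isBounded_of_convex_of_volume_lt_top {D : Set V} (hDconvex : Convex ℝ D)
    (hDfin : volume D < ⊤) (hD0 : 0 ∈ interior D) : Bornology.IsBounded D := by
  obtain ⟨r, hr, hrD⟩ := Metric.mem_nhds_iff.1 (mem_interior_iff_mem_nhds.1 hD0)
  set b := volume (ball (0 : V) (r / 2)) with hb
  have hb0 : b ≠ 0 := (measure_ball_pos volume 0 (by positivity)).ne'
  obtain ⟨N, hN⟩ := ENNReal.exists_nat_mul_gt hb0 hDfin.ne
  refine isBounded_iff_forall_norm_le.2 ⟨2 * r * N, fun x hx => ?_⟩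
  by_contra! hlt
  have hxp : 0 < ‖x‖ := lt_of_le_of_lt (by positivity) hlt
  set c : ℕ → V := fun j => (j * r / ‖x‖) • x with hc
  have hdisj : (↑(Finset.range N) : Set ℕ).PairwiseDisjoint fun j => ball (c j) (r / 2) := by
    intro i _ j _ hij
    refine ball_disjoint_ball ?_
    rw [hc, dist_eq_norm, ← sub_smul, norm_smul, ← sub_div, ← sub_mul, norm_div, norm_norm,
      div_mul_cancel₀ _ hxp.ne', norm_mul, Real.norm_of_nonneg hr.le, Real.norm_eq_abs]
    have : (1 : ℝ) ≤ |(i : ℝ) - j| := by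
      have h1 : (i : ℤ) - j ≠ 0 := by omega
      exact_mod_cast Int.one_le_abs h1
    nlinarith
  have hsub : (⋃ j ∈ Finset.range N, ball (c j) (r / 2)) ⊆ D := by
    refine Set.iUnion₂_subset fun j hj y hy => ?_
    have hjN : (j : ℝ) ≤ N := by exact_mod_cast (Finset.mem_range.1 hj).le
    set s := j * r / ‖x‖ with hs
    have hs0 : 0 ≤ s := by positivity
    have hs1 : s ≤ 1 / 2 := by
      rw [hs, div_le_iff₀ hxp]; nlinarith
    have h1 : (1 - s)⁻¹ • (y - s • x) ∈ D := by
      refine hrD ?_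
      rw [mem_ball, dist_eq_norm] at hy
      rw [mem_ball_zero_iff, norm_smul, Real.norm_of_nonneg (by
        have : 0 < 1 - s := by linarith
        positivity), inv_mul_lt_iff₀ (by linarith)]
      calc ‖y - s • x‖ < r / 2 := hy
        _ ≤ (1 - s) * r := by nlinarith
    have h2 := hDconvex hx h1 hs0 (show 0 ≤ 1 - s by linarith) (by ring)
    rwa [smul_inv_smul₀ (by linarith), add_sub_cancel] at h2
  have h1 := measure_mono (μ := volume) hsub
  rw [measure_biUnion_finset hdisj fun _ _ => measurableSet_ball] at h1
  simp only [Measure.addHaar_ball_center, Finset.sum_const, Finset.card_range, nsmul_eq_mul] at h1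
  exact absurd h1 (not_le.2 hN)

/-- A point of the polar set exposed first by `w` and then by an orthogonal direction `e` is the
one-sided gradient of the gauge at `w`. -/
lemma isSideGradient_gauge {D : Set (EuclideanSpace ℝ (Fin 2))}
    (hDconvex : Convex ℝ D) (hD0 : 0 ∈ interior D) {w e v : EuclideanSpace ℝ (Fin 2)}
    (hw : gauge D w = 1) (hp : ∀ x, x ≠ 0 → 0 < gauge D x) (he : e ≠ 0) (hwe : ⟪w, e⟫ = 0)
    (hv : v ∈ polarSet D) (hvw : ⟪v, w⟫ = 1)
    (hmax : ∀ v' ∈ polarSet D, ⟪v', w⟫ = 1 → ⟪v', e⟫ ≤ ⟪v, e⟫) :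
    IsSideGradient (gauge D) w e v := by
  have hnhds := mem_interior_iff_mem_nhds.1 hD0
  have hcont : Continuous (gauge D) := continuous_gauge hDconvex hnhds
  have hw0 : w ≠ 0 := by rintro rfl; simp at hw
  have hnz : ∀ α β : ℝ, 0 < α → α • w + β • e ≠ 0 := by
    intro α β hα h
    have := congrArg (fun z => ⟪w, z⟫) h
    simp only [inner_add_right, inner_smul_right, hwe, mul_zero, add_zero, inner_zero_right,
      real_inner_self_eq_norm_sq] at this
    have h2 : 0 < ‖w‖ := norm_pos_iff.2 hw0
    have : 0 < α * ‖w‖ ^ 2 := by positivity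
    linarith
  intro κ hκ
  have hnear : ∃ τ : ℝ, 0 < τ ∧ ∀ β : ℝ, 0 < β → β ≤ τ → ∀ v' ∈ polarSet D,
      ⟪v', w + β • e⟫ = gauge D (w + β • e) → ‖v' - v‖ ≤ κ := by
    by_contra! hcon
    have hseq : ∀ n : ℕ, ∃ β : ℝ, 0 < β ∧ β ≤ 1 / ((n : ℝ) + 1) ∧ ∃ v' ∈ polarSet D,
        ⟪v', w + β • e⟫ = gauge D (w + β • e) ∧ κ < ‖v' - v‖ := by
      intro n
      obtain ⟨β, h1, h2, v', h3, h4, h5⟩ := hcon (1 / ((n : ℝ) + 1)) (by positivity)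
      exact ⟨β, h1, h2, v', h3, h4, h5⟩
    choose β hβ0 hβ1 u huK hug huv using hseq
    obtain ⟨a, haK, φ, hφ, hlim⟩ := (isCompact_polarSet hD0).tendsto_subseq huK
    have hβlim : Tendsto (fun n => β (φ n)) atTop (nhds 0) :=
      (squeeze_zero (fun n => (hβ0 n).le) hβ1 tendsto_one_div_add_atTop_nhds_zero_nat).comp
        hφ.tendsto_atTop
    have hxlim : Tendsto (fun n => w + β (φ n) • e) atTop (nhds w) := by
      simpa using tendsto_const_nhds.add (hβlim.smul_const e)
    have haw : ⟪a, w⟫ = 1 := by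
      rw [← hw]
      refine tendsto_nhds_unique (hlim.inner hxlim) ?_
      refine ((hcont.tendsto w).comp hxlim).congr fun n => ?_
      exact (hug (φ n)).symm
    have hae : ⟪v, e⟫ ≤ ⟪a, e⟫ := by
      refine ge_of_tendsto (hlim.inner tendsto_const_nhds) (Eventually.of_forall fun n => ?_)
      have h1 := inner_le_gauge_of_mem_polarSet hD0 hv (w + β (φ n) • e)
      rw [← hug] at h1
      have h2 := inner_le_gauge_of_mem_polarSet hD0 (huK (φ n)) w
      simp only [inner_add_right, inner_smul_right, hvw, hw] at h1 h2
      have h3 := hβ0 (φ n)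
      simp only [Function.comp_apply]
      by_contra! h4
      nlinarith
    have hav : a - v = 0 := by
      refine eq_zero_of_inner_eq_zero_of_orthogonal hw0 he hwe ?_ ?_
      · rw [inner_sub_left, haw, hvw, sub_self]
      · rw [inner_sub_left, sub_eq_zero]
        exact le_antisymm (hmax a haK haw) hae
    have h5 : κ ≤ ‖a - v‖ :=
      ge_of_tendsto (hlim.sub_const v).norm (Eventually.of_forall fun n => (huv (φ n)).le)
    rw [hav, norm_zero] at h5
    linarith
  obtain ⟨τ, hτ, hnear⟩ := hnear
  have hgrad : ∀ α β : ℝ, 0 < α → 0 < β → β ≤ τ * α → ∃ v' ∈ polarSet D,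
      ⟪v', α • w + β • e⟫ = gauge D (α • w + β • e) ∧ ‖v' - v‖ ≤ κ := by
    intro α β hα hβ hβτ
    obtain ⟨v', hv', hve⟩ := exists_mem_polarSet_inner_eq_gauge hDconvex hD0
      (hp _ (hnz α β hα))
    refine ⟨v', hv', hve, hnear (β / α) (by positivity) ((div_le_iff₀ hα).2 hβτ) v' hv' ?_⟩
    have h1 : w + (β / α) • e = α⁻¹ • (α • w + β • e) := by
      rw [smul_add, inv_smul_smul₀ hα.ne', smul_smul]; congr 2; ring
    rw [h1, gauge_smul_of_nonneg (by positivity), inner_smul_right, hve, smul_eq_mul]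
  have hhalf : ∀ α β α' β' : ℝ, 0 < α → 0 < β → β ≤ τ * α →
      gauge D (α • w + β • e) - gauge D (α' • w + β' • e) -
        ⟪v, (α • w + β • e) - (α' • w + β' • e)⟫ ≤
        κ * ‖(α • w + β • e) - (α' • w + β' • e)‖ := by
    intro α β α' β' hα hβ hβτ
    set x := α • w + β • e
    set y := α' • w + β' • e
    obtain ⟨v', hv', hve, hvn⟩ := hgrad α β hα hβ hβτ
    have h1 := inner_le_gauge_of_mem_polarSet hD0 hv' y
    have h2 : ⟪v' - v, x - y⟫ ≤ κ * ‖x - y‖ := (real_inner_le_norm _ _).trans (by gcongr)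
    rw [inner_sub_left, inner_sub_right v'] at h2
    linarith
  have hopen : ∀ α β α' β' : ℝ, 0 < α → 0 < β → β ≤ τ * α → 0 < α' → 0 < β' → β' ≤ τ * α' →
      |gauge D (α • w + β • e) - gauge D (α' • w + β' • e) -
        ⟪v, (α • w + β • e) - (α' • w + β' • e)⟫| ≤
        κ * ‖(α • w + β • e) - (α' • w + β' • e)‖ := by
    intro α β α' β' h1 h2 h3 h4 h5 h6
    rw [abs_le]
    refine ⟨?_, hhalf α β α' β' h1 h2 h3⟩
    have := hhalf α' β' α β h4 h5 h6
    rw [norm_sub_rev, ← neg_sub (α • w + β • e), inner_neg_right] at this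
    linarith
  refine ⟨τ, hτ, ?_⟩
  rintro x ⟨α, β, hβ, hβτ, rfl⟩ y ⟨α', β', hβ', hβτ', rfl⟩
  have hα : 0 ≤ α := by by_contra! h; nlinarith
  have hα' : 0 ≤ α' := by by_contra! h; nlinarith
  set f : ℝ → ℝ := fun η => |gauge D ((α + η) • w + (β + τ * η) • e) -
    gauge D ((α' + η) • w + (β' + τ * η) • e) -
    ⟪v, ((α + η) • w + (β + τ * η) • e) - ((α' + η) • w + (β' + τ * η) • e)⟫| -
    κ * ‖((α + η) • w + (β + τ * η) • e) - ((α' + η) • w + (β' + τ * η) • e)‖ with hf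
  have hfc : Continuous f := by fun_prop
  have h0 : Tendsto f (nhdsWithin 0 (Set.Ioi 0)) (nhds (f 0)) :=
    (hfc.tendsto 0).mono_left nhdsWithin_le_nhds
  have h1 : f 0 ≤ 0 := by
    refine le_of_tendsto h0 ?_
    filter_upwards [self_mem_nhdsWithin] with η (hη : 0 < η)
    refine sub_nonpos.2 (hopen _ _ _ _ (by linarith) (by positivity) ?_ (by linarith)
      (by positivity) ?_) <;> nlinarith
  simpa [hf] using h1

lemma mem_extremePoints_polarSet {D : Set (EuclideanSpace ℝ (Fin 2))} (hD0 : 0 ∈ interior D)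
    {w e v : EuclideanSpace ℝ (Fin 2)}
    (hw : gauge D w = 1) (he : e ≠ 0) (hwe : ⟪w, e⟫ = 0)
    (hv : v ∈ polarSet D) (hvw : ⟪v, w⟫ = 1)
    (hmax : ∀ v' ∈ polarSet D, ⟪v', w⟫ = 1 → ⟪v', e⟫ ≤ ⟪v, e⟫) :
    v ∈ Set.extremePoints ℝ (polarSet D) := by
  have hw0 : w ≠ 0 := by rintro rfl; simp at hw
  refine ⟨hv, fun a ha b hb hab => ?_⟩
  obtain ⟨s, t, hs, ht, hst, rfl⟩ := hab
  have a1 := inner_le_gauge_of_mem_polarSet hD0 ha w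
  have b1 := inner_le_gauge_of_mem_polarSet hD0 hb w
  rw [hw] at a1 b1
  simp only [inner_add_left, real_inner_smul_left] at hvw hmax
  have a2 : ⟪a, w⟫ = 1 := by
    by_contra h
    have : ⟪a, w⟫ < 1 := lt_of_le_of_ne a1 h
    nlinarith
  have b2 : ⟪b, w⟫ = 1 := by
    by_contra h
    have : ⟪b, w⟫ < 1 := lt_of_le_of_ne b1 h
    nlinarith
  have a3 := hmax a ha a2
  have b3 := hmax b hb b2
  have hs' : s = 1 - t := by linarith
  subst hs'
  have h4 : ⟪a, e⟫ = ⟪b, e⟫ := by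
    have h5 : t * (⟪a, e⟫ - ⟪b, e⟫) ≤ 0 := by linarith
    have h6 : (1 - t) * (⟪b, e⟫ - ⟪a, e⟫) ≤ 0 := by linarith
    have h7 : ⟪a, e⟫ - ⟪b, e⟫ ≤ 0 := nonpos_of_mul_nonpos_right h5 ht
    have h8 : ⟪b, e⟫ - ⟪a, e⟫ ≤ 0 := nonpos_of_mul_nonpos_right h6 hs
    linarith
  have hab : a - b = 0 := by
    refine eq_zero_of_inner_eq_zero_of_orthogonal hw0 he hwe ?_ ?_ <;> rw [inner_sub_left] <;>
      linarith
  rw [sub_eq_zero] at hab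
  subst hab
  rw [← add_smul]; simp

/-- At each boundary point and from each side, the gauge has a one-sided gradient, which is an
extreme point of the polar set. -/
lemma exists_extremePoint_isSideGradient {D : Set (EuclideanSpace ℝ (Fin 2))}
    (hDconvex : Convex ℝ D) (hD0 : 0 ∈ interior D) {w e : EuclideanSpace ℝ (Fin 2)}
    (hw : gauge D w = 1) (hp : ∀ x, x ≠ 0 → 0 < gauge D x) (he : e ≠ 0) (hwe : ⟪w, e⟫ = 0) :
    ∃ v ∈ Set.extremePoints ℝ (polarSet D), ⟪v, w⟫ = 1 ∧ IsSideGradient (gauge D) w e v := by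
  have hcpt : IsCompact (polarSet D ∩ {v | ⟪v, w⟫ = 1}) :=
    (isCompact_polarSet hD0).inter_right (isClosed_eq (by fun_prop) continuous_const)
  obtain ⟨v₀, hv₀, hv₀w⟩ := exists_mem_polarSet_inner_eq_gauge hDconvex hD0 (x := w) (by
    rw [hw]; exact one_pos)
  rw [hw] at hv₀w
  obtain ⟨v, ⟨hv, hvw⟩, hmax⟩ := hcpt.exists_isMaxOn ⟨v₀, hv₀, hv₀w⟩
    (f := fun v => ⟪v, e⟫) (by fun_prop)
  have hmax' : ∀ v' ∈ polarSet D, ⟪v', w⟫ = 1 → ⟪v', e⟫ ≤ ⟪v, e⟫ := fun v' h1 h2 => hmax ⟨h1, h2⟩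
  exact ⟨v, mem_extremePoints_polarSet hD0 hw he hwe hv hvw hmax', hvw,
    isSideGradient_gauge hDconvex hD0 hw hp he hwe hv hvw hmax'⟩

/-- Each extreme point of the polar set is a one-sided gradient of the gauge. -/
lemma exists_isSideGradient_of_mem_extremePoints {D : Set (EuclideanSpace ℝ (Fin 2))}
    (hDclosed : IsClosed D) (hDbdd : Bornology.IsBounded D)
    (hDconvex : Convex ℝ D) (hD0 : 0 ∈ interior D) (hp : ∀ x, x ≠ 0 → 0 < gauge D x)
    {v : EuclideanSpace ℝ (Fin 2)} (hv : v ∈ Set.extremePoints ℝ (polarSet D)) :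
    ∃ w e : EuclideanSpace ℝ (Fin 2), gauge D w = 1 ∧ e ≠ 0 ∧ ⟪w, e⟫ = 0 ∧ ⟪v, w⟫ = 1 ∧
      IsSideGradient (gauge D) w e v := by
  obtain ⟨hvK, hext⟩ := hv
  obtain ⟨w, hwD, hmaxw⟩ := (Metric.isCompact_of_isClosed_isBounded hDclosed hDbdd).exists_isMaxOn
    ⟨0, interior_subset hD0⟩ (f := fun y => ⟪v, y⟫) (by fun_prop)
  have hmaxw' : ∀ y ∈ D, ⟪v, y⟫ ≤ ⟪v, w⟫ := fun y hy => hmaxw hy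
  obtain ⟨R, hR⟩ := isBounded_iff_forall_norm_le.1 hDbdd
  have hR0 : 0 ≤ R := (norm_nonneg _).trans (hR w hwD)
  have hvw : ⟪v, w⟫ = 1 := by
    by_contra hne
    have hlt : 0 < 1 - ⟪v, w⟫ := by
      have := lt_of_le_of_ne (hvK w hwD) hne
      linarith
    set h : EuclideanSpace ℝ (Fin 2) :=
      EuclideanSpace.single 0 ((1 - ⟪v, w⟫) / (R + 1)) with hh
    have hhn : ‖h‖ = (1 - ⟪v, w⟫) / (R + 1) := by
      rw [hh, PiLp.norm_single, Real.norm_of_nonneg (by positivity)]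
    have hin : ∀ z : EuclideanSpace ℝ (Fin 2), ‖z‖ ≤ ‖h‖ → v + z ∈ polarSet D := by
      intro z hz y hy
      rw [inner_add_left]
      have h1 := (real_inner_le_norm z y).trans
        (mul_le_mul hz (hR y hy) (norm_nonneg _) (norm_nonneg _))
      have h2 := hmaxw' y hy
      have h3 : ‖h‖ * R ≤ 1 - ⟪v, w⟫ := by
        rw [hhn, div_mul_eq_mul_div, div_le_iff₀ (by positivity)]
        nlinarith
      linarith
    have h1 := hext (hin h le_rfl) (hin (-h) (by rw [norm_neg]))
      ⟨1 / 2, 1 / 2, by norm_num, by norm_num, by norm_num, by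
        module⟩
    have h2 : h = 0 := by simpa using h1
    rw [h2, norm_zero] at hhn
    have : 0 < (1 - ⟪v, w⟫) / (R + 1) := by positivity
    linarith
  have hgw : gauge D w = 1 := by
    refine le_antisymm (gauge_le_one_of_mem hwD) ?_
    rw [← hvw]
    exact inner_le_gauge_of_mem_polarSet hD0 hvK w
  have hw0 : w ≠ 0 := by rintro rfl; simp at hgw
  obtain ⟨e, he, hwe⟩ := exists_orthogonal_ne_zero hw0
  by_cases h1 : ∀ v' ∈ polarSet D, ⟪v', w⟫ = 1 → ⟪v', e⟫ ≤ ⟪v, e⟫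
  · exact ⟨w, e, hgw, he, hwe, hvw, isSideGradient_gauge hDconvex hD0 hgw hp he hwe hvK hvw h1⟩
  by_cases h2 : ∀ v' ∈ polarSet D, ⟪v', w⟫ = 1 → ⟪v', -e⟫ ≤ ⟪v, -e⟫
  · have hwe' : ⟪w, -e⟫ = 0 := by rw [inner_neg_right, hwe, neg_zero]
    exact ⟨w, -e, hgw, neg_ne_zero.2 he, hwe', hvw,
      isSideGradient_gauge hDconvex hD0 hgw hp (neg_ne_zero.2 he) hwe' hvK hvw h2⟩
  exfalso
  push Not at h1 h2
  obtain ⟨a, haK, haw, hae⟩ := h1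
  obtain ⟨b, hbK, hbw, hbe⟩ := h2
  rw [inner_neg_right, inner_neg_right, neg_lt_neg_iff] at hbe
  set s := (⟪v, e⟫ - ⟪b, e⟫) / (⟪a, e⟫ - ⟪b, e⟫) with hs
  have hs0 : 0 < s := div_pos (by linarith) (by linarith)
  have hs1 : s < 1 := (div_lt_one (by linarith)).2 (by linarith)
  have hsv : s * (⟪a, e⟫ - ⟪b, e⟫) = ⟪v, e⟫ - ⟪b, e⟫ := div_mul_cancel₀ _ (by linarith)
  have hcomb : s • a + (1 - s) • b - v = 0 := by
    refine eq_zero_of_inner_eq_zero_of_orthogonal hw0 he hwe ?_ ?_ <;>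
      simp only [inner_sub_left, inner_add_left, real_inner_smul_left]
    · rw [haw, hbw, hvw]; ring
    · linarith
  have h3 := hext haK hbK ⟨s, 1 - s, hs0, by linarith, by ring, sub_eq_zero.1 hcomb⟩
  rw [h3] at hae
  exact lt_irrefl _ hae

lemma injOn_floor_div_of_separated {Q : Set ℝ} {δ : ℝ} (hδ : 0 < δ)
    (hQ : ∀ x ∈ Q, ∀ y ∈ Q, x ≠ y → δ ≤ dist x y) : Set.InjOn (fun q => ⌊q / δ⌋) Q := by
  intro x hx y hy hxy
  by_contra hne
  have h1 := hQ x hx y hy hne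
  have h2 := Int.abs_sub_lt_one_of_floor_eq_floor hxy
  rw [← sub_div, abs_div, abs_of_pos hδ, div_lt_one hδ] at h2
  rw [Real.dist_eq] at h1
  linarith

lemma UniformlyDiscrete.finite_inter_Icc {Q : Set ℝ} (hQ : UniformlyDiscrete Q) (a b : ℝ) :
    (Q ∩ Set.Icc a b).Finite := by
  obtain ⟨δ, hδ, hQ⟩ := hQ
  refine Set.Finite.of_injOn (f := fun q => ⌊q / δ⌋) (t := Set.Icc ⌊a / δ⌋ ⌊b / δ⌋) ?_
    ((injOn_floor_div_of_separated hδ hQ).mono Set.inter_subset_left) (Set.finite_Icc _ _)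
  rintro x ⟨-, hxa, hxb⟩
  exact ⟨Int.floor_mono (by gcongr), Int.floor_mono (by gcongr)⟩

lemma ncard_inter_Icc_le_of_separated {Q : Set ℝ} {δ : ℝ} (hδ : 0 < δ)
    (hQ : ∀ x ∈ Q, ∀ y ∈ Q, x ≠ y → δ ≤ dist x y) {r : ℝ} (hr : 0 ≤ r) :
    ((Q ∩ Set.Icc 0 r).ncard : ℝ) ≤ r / δ + 1 := by
  have h1 : (Q ∩ Set.Icc 0 r).ncard ≤ (Set.Icc (0 : ℤ) ⌊r / δ⌋).ncard := by
    refine Set.ncard_le_ncard_of_injOn (fun q => ⌊q / δ⌋) ?_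
      ((injOn_floor_div_of_separated hδ hQ).mono Set.inter_subset_left) (Set.finite_Icc _ _)
    rintro x ⟨-, hx0, hxr⟩
    exact ⟨Int.floor_nonneg.2 (by positivity), Int.floor_mono (by gcongr)⟩
  have h2 : (Set.Icc (0 : ℤ) ⌊r / δ⌋).ncard = (⌊r / δ⌋ + 1 - 0).toNat := by
    rw [← Int.card_Icc, ← Set.ncard_coe_finset, Finset.coe_Icc]
  rw [h2] at h1
  have h3 : 0 ≤ ⌊r / δ⌋ := Int.floor_nonneg.2 (by positivity)
  have h4 : (((⌊r / δ⌋ + 1 - 0).toNat : ℤ) : ℝ) = ⌊r / δ⌋ + 1 := by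
    rw [Int.toNat_of_nonneg (by omega)]; push_cast; ring
  calc ((Q ∩ Set.Icc 0 r).ncard : ℝ) ≤ ((⌊r / δ⌋ + 1 - 0).toNat : ℝ) := by exact_mod_cast h1
    _ = ⌊r / δ⌋ + 1 := by rw [← h4]; norm_cast
    _ ≤ r / δ + 1 := by gcongr; exact Int.floor_le _

/-- The counting function whose lower limit is the lower uniform density. -/
lemma lowerUniformDensity_real (S : Set ℝ) : lowerUniformDensity S =
    liminf (fun r : ℝ => ⨅ x : ℝ, ((S ∩ Set.Icc (x - r) (x + r)).ncard : ℝ) / (2 * r)) atTop := by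
  refine liminf_congr ?_
  filter_upwards [eventually_ge_atTop 0] with r hr
  refine iInf_congr fun x => ?_
  rw [Real.volume_closedBall, ENNReal.toReal_ofReal (by positivity), Real.closedBall_eq_Icc,
    Nat.card_coe_set_eq]

lemma bddBelow_density (S : Set ℝ) {r : ℝ} (hr : 0 ≤ r) : BddBelow (Set.range fun x : ℝ =>
    ((S ∩ Set.Icc (x - r) (x + r)).ncard : ℝ) / (2 * r)) :=
  ⟨0, by rintro _ ⟨x, rfl⟩; positivity⟩

lemma iInf_density_nonneg (S : Set ℝ) {r : ℝ} (hr : 0 ≤ r) :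
    0 ≤ ⨅ x : ℝ, ((S ∩ Set.Icc (x - r) (x + r)).ncard : ℝ) / (2 * r) :=
  le_ciInf fun x => by positivity

lemma union_neg_inter_Icc {Q : Set ℝ} (hQpos : Q ⊆ Set.Ioi 0) {s t : ℝ}
    (hs : 0 ≤ s) : (Q ∪ -Q) ∩ Set.Icc s t = Q ∩ Set.Icc s t := by
  ext q
  constructor
  · rintro ⟨h | h, h1⟩
    · exact ⟨h, h1⟩
    · have h2 : 0 < -q := hQpos h
      linarith [h1.1]
  · rintro ⟨h, h1⟩
    exact ⟨Or.inl h, h1⟩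

/-- Long intervals of the positive half-line contain many points of `Q`. -/
lemma exists_forall_le_card_of_lt_lowerUniformDensity {Q : Set ℝ} (hQpos : Q ⊆ Set.Ioi 0)
    (hQ : UniformlyDiscrete Q) {d' : ℝ} (hd : d' < lowerUniformDensity (Q ∪ -Q)) :
    ∃ L₀ > 0, ∀ L ≥ L₀, ∀ s ≥ 0, ∃ S : Finset ℝ, d' * L ≤ S.card ∧
      ∀ q ∈ S, q ∈ Q ∧ s ≤ q ∧ q < s + L := by
  obtain ⟨d₁, hd₁, hd₂⟩ := exists_between hd
  rw [lowerUniformDensity_real] at hd₂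
  have hev := eventually_lt_of_lt_liminf hd₂ (isBoundedUnder_of_eventually_ge (a := 0)
    ((eventually_ge_atTop 0).mono fun r hr => iInf_density_nonneg _ hr))
  obtain ⟨r₀, hr₀⟩ := eventually_atTop.1 hev
  refine ⟨max (max (2 * r₀) 1) (1 / (d₁ - d')), by positivity, fun L hL s hs => ?_⟩
  have hL1 : 2 * r₀ ≤ L := ((le_max_left _ _).trans (le_max_left _ _)).trans hL
  have hL2 : 1 ≤ L := ((le_max_right _ _).trans (le_max_left _ _)).trans hL
  have hL3 : 1 / (d₁ - d') ≤ L := (le_max_right _ _).trans hL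
  have h1 := hr₀ (L / 2) (by linarith)
  have h2 := ciInf_le (bddBelow_density (Q ∪ -Q) (r := L / 2) (by linarith)) (s + L / 2)
  have e1 : s + L / 2 - L / 2 = s := by ring
  have e2 : s + L / 2 + L / 2 = s + L := by ring
  simp only [e1, e2] at h2
  rw [union_neg_inter_Icc hQpos hs] at h2
  have h3 : d₁ * L ≤ (Q ∩ Set.Icc s (s + L)).ncard := by
    have h4 := h1.le.trans h2
    rw [le_div_iff₀ (by linarith)] at h4
    linarith
  have hfin : (Q ∩ Set.Icc s (s + L)).Finite := hQ.finite_inter_Icc _ _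
  refine ⟨hfin.toFinset.erase (s + L), ?_, fun q hq => ?_⟩
  · have h4 := Finset.pred_card_le_card_erase (s := hfin.toFinset) (a := s + L)
    rw [← Set.ncard_eq_toFinset_card _ hfin] at h4
    have h5 : ((Q ∩ Set.Icc s (s + L)).ncard : ℝ) ≤ (hfin.toFinset.erase (s + L)).card + 1 := by
      have : (Q ∩ Set.Icc s (s + L)).ncard ≤ (hfin.toFinset.erase (s + L)).card + 1 := by omega
      exact_mod_cast this
    rw [div_le_iff₀ (by linarith)] at hL3
    linarith
  · rw [Finset.mem_erase, Set.Finite.mem_toFinset] at hq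
    exact ⟨hq.2.1, hq.2.2.1, lt_of_le_of_ne hq.2.2.2 hq.1⟩

lemma le_ncard_inter_Icc_of_forall {Q : Set ℝ} (hQ : UniformlyDiscrete Q) {d' L T : ℝ}
    (hL : 0 < L) (hd' : 0 < d')
    (h : ∀ s ≥ T, d' * L ≤ (Q ∩ Set.Ico s (s + L)).ncard) {s t : ℝ} (hs : T ≤ s) :
    d' * (t - s - L) ≤ (Q ∩ Set.Icc s t).ncard := by
  have hfin : ∀ a b, (Q ∩ Set.Ico a b).Finite := fun a b =>
    (hQ.finite_inter_Icc a b).subset (Set.inter_subset_inter_right _ Set.Ico_subset_Icc_self)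
  have htile : ∀ n : ℕ, d' * (n * L) ≤ (Q ∩ Set.Ico s (s + n * L)).ncard := by
    intro n
    induction n with
    | zero => simp
    | succ n ih =>
      have h1 := h (s + n * L) (by have : (0 : ℝ) ≤ n * L := by positivity
                                   linarith)
      have h2 : Q ∩ Set.Ico s (s + (n + 1 : ℕ) * L) =
          (Q ∩ Set.Ico s (s + n * L)) ∪ (Q ∩ Set.Ico (s + n * L) (s + n * L + L)) := by
        rw [← Set.inter_union_distrib_left, Set.Ico_union_Ico_eq_Ico]
        · push_cast; ring_nf
        · have : (0 : ℝ) ≤ n * L := by positivity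
          linarith
        · linarith
      rw [h2, Set.ncard_union_eq _ (hfin _ _) (hfin _ _)]
      · push_cast
        linarith
      · exact (Set.Ico_disjoint_Ico_same (b := s + n * L)).mono Set.inter_subset_right
          Set.inter_subset_right
  rcases le_or_gt t s with hts | hts
  · have : d' * (t - s - L) ≤ 0 := mul_nonpos_of_nonneg_of_nonpos hd'.le (by linarith)
    exact this.trans (by positivity)
  · have h1 := htile ⌊(t - s) / L⌋₊
    have h2 : (⌊(t - s) / L⌋₊ : ℝ) * L ≤ t - s := by
      rw [← le_div_iff₀ hL]
      exact Nat.floor_le (div_nonneg (by linarith) hL.le)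
    have h3 : t - s ≤ ((⌊(t - s) / L⌋₊ : ℝ) + 1) * L := by
      rw [← div_le_iff₀ hL]
      exact (Nat.lt_floor_add_one _).le
    have h4 : (Q ∩ Set.Ico s (s + ⌊(t - s) / L⌋₊ * L)).ncard ≤ (Q ∩ Set.Icc s t).ncard := by
      refine Set.ncard_le_ncard ?_ (hQ.finite_inter_Icc s t)
      rintro q ⟨hq, h5, h6⟩
      exact ⟨hq, h5, by linarith⟩
    calc d' * (t - s - L) ≤ d' * (⌊(t - s) / L⌋₊ * L) := by gcongr; linarith
      _ ≤ _ := h1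
      _ ≤ _ := by exact_mod_cast h4

lemma ncard_neg_inter_Icc (Q : Set ℝ) (a b : ℝ) :
    (-Q ∩ Set.Icc a b).ncard = (Q ∩ Set.Icc (-b) (-a)).ncard := by
  have : -Q ∩ Set.Icc a b = -(Q ∩ Set.Icc (-b) (-a)) := by
    rw [Set.inter_neg, Set.neg_Icc, neg_neg, neg_neg]
  rw [this, ← Set.image_neg_eq_neg, Set.ncard_image_of_injective _ neg_injective]

lemma isCoboundedUnder_density {Q : Set ℝ} (hQpos : Q ⊆ Set.Ioi 0) (hQ : UniformlyDiscrete Q) :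
    IsCoboundedUnder (· ≥ ·) atTop
      (fun r : ℝ => ⨅ x : ℝ, (((Q ∪ -Q) ∩ Set.Icc (x - r) (x + r)).ncard : ℝ) / (2 * r)) := by
  obtain ⟨δ, hδ, hQδ⟩ := id hQ
  refine IsBoundedUnder.isCoboundedUnder_ge (isBoundedUnder_of_eventually_le (a := 1 / δ + 1) ?_)
  filter_upwards [eventually_ge_atTop 1] with r hr
  refine (ciInf_le (bddBelow_density _ (by linarith)) 0).trans ?_
  rw [zero_sub, zero_add, div_le_iff₀ (by linarith), Set.union_inter_distrib_right]
  have h1 : ((Q ∩ Set.Icc (-r) r).ncard : ℝ) ≤ r / δ + 1 := by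
    have : Q ∩ Set.Icc (-r) r = Q ∩ Set.Icc 0 r := by
      ext q
      refine ⟨fun h => ⟨h.1, (hQpos h.1).le, h.2.2⟩, fun h => ⟨h.1, by linarith [h.2.1], h.2.2⟩⟩
    rw [this]
    exact ncard_inter_Icc_le_of_separated hδ hQδ (by linarith)
  have h2 : ((Q ∩ Set.Icc (-r) r ∪ -Q ∩ Set.Icc (-r) r).ncard : ℝ) ≤
      (Q ∩ Set.Icc (-r) r).ncard + (-Q ∩ Set.Icc (-r) r).ncard := by
    exact_mod_cast Set.ncard_union_le _ _
  rw [ncard_neg_inter_Icc, neg_neg] at h2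
  have h3 : (1 / δ + 1) * (2 * r) = 2 * (r / δ) + 2 * r := by ring
  linarith

/-- Arbitrarily far away there are intervals of given length with few points of `Q`. -/
lemma exists_ncard_lt_of_lowerUniformDensity_lt {Q : Set ℝ} (hQpos : Q ⊆ Set.Ioi 0)
    (hQ : UniformlyDiscrete Q) {d' : ℝ} (hd' : 0 < d') (hd : lowerUniformDensity (Q ∪ -Q) < d')
    {L : ℝ} (hL : 0 < L) (T : ℝ) :
    ∃ s ≥ T, ((Q ∩ Set.Ico s (s + L)).ncard : ℝ) < d' * L := by
  by_contra! hcon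
  set T' := max T 0 with hT'
  have hT0 : 0 ≤ T' := le_max_right _ _
  have hcon' : ∀ s ≥ T', d' * L ≤ (Q ∩ Set.Ico s (s + L)).ncard := fun s hs =>
    hcon s ((le_max_left _ _).trans hs)
  have hkey : ∀ x r : ℝ, d' * (2 * r - 2 * T' - 2 * L) ≤
      ((Q ∪ -Q) ∩ Set.Icc (x - r) (x + r)).ncard := by
    intro x r
    have h1 := le_ncard_inter_Icc_of_forall hQ hL hd' hcon' (t := x + r)
      (le_max_right (x - r) T')
    have h2 := le_ncard_inter_Icc_of_forall hQ hL hd' hcon' (t := -(x - r))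
      (le_max_right (-(x + r)) T')
    have hf1 := hQ.finite_inter_Icc (x - r) (x + r)
    have hf2 := hQ.finite_inter_Icc (-(x + r)) (-(x - r))
    have h3 : (Q ∩ Set.Icc (max (x - r) T') (x + r)).ncard ≤ (Q ∩ Set.Icc (x - r) (x + r)).ncard :=
      Set.ncard_le_ncard (Set.inter_subset_inter_right _
        (Set.Icc_subset_Icc_left (le_max_left _ _))) hf1
    have h4 : (Q ∩ Set.Icc (max (-(x + r)) T') (-(x - r))).ncard ≤
        (Q ∩ Set.Icc (-(x + r)) (-(x - r))).ncard :=
      Set.ncard_le_ncard (Set.inter_subset_inter_right _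
        (Set.Icc_subset_Icc_left (le_max_left _ _))) hf2
    rw [← ncard_neg_inter_Icc] at h4
    have hf2' : (-Q ∩ Set.Icc (x - r) (x + r)).Finite := by
      have : -Q ∩ Set.Icc (x - r) (x + r) = -(Q ∩ Set.Icc (-(x + r)) (-(x - r))) := by
        rw [Set.inter_neg, Set.neg_Icc, neg_neg, neg_neg]
      rw [this]
      exact hf2.neg
    have h5 : ((Q ∪ -Q) ∩ Set.Icc (x - r) (x + r)).ncard =
        (Q ∩ Set.Icc (x - r) (x + r)).ncard + (-Q ∩ Set.Icc (x - r) (x + r)).ncard := by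
      rw [Set.union_inter_distrib_right, Set.ncard_union_eq _ hf1 hf2']
      rw [Set.disjoint_left]
      rintro q ⟨ha, -⟩ ⟨hb, -⟩
      have h6 : 0 < q := hQpos ha
      have h7 : 0 < -q := hQpos hb
      linarith
    have h3' : ((Q ∩ Set.Icc (max (x - r) T') (x + r)).ncard : ℝ) ≤
      (Q ∩ Set.Icc (x - r) (x + r)).ncard := by exact_mod_cast h3
    have h4' : ((Q ∩ Set.Icc (max (-(x + r)) T') (-(x - r))).ncard : ℝ) ≤
      (-Q ∩ Set.Icc (x - r) (x + r)).ncard := by exact_mod_cast h4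
    have n3 : (0 : ℝ) ≤ (Q ∩ Set.Icc (x - r) (x + r)).ncard := by positivity
    have n4 : (0 : ℝ) ≤ (-Q ∩ Set.Icc (x - r) (x + r)).ncard := by positivity
    rw [h5]
    push_cast
    have hdT : 0 ≤ d' * T' := by positivity
    have hdL : 0 ≤ d' * L := by positivity
    rcases max_cases (x - r) T' with ⟨e1, -⟩ | ⟨e1, -⟩ <;>
      rcases max_cases (-(x + r)) T' with ⟨e2, -⟩ | ⟨e2, -⟩ <;>
      rw [e1] at h1 h3' <;> rw [e2] at h2 h4' <;> nlinarith
  obtain ⟨d₁, hd₁, hd₂⟩ := exists_between (max_lt hd hd')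
  refine (not_le.2 ((le_max_left _ _).trans_lt hd₁)) ?_
  rw [lowerUniformDensity_real]
  refine le_liminf_of_le (isCoboundedUnder_density hQpos hQ) ?_
  filter_upwards [eventually_ge_atTop (d' * (T' + L) / (d' - d₁)), eventually_gt_atTop 0]
    with r hr hr0
  refine le_ciInf fun x => ?_
  rw [le_div_iff₀ (by positivity)]
  refine le_trans ?_ (hkey x r)
  rw [div_le_iff₀ (by linarith)] at hr
  linarith

lemma lowerUniformDensity_nonneg {Q : Set ℝ} (hQpos : Q ⊆ Set.Ioi 0)
    (hQ : UniformlyDiscrete Q) : 0 ≤ lowerUniformDensity (Q ∪ -Q) := by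
  rw [lowerUniformDensity_real]
  exact le_liminf_of_le (isCoboundedUnder_density hQpos hQ)
    ((eventually_ge_atTop 0).mono fun r hr => iInf_density_nonneg _ hr)

/-- Uniqueness: a function with spectrum of small width in the direction `u` which vanishes, in a
cone, on the level sets of `ℓ` at a dense set of levels, is zero. Here `ℓ` has approximate
gradient `v`. -/
lemma MemBernstein.eq_zero_of_eq_zero_on_cone {Ω : Set V} (hΩ : IsCompact Ω) {f : V → ℂ}
    (hf : MemBernstein Ω f) {v w e u z₀ : V} {ℓ : V → ℝ} {κ τ σ d' L₀ : ℝ} {Λ : Set ℝ}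
    (hτ : 0 < τ) (hκ : 0 ≤ κ) (hL₀ : 0 < L₀) (hd' : 0 < d') (hσ0 : 0 ≤ σ)
    (hspan : ∀ x : V, ∃ a b : ℝ, x = a • w + b • e)
    (hℓ : ∀ x ∈ sideCone w e τ, ∀ y ∈ sideCone w e τ, |ℓ x - ℓ y - ⟪v, x - y⟫| ≤ κ * ‖x - y‖)
    (hΛ : ∀ y ∈ sideCone w e τ, ∃ S : Finset ℝ, d' * L₀ ≤ S.card ∧
      ∀ q ∈ S, q ∈ Λ ∧ ℓ y ≤ q ∧ q < ℓ y + L₀)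
    (hz : ∀ y ∈ sideCone w e τ, ℓ y ∈ Λ → f (z₀ + y) = 0)
    (hvu : ⟪v, u⟫ = 1) (hσ : ∀ ω ∈ Ω, ∀ ω' ∈ Ω, ⟪u, ω - ω'⟫ ≤ σ)
    (hσd : σ < d' * (1 - κ * ‖u‖)) (x₀ : V) : f x₀ = 0 := by
  set c₀ := 1 - κ * ‖u‖ with hc₀
  have hc₀pos : 0 < c₀ := pos_of_mul_pos_right (hσ0.trans_lt hσd) hd'.le
  set D := d' * c₀ with hD
  have hDσ : 0 < D - σ := sub_pos.2 hσd
  set l := L₀ / c₀ with hl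
  have hlpos : 0 < l := by positivity
  obtain ⟨A, hA, hF⟩ := hf.exists_entire_of_width hΩ hσ hDσ
  obtain ⟨J₀, hJ₀⟩ := exists_norm_apply_zero_le_of_zeros hσ0 hσd hlpos
  obtain ⟨a, b, hab⟩ := hspan u
  obtain ⟨a', b', hab'⟩ := hspan (x₀ - z₀)
  set g := w + (τ / 2) • e with hg
  set δ := τ / (4 * (τ * |a| + |b| + 1)) with hδ
  have hδpos : 0 < δ := by positivity
  have hδle : δ * (τ * |a| + |b|) ≤ τ / 4 := by
    rw [hδ, div_mul_eq_mul_div, div_le_div_iff₀ (by positivity) (by norm_num)]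
    nlinarith
  set t₁ := max (4 / τ * (τ * |a'| + |b'|)) ((J₀ + 1) * l / δ) with ht₁
  have ht₁0 : 0 ≤ t₁ := le_max_of_le_left (by positivity)
  have hcone : ∀ t ≥ t₁, ∀ s : ℝ, |s| ≤ δ * t →
      x₀ - z₀ + t • g + s • u ∈ sideCone w e τ := by
    intro t ht s hs
    have ht0 : 0 ≤ t := ht₁0.trans ht
    have h1 : 4 / τ * (τ * |a'| + |b'|) ≤ t := (le_max_left _ _).trans ht
    have h2 : τ * |a'| + |b'| ≤ t * (τ / 4) := by
      rw [div_mul_eq_mul_div, div_le_iff₀ hτ] at h1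
      linarith
    have h3 : τ * |s * a| + |s * b| ≤ t * (τ / 4) := by
      rw [abs_mul, abs_mul]
      calc τ * (|s| * |a|) + |s| * |b| = |s| * (τ * |a| + |b|) := by ring
        _ ≤ (δ * t) * (τ * |a| + |b|) := by gcongr
        _ = t * (δ * (τ * |a| + |b|)) := by ring
        _ ≤ t * (τ / 4) := by gcongr
    have h4 : ∀ y : ℝ, 0 ≤ τ * |y| := fun y => by positivity
    refine ⟨a' + t + s * a, b' + t * (τ / 2) + s * b, ?_, ?_, ?_⟩
    · linarith [neg_abs_le b', neg_abs_le (s * b), h4 a', h4 (s * a)]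
    · have h5 : τ * (-|a'|) ≤ τ * a' := mul_le_mul_of_nonneg_left (neg_abs_le a') hτ.le
      have h6 : τ * (-|s * a|) ≤ τ * (s * a) := mul_le_mul_of_nonneg_left (neg_abs_le _) hτ.le
      linarith [le_abs_self b', le_abs_self (s * b)]
    · rw [hab', hg, hab]; module
  have hdecay : ∀ t ≥ t₁, ‖f (x₀ + t • g)‖ ≤
      max A 1 * Real.exp (-((D - σ) / 2 * (δ * t - l))) := by
    intro t ht
    have ht0 : 0 ≤ t := ht₁0.trans ht
    set J := ⌊δ * t / l⌋₊ with hJ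
    have hJle : J * l ≤ δ * t := by
      rw [← le_div_iff₀ hlpos]
      exact Nat.floor_le (by positivity)
    have hJge : δ * t - l ≤ J * l := by
      have := (Nat.lt_floor_add_one (δ * t / l)).le
      rw [div_le_iff₀ hlpos] at this
      linarith
    have hJJ₀ : J₀ ≤ J := by
      refine Nat.le_floor ?_
      have h1 : (J₀ + 1) * l / δ ≤ t := (le_max_right _ _).trans ht
      rw [div_le_iff₀ hδpos] at h1
      rw [le_div_iff₀ hlpos]
      linarith
    obtain ⟨F, hFd, hFn, hFb⟩ := hF (x₀ + t • g)
    have h := hJ₀ J hJJ₀ F (max A 1) hFd (le_max_right _ _) (fun z => (hFb z).trans (by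
      gcongr; exact le_max_left _ _)) ?_
    · have h0 := hFn 0
      simp only [zero_smul, add_zero, Complex.ofReal_zero] at h0
      rw [h0] at h
      refine h.trans ?_
      have : 0 ≤ (D - σ) / 2 := by linarith
      gcongr
    · intro s₀ hs₀ hs₁
      set y : ℝ → V := fun s => x₀ - z₀ + t • g + s • u with hy
      have hyc : ∀ s ∈ Set.Icc s₀ (s₀ + l), y s ∈ sideCone w e τ := by
        intro s hs
        refine hcone t ht s (abs_le.2 ⟨?_, ?_⟩)
        · linarith [hs.1]
        · linarith [hs.2]
      have hyy : ∀ s s', y s' - y s = (s' - s) • u := by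
        intro s s'; simp only [hy]; module
      have hlip : ∀ s ∈ Set.Icc s₀ (s₀ + l), ∀ s' ∈ Set.Icc s₀ (s₀ + l),
          |ℓ (y s') - ℓ (y s) - (s' - s)| ≤ κ * ‖u‖ * |s' - s| := by
        intro s hs s' hs'
        have h1 := hℓ _ (hyc s' hs') _ (hyc s hs)
        rw [hyy, inner_smul_right, hvu, mul_one, norm_smul, Real.norm_eq_abs] at h1
        linarith
      have hcont : ContinuousOn (fun s => ℓ (y s)) (Set.Icc s₀ (s₀ + l)) := by
        have : LipschitzOnWith (Real.toNNReal (1 + κ * ‖u‖)) (fun s => ℓ (y s))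
            (Set.Icc s₀ (s₀ + l)) := by
          refine LipschitzOnWith.of_dist_le_mul fun s' hs' s hs => ?_
          rw [Real.coe_toNNReal _ (by positivity), Real.dist_eq, Real.dist_eq]
          have h1 := abs_le.1 (hlip s hs s' hs')
          rw [abs_le]
          have h2 := neg_abs_le (s' - s)
          have h3 := le_abs_self (s' - s)
          constructor <;> linarith [h1.1, h1.2]
        exact this.continuousOn
      have hmem₀ : s₀ ∈ Set.Icc s₀ (s₀ + l) := ⟨le_rfl, by linarith⟩
      have hmem₁ : s₀ + l ∈ Set.Icc s₀ (s₀ + l) := ⟨by linarith, le_rfl⟩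
      have hend : ℓ (y s₀) + L₀ ≤ ℓ (y (s₀ + l)) := by
        have h1 := (abs_le.1 (hlip _ hmem₀ _ hmem₁)).1
        rw [add_sub_cancel_left, abs_of_pos hlpos] at h1
        have h2 : c₀ * l = L₀ := by rw [hl]; field_simp
        rw [hc₀] at h2
        linarith
      obtain ⟨S, hScard, hS⟩ := hΛ _ (hyc s₀ hmem₀)
      have hivt : ∀ q ∈ S, ∃ s ∈ Set.Icc s₀ (s₀ + l), ℓ (y s) = q := by
        intro q hq
        obtain ⟨-, h1, h2⟩ := hS q hq
        exact intermediate_value_Icc (by linarith) hcont ⟨h1, (h2.trans_le hend).le⟩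
      choose! r hr hrq using hivt
      have hinj : Set.InjOn r S := fun q hq q' hq' h => by
        rw [← hrq q hq, ← hrq q' hq', h]
      refine ⟨S.image r, ?_, ?_⟩
      · rw [Finset.card_image_of_injOn hinj]
        refine le_trans (le_of_eq ?_) hScard
        rw [hD, hl]; field_simp
      · intro s hs
        obtain ⟨q, hq, rfl⟩ := Finset.mem_image.1 hs
        obtain ⟨hqΛ, h1, h2⟩ := hS q hq
        refine ⟨(hr q hq).1, lt_of_le_of_ne (hr q hq).2 ?_, ?_⟩
        · intro h
          have h3 := hrq q hq
          rw [h] at h3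
          linarith
        · have h3 := hz (y (r q)) (hyc _ (hr q hq)) (by rw [hrq q hq]; exact hqΛ)
          have h4 : z₀ + y (r q) = x₀ + t • g + r q • u := by simp only [hy]; abel
          rw [← norm_eq_zero, hFn, ← h4, h3, norm_zero]
  obtain ⟨C, hC⟩ := hf.2.1
  have hC0 : 0 ≤ C := (norm_nonneg _).trans (hC 0)
  obtain ⟨R, hR⟩ := isBounded_iff_forall_norm_le.1 hΩ.isBounded
  have hwidth : ∀ ω ∈ Ω, ∀ ω' ∈ Ω, ⟪g, ω - ω'⟫ ≤ ‖g‖ * (R + R) := by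
    intro ω hω ω' hω'
    refine (real_inner_le_norm _ _).trans ?_
    gcongr
    exact (norm_sub_le _ _).trans (add_le_add (hR ω hω) (hR ω' hω'))
  obtain ⟨B, hB, hG⟩ := hf.exists_entire_of_width hΩ hwidth one_pos
  obtain ⟨G, hGd, hGn, hGb⟩ := hG x₀
  set c := (D - σ) / 2 * δ with hc
  have hcpos : 0 < c := by positivity
  set M := C * Real.exp (c * t₁) + max A 1 * Real.exp ((D - σ) / 2 * l) with hM
  have h := hGd.apply_zero_eq_zero_of_exp_decay (A := B)
    (B := 1 + |Real.pi * (‖g‖ * (R + R))|) (M := M) hcpos (fun z => ?_) (fun t => ?_)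
    fun t ht => ?_
  · have h0 := hGn 0
    simp only [zero_smul, add_zero, Complex.ofReal_zero] at h0
    rw [h, norm_zero] at h0
    exact norm_eq_zero.1 h0.symm
  · refine (hGb z).trans ?_
    have h1 := Complex.abs_im_le_norm z
    have h2 : Real.pi * (‖g‖ * (R + R)) * |z.im| ≤ |Real.pi * (‖g‖ * (R + R))| * ‖z‖ :=
      mul_le_mul (le_abs_self _) h1 (abs_nonneg _) (abs_nonneg _)
    have h3 : 1 * ‖z‖ + Real.pi * (‖g‖ * (R + R)) * |z.im| ≤
        (1 + |Real.pi * (‖g‖ * (R + R))|) * ‖z‖ := by linarith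
    exact mul_le_mul_of_nonneg_left (Real.exp_le_exp.2 h3) hB.le
  · rw [hGn]
    refine (hC _).trans ?_
    have h1 : 1 ≤ Real.exp (c * t₁) := Real.one_le_exp (by positivity)
    have h2 : 0 ≤ max A 1 * Real.exp ((D - σ) / 2 * l) := by positivity
    nlinarith
  · rw [hGn]
    rcases le_total t₁ t with htt | htt
    · refine (hdecay t htt).trans ?_
      have h1 : Real.exp (-((D - σ) / 2 * (δ * t - l))) =
          Real.exp ((D - σ) / 2 * l) * Real.exp (-(c * t)) := by
        rw [← Real.exp_add, hc]; ring_nf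
      rw [h1, ← mul_assoc]
      have h2 : 0 ≤ C * Real.exp (c * t₁) := by positivity
      exact mul_le_mul_of_nonneg_right (by linarith) (Real.exp_pos _).le
    · have h1 : 1 ≤ Real.exp (c * t₁) * Real.exp (-(c * t)) := by
        rw [← Real.exp_add]
        exact Real.one_le_exp (by nlinarith)
      have h2 : 0 ≤ max A 1 * Real.exp ((D - σ) / 2 * l) * Real.exp (-(c * t)) := by positivity
      calc ‖f (x₀ + t • g)‖ ≤ C := hC _
        _ ≤ C * (Real.exp (c * t₁) * Real.exp (-(c * t))) := le_mul_of_one_le_right hC0 h1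
        _ ≤ M * Real.exp (-(c * t)) := by rw [hM]; linarith

/-- The limits, along `l`, of points of `Q` seen from the moving origin `t`. -/
def limitLevels (l : Filter ℕ) (Q : Set ℝ) (t : ℕ → ℝ) : Set ℝ :=
  {a | ∃ q : ℕ → ℝ, (∀ᶠ n in l, q n ∈ Q) ∧ Tendsto (fun n => q n - t n) l (nhds a)}

lemma IsSideGradient.tendsto_sub {p : V → ℝ} {w e v : V} (h : IsSideGradient p w e v)
    {l : Filter ℕ} {x z : ℕ → V} {z₀ : V} (hz : Tendsto z l (nhds z₀))
    (hx : ∀ τ > 0, ∀ᶠ n in l, x n ∈ sideCone w e τ ∧ x n + z n ∈ sideCone w e τ) :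
    Tendsto (fun n => p (x n + z n) - p (x n)) l (nhds ⟪v, z₀⟫) := by
  have h1 : Tendsto (fun n => ⟪v, z n⟫) l (nhds ⟪v, z₀⟫) := tendsto_const_nhds.inner hz
  have h2 : Tendsto (fun n => p (x n + z n) - p (x n) - ⟪v, z n⟫) l (nhds 0) := by
    rw [Metric.tendsto_nhds]
    intro ε hε
    have hκ : 0 < ε / (‖z₀‖ + 1) / 2 := by positivity
    obtain ⟨τ, hτ, hcone⟩ := h _ hκ
    have hzn : ∀ᶠ n in l, ‖z n‖ < ‖z₀‖ + 1 := hz.norm.eventually_lt_const (by linarith)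
    filter_upwards [hx τ hτ, hzn] with n hn hn'
    have h3 := hcone _ hn.2 _ hn.1
    rw [add_sub_cancel_left] at h3
    rw [dist_zero_right, Real.norm_eq_abs]
    refine h3.trans_lt ?_
    calc ε / (‖z₀‖ + 1) / 2 * ‖z n‖ ≤ ε / (‖z₀‖ + 1) / 2 * (‖z₀‖ + 1) := by gcongr
      _ = ε / 2 := by field_simp
      _ < ε := by linarith
  have h3 := h2.add h1
  simpa using h3

/-- The limit levels of `Q` have at least the lower density of `Q`. -/
lemma exists_card_limitLevels {Q : Set ℝ} (hQpos : Q ⊆ Set.Ioi 0) (hQ : UniformlyDiscrete Q)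
    {d' : ℝ} (hd' : 0 < d') (hd : d' < lowerUniformDensity (Q ∪ -Q)) (𝒰 : Ultrafilter ℕ)
    {t : ℕ → ℝ} (ht : Tendsto t 𝒰 atTop) :
    ∃ L > 0, ∀ a : ℝ, ∃ S : Finset ℝ, d' * L ≤ S.card ∧
      ∀ q ∈ S, q ∈ limitLevels 𝒰 Q t ∧ a ≤ q ∧ q < a + L := by
  obtain ⟨d₁, hd₁, hd₂⟩ := exists_between hd
  obtain ⟨L', hL', hden⟩ := exists_forall_le_card_of_lt_lowerUniformDensity hQpos hQ hd₂
  obtain ⟨δ, hδ, hQδ⟩ := id hQ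
  have hLL : L' < L' * d₁ / d' := by
    rw [lt_div_iff₀ hd']
    gcongr
  refine ⟨L' * d₁ / d', hL'.trans hLL, fun a => ?_⟩
  set k := ⌈d₁ * L'⌉₊ with hk
  have hq : ∀ n, ∃ q : Fin k → ℝ, 0 ≤ t n + a → Function.Injective q ∧
      ∀ i, q i ∈ Q ∧ t n + a ≤ q i ∧ q i < t n + a + L' := by
    intro n
    by_cases hn : 0 ≤ t n + a
    · obtain ⟨S, hScard, hS⟩ := hden L' le_rfl _ hn
      have hkS : k ≤ S.card := Nat.ceil_le.2 hScard
      refine ⟨fun i => S.equivFin.symm (Fin.castLE hkS i), fun _ => ⟨?_, fun i => ?_⟩⟩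
      · exact Subtype.val_injective.comp (S.equivFin.symm.injective.comp (Fin.castLE_injective hkS))
      · exact hS _ (S.equivFin.symm (Fin.castLE hkS i)).2
    · exact ⟨0, fun h => absurd h hn⟩
  choose q hq using hq
  have hev : ∀ᶠ n in (𝒰 : Filter ℕ), 0 ≤ t n + a := by
    filter_upwards [ht.eventually_ge_atTop (-a)] with n hn
    linarith
  have hlim : ∀ i, ∃ b ∈ Set.Icc a (a + L'), Tendsto (fun n => q n i - t n) 𝒰 (nhds b) := by
    intro i
    have h1 : ((𝒰.map fun n => q n i - t n : Ultrafilter ℝ) : Filter ℝ) ≤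
        𝓟 (Set.Icc a (a + L')) := by
      rw [le_principal_iff, Ultrafilter.mem_coe, Ultrafilter.mem_map]
      filter_upwards [hev] with n hn
      obtain ⟨-, h2, h3⟩ := (hq n hn).2 i
      exact ⟨by linarith, by linarith⟩
    exact isCompact_Icc.ultrafilter_le_nhds _ h1
  choose b hb hblim using hlim
  have hinj : Function.Injective b := by
    intro i j hij
    by_contra hne
    have h1 : Tendsto (fun n => |q n i - q n j|) 𝒰 (nhds |b i - b j|) := by
      refine (((hblim i).sub (hblim j)).abs).congr fun n => ?_
      rw [sub_sub_sub_cancel_right]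
    have h2 : δ ≤ |b i - b j| := by
      refine ge_of_tendsto h1 ?_
      filter_upwards [hev] with n hn
      exact hQδ _ ((hq n hn).2 i).1 _ ((hq n hn).2 j).1 fun h => hne ((hq n hn).1 h)
    rw [hij, sub_self, abs_zero] at h2
    linarith
  refine ⟨Finset.univ.image b, ?_, ?_⟩
  · rw [Finset.card_image_of_injective _ hinj, Finset.card_univ, Fintype.card_fin]
    calc d' * (L' * d₁ / d') = d₁ * L' := by field_simp
      _ ≤ k := Nat.le_ceil _
  · intro c hc
    obtain ⟨i, -, rfl⟩ := Finset.mem_image.1 hc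
    refine ⟨⟨fun n => q n i, ?_, hblim i⟩, (hb i).1, (hb i).2.trans_lt (by linarith)⟩
    filter_upwards [hev] with n hn
    exact ((hq n hn).2 i).1

/-- A point outside the difference set of a compact convex set is separated from it by a direction
of small width. -/
lemma exists_width_lt_of_smul_notMem_sub {Ω : Set V} (hΩ : IsCompact Ω) (hΩc : Convex ℝ Ω)
    (hΩne : Ω.Nonempty) {d : ℝ} (hd : 0 ≤ d) {v : V} (hv : d • v ∉ Ω - Ω) :
    ∃ (u : V) (σ : ℝ), ⟪v, u⟫ = 1 ∧ 0 ≤ σ ∧ σ < d ∧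
      ∀ ω ∈ Ω, ∀ ω' ∈ Ω, ⟪u, ω - ω'⟫ ≤ σ := by
  have hcomp : IsCompact (Ω - Ω) := by
    rw [sub_eq_add_neg]
    exact hΩ.add hΩ.neg
  obtain ⟨f, s, hs, hsv⟩ := geometric_hahn_banach_closed_point (hΩc.sub hΩc) hcomp.isClosed hv
  obtain ⟨ω₀, hω₀⟩ := hΩne
  have hs0 : 0 < s := by simpa using hs (ω₀ - ω₀) (Set.sub_mem_sub hω₀ hω₀)
  rw [map_smul, smul_eq_mul] at hsv
  have hfv : 0 < f v := pos_of_mul_pos_right (hs0.trans hsv) hd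
  set g := (InnerProductSpace.toDual ℝ V).symm f with hg
  have hgf : ∀ y, ⟪g, y⟫ = f y := fun y => InnerProductSpace.toDual_symm_apply
  refine ⟨(f v)⁻¹ • g, s / f v, ?_, by positivity, (div_lt_iff₀ hfv).2 hsv,
    fun ω hω ω' hω' => ?_⟩
  · rw [inner_smul_right, real_inner_comm, hgf, inv_mul_cancel₀ hfv.ne']
  · rw [real_inner_smul_left, hgf, inv_mul_eq_div]
    gcongr
    exact (hs _ (Set.sub_mem_sub hω hω')).le

lemma exists_normalized_of_not_isSamplingSet {Ω P : Set V} (h : ¬ IsSamplingSet Ω P) (n : ℕ) :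
    ∃ f : V → ℂ, MemBernstein Ω f ∧ (∀ x, ‖f x‖ ≤ 1) ∧ (∃ x, 1 / 2 ≤ ‖f x‖) ∧
      ∀ y ∈ P, ‖f y‖ ≤ 1 / ((n : ℝ) + 1) := by
  rw [IsSamplingSet] at h
  push Not at h
  obtain ⟨f, hf, x, hx⟩ := h (n + 1) (by positivity)
  obtain ⟨C, hC⟩ := hf.2.1
  have hS0 : 0 ≤ sSup ((fun p => ‖f p‖) '' P) := Real.sSup_nonneg (by
    rintro _ ⟨y, -, rfl⟩; exact norm_nonneg _)
  have hfx : 0 < ‖f x‖ := lt_of_le_of_lt (by positivity) hx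
  have hbdd : BddAbove (Set.range fun y => ‖f y‖) := ⟨C, by rintro _ ⟨y, rfl⟩; exact hC y⟩
  set M := ⨆ y, ‖f y‖ with hM
  have hfM : ∀ y, ‖f y‖ ≤ M := fun y => le_ciSup hbdd y
  have hMpos : 0 < M := hfx.trans_le (hfM x)
  obtain ⟨x', hx'⟩ := exists_lt_of_lt_ciSup (show M / 2 < ⨆ y, ‖f y‖ by rw [← hM]; linarith)
  have hnorm : ∀ y, ‖((M⁻¹ : ℝ) : ℂ) * f y‖ = ‖f y‖ / M := fun y => by
    rw [norm_mul, Complex.norm_real, Real.norm_of_nonneg (by positivity), inv_mul_eq_div]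
  refine ⟨fun y => ((M⁻¹ : ℝ) : ℂ) * f y, hf.const_mul _, fun y => ?_, ⟨x', ?_⟩, fun y hy => ?_⟩
  · rw [hnorm, div_le_one hMpos]; exact hfM y
  · rw [hnorm, le_div_iff₀ hMpos]; linarith
  · rw [hnorm, div_le_div_iff₀ hMpos (by positivity)]
    have h1 : ‖f y‖ ≤ sSup ((fun p => ‖f p‖) '' P) :=
      le_csSup ⟨C, by rintro _ ⟨y, -, rfl⟩; exact hC y⟩ ⟨y, hy, rfl⟩
    have h2 := hfM x
    have h3 : ‖f y‖ * (n + 1) ≤ (n + 1) * sSup ((fun p => ‖f p‖) '' P) := by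
      rw [mul_comm]; gcongr
    linarith

lemma exists_eq_smul_add_smul {w e : EuclideanSpace ℝ (Fin 2)} (hw : w ≠ 0) (he : e ≠ 0)
    (hwe : ⟪w, e⟫ = 0) (x : EuclideanSpace ℝ (Fin 2)) :
    x = (⟪x, w⟫ / ‖w‖ ^ 2) • w + (⟪x, e⟫ / ‖e‖ ^ 2) • e := by
  have hw' := norm_ne_zero_iff.2 hw
  have he' := norm_ne_zero_iff.2 he
  have hew : ⟪e, w⟫ = 0 := by rw [real_inner_comm, hwe]
  rw [← sub_eq_zero]
  refine eq_zero_of_inner_eq_zero_of_orthogonal hw he hwe ?_ ?_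
  · rw [inner_sub_left, inner_add_left, real_inner_smul_left, real_inner_smul_left, hew,
      real_inner_self_eq_norm_sq]
    field_simp
    ring
  · rw [inner_sub_left, inner_add_left, real_inner_smul_left, real_inner_smul_left, hwe,
      real_inner_self_eq_norm_sq]
    field_simp
    ring

lemma exists_smul_norm_le_gauge {D : Set V} (hDbdd : Bornology.IsBounded D)
    (hD0 : 0 ∈ interior D) : ∃ c > 0, ∀ x, c * ‖x‖ ≤ gauge D x := by
  have hnhds := mem_interior_iff_mem_nhds.1 hD0
  obtain ⟨R, hR⟩ := isBounded_iff_forall_norm_le.1 hDbdd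
  have hsub : D ⊆ closedBall 0 (|R| + 1) := fun x hx => by
    rw [mem_closedBall_zero_iff]
    linarith [hR x hx, le_abs_self R]
  refine ⟨(|R| + 1)⁻¹, by positivity, fun x => ?_⟩
  rw [inv_mul_eq_div]
  exact le_gauge_of_subset_closedBall (absorbent_nhds_zero hnhds) (by positivity) hsub

lemma exists_eq_smul_mem_frontier_iff {D : Set V} (hDconvex : Convex ℝ D)
    (hD0 : 0 ∈ interior D) {Q : Set ℝ} (hQpos : Q ⊆ Set.Ioi 0) {x : V} :
    (∃ q ∈ Q, ∃ w ∈ frontier D, x = q • w) ↔ gauge D x ∈ Q := by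
  have hnhds := mem_interior_iff_mem_nhds.1 hD0
  constructor
  · rintro ⟨q, hq, w, hw, rfl⟩
    rw [gauge_smul_of_nonneg (hQpos hq).le, (gauge_eq_one_iff_mem_frontier hDconvex hnhds).2 hw]
    simpa using hq
  · intro hx
    have hpos : 0 < gauge D x := hQpos hx
    refine ⟨_, hx, (gauge D x)⁻¹ • x, ?_, (smul_inv_smul₀ hpos.ne' x).symm⟩
    rw [← gauge_eq_one_iff_mem_frontier hDconvex hnhds, gauge_smul_of_nonneg (by positivity),
      smul_eq_mul, inv_mul_cancel₀ hpos.ne']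

lemma eventually_mem_sideCone {w e : EuclideanSpace ℝ (Fin 2)} (hw : w ≠ 0) (he : e ≠ 0)
    (hwe : ⟪w, e⟫ = 0) {l : Filter ℕ} {x : ℕ → EuclideanSpace ℝ (Fin 2)} {r : ℕ → ℝ}
    (hr : Tendsto r l atTop) (hx : Tendsto (fun n => (r n)⁻¹ • x n) l (nhds w))
    (hxe : ∀ᶠ n in l, 0 ≤ ⟪x n, e⟫) {τ : ℝ} (hτ : 0 < τ) :
    ∀ᶠ n in l, x n ∈ sideCone w e τ := by
  have hw' := norm_pos_iff.2 hw
  have he' := norm_pos_iff.2 he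
  have h1 : Tendsto (fun n => τ * (⟪(r n)⁻¹ • x n, w⟫ / ‖w‖ ^ 2) -
      ⟪(r n)⁻¹ • x n, e⟫ / ‖e‖ ^ 2) l (nhds τ) := by
    have h2 := (((hx.inner (tendsto_const_nhds (x := w))).div_const (‖w‖ ^ 2)).const_mul τ).sub
      ((hx.inner (tendsto_const_nhds (x := e))).div_const (‖e‖ ^ 2))
    rwa [hwe, real_inner_self_eq_norm_sq, div_self (by positivity), mul_one, zero_div,
      sub_zero] at h2
  filter_upwards [h1.eventually_const_lt hτ, hr.eventually_gt_atTop 0, hxe] with n h2 h3 h4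
  refine ⟨_, _, by positivity, ?_, exists_eq_smul_add_smul hw he hwe (x n)⟩
  rw [real_inner_smul_left, real_inner_smul_left] at h2
  have h5 : 0 < (r n)⁻¹ * (τ * (⟪x n, w⟫ / ‖w‖ ^ 2) - ⟪x n, e⟫ / ‖e‖ ^ 2) := by
    refine h2.trans_eq ?_
    ring
  have h6 := pos_of_mul_pos_right h5 (by positivity)
  linarith

lemma exists_weakLimit_of_not_isSamplingSet {Ω P : Set V} (hΩ : IsCompact Ω)
    (h : ¬ IsSamplingSet Ω P) :
    ∃ (g : V → ℂ) (x : ℕ → V), MemBernstein Ω g ∧ g 0 ≠ 0 ∧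
      ∀ (l : Filter ℕ) [l.NeBot], l ≤ atTop → ∀ (z : ℕ → V) (z₀ : V), Tendsto z l (nhds z₀) →
        (∀ᶠ n in l, x n + z n ∈ P) → g z₀ = 0 := by
  choose f hf hf1 hfx hfP using exists_normalized_of_not_isSamplingSet h
  choose x hx using hfx
  obtain ⟨K, hK0, hK⟩ := MemBernstein.exists_lipschitz hΩ
  obtain ⟨g, φ, hφ, hg, hgΩ⟩ := MemBernstein.exists_subseq_limit hΩ
    (f := fun n y => f n (y + x n)) (ε := fun _ => 0) (M := 1) (fun _ => zero_le_one)
    tendsto_const_nhds (fun n => ((hf n).comp_add_right (x n)).mono (self_subset_cthickening _))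
    (fun n y => hf1 n _)
  refine ⟨g, x ∘ φ, hgΩ, ?_, fun l _ hl z z₀ hz hP => ?_⟩
  · have h1 : 1 / 2 ≤ ‖g 0‖ := by
      refine ge_of_tendsto (hg 0).norm (Eventually.of_forall fun n => ?_)
      simpa using hx (φ n)
    intro h0
    rw [h0, norm_zero] at h1
    norm_num at h1
  · have h1 : Tendsto (fun n : ℕ => 1 / ((n : ℝ) + 1) + K * 1 * ‖z₀ - z n‖) l (nhds 0) := by
      have h2 : Tendsto (fun n => ‖z₀ - z n‖) l (nhds 0) := by
        simpa using ((tendsto_const_nhds (x := z₀)).sub hz).norm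
      simpa using (tendsto_one_div_add_atTop_nhds_zero_nat.mono_left hl).add
        (h2.const_mul (K * 1))
    have h3 : Tendsto (fun n => f (φ n) (z₀ + x (φ n))) l (nhds 0) := by
      refine squeeze_zero_norm' ?_ h1
      filter_upwards [hP] with n hn
      have h4 := hK _ (hf (φ n)) 1 (hf1 _) (z₀ + x (φ n)) (z n + x (φ n))
      rw [add_sub_add_right_eq_sub] at h4
      have h5 := hfP (φ n) _ hn
      have h6 : (1 : ℝ) / ((φ n : ℝ) + 1) ≤ 1 / ((n : ℝ) + 1) := by
        have : (n : ℝ) ≤ φ n := by exact_mod_cast hφ.id_le n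
        gcongr
      have h7 := norm_sub_norm_le (f (φ n) (z₀ + x (φ n))) (f (φ n) (z n + x (φ n)))
      rw [Function.comp_apply, add_comm] at h5
      linarith
    exact tendsto_nhds_unique ((hg z₀).mono_left hl) h3

/-- If no `d⁻(Q) • v`, with `v` an extreme point of the polar set, is in `Ω - Ω`, then the union of
the dilations of the boundary is a sampling set. -/
lemma isSamplingSet_of_forall_notMem {Ω D : Set (EuclideanSpace ℝ (Fin 2))} (hΩ : IsCompact Ω)
    (hΩc : Convex ℝ Ω) (hΩne : Ω.Nonempty) (hDconvex : Convex ℝ D)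
    (hDbdd : Bornology.IsBounded D) (hD0 : 0 ∈ interior D) {Q : Set ℝ} (hQpos : Q ⊆ Set.Ioi 0)
    (hQ : UniformlyDiscrete Q)
    (hcond : ∀ v ∈ Set.extremePoints ℝ (polarSet D),
      lowerUniformDensity (Q ∪ -Q) • v ∉ Ω - Ω) :
    IsSamplingSet Ω {x | gauge D x ∈ Q} := by
  by_contra hns
  obtain ⟨g, x, hg, hg0, hgz⟩ := exists_weakLimit_of_not_isSamplingSet hΩ hns
  have hnhds := mem_interior_iff_mem_nhds.1 hD0
  have hcont : Continuous (gauge D) := continuous_gauge hDconvex hnhds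
  obtain ⟨c, hc, hcD⟩ := exists_smul_norm_le_gauge hDbdd hD0
  have hp : ∀ y, y ≠ 0 → 0 < gauge D y := fun y hy =>
    (mul_pos hc (norm_pos_iff.2 hy)).trans_le (hcD y)
  have hsep : ∀ v ∈ Set.extremePoints ℝ (polarSet D), ∃ (u : EuclideanSpace ℝ (Fin 2)) (σ d' : ℝ),
      ⟪v, u⟫ = 1 ∧ 0 ≤ σ ∧ σ < d' ∧ d' < lowerUniformDensity (Q ∪ -Q) ∧
      ∀ ω ∈ Ω, ∀ ω' ∈ Ω, ⟪u, ω - ω'⟫ ≤ σ := by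
    intro v hv
    obtain ⟨u, σ, h1, h2, h3, h4⟩ := exists_width_lt_of_smul_notMem_sub hΩ hΩc hΩne
      (lowerUniformDensity_nonneg hQpos hQ) (hcond v hv)
    obtain ⟨d', h5, h6⟩ := exists_between h3
    exact ⟨u, σ, d', h1, h2, h5, h6, h4⟩
  set 𝒰 : Ultrafilter ℕ := hyperfilter ℕ with h𝒰
  have h𝒰top : (𝒰 : Filter ℕ) ≤ atTop := Nat.hyperfilter_le_atTop
  by_cases hbdd : ∃ R, ∀ᶠ n in (𝒰 : Filter ℕ), ‖x n‖ ≤ R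
  · obtain ⟨R, hR⟩ := hbdd
    obtain ⟨x₀, -, hx₀⟩ := (isCompact_closedBall (0 : EuclideanSpace ℝ (Fin 2))
      R).ultrafilter_le_nhds
      (𝒰.map x) (by
        rw [le_principal_iff, Ultrafilter.mem_coe, Ultrafilter.mem_map]
        filter_upwards [hR] with n hn
        simpa using hn)
    have hx₀' : Tendsto x 𝒰 (nhds x₀) := hx₀
    obtain ⟨w₀, hw₀⟩ := exists_ne (0 : EuclideanSpace ℝ (Fin 2))
    set w := (gauge D w₀)⁻¹ • w₀ with hw
    have hgw₀ := hp w₀ hw₀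
    have hw1 : gauge D w = 1 := by
      rw [hw, gauge_smul_of_nonneg (by positivity), smul_eq_mul, inv_mul_cancel₀ hgw₀.ne']
    have hwne : w ≠ 0 := by
      intro h0
      simp [h0] at hw1
    obtain ⟨e, he, hwe⟩ := exists_orthogonal_ne_zero hwne
    obtain ⟨v, hv, -, hgrad⟩ := exists_extremePoint_isSideGradient hDconvex hD0 hw1 hp he hwe
    obtain ⟨u, σ, d', hvu, hσ0, hσd', hd', hσ⟩ := hsep v hv
    have hd'0 : 0 < d' := hσ0.trans_lt hσd'
    have hκ : 0 < (d' - σ) / (2 * d' * (‖u‖ + 1)) := by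
      have := sub_pos.2 hσd'
      positivity
    obtain ⟨τ, hτ, hℓ⟩ := hgrad _ hκ
    obtain ⟨L₀, hL₀, hden⟩ := exists_forall_le_card_of_lt_lowerUniformDensity hQpos hQ hd'
    refine hg0 (hg.eq_zero_of_eq_zero_on_cone hΩ (z₀ := -x₀) (ℓ := gauge D) (Λ := Q) (d' := d')
      (L₀ := L₀) hτ hκ.le hL₀ hd'0 hσ0 (fun y => ⟨_, _, exists_eq_smul_add_smul hwne he hwe y⟩) hℓ
      (fun y _ => hden L₀ le_rfl _ (gauge_nonneg _)) (fun y _ hyQ => ?_) hvu hσ ?_ 0)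
    · refine hgz 𝒰 h𝒰top (fun n => y - x n) _ ?_ (Eventually.of_forall fun n => ?_)
      · rw [neg_add_eq_sub]
        exact tendsto_const_nhds.sub hx₀'
      · simpa using hyQ
    · have h1 : d' * (1 - (d' - σ) / (2 * d' * (‖u‖ + 1)) * ‖u‖) =
          d' - (d' - σ) / 2 * (‖u‖ / (‖u‖ + 1)) := by
        field_simp
      have h2 : ‖u‖ / (‖u‖ + 1) ≤ 1 := by
        rw [div_le_one (by positivity)]; linarith
      rw [h1]
      nlinarith
  · have hxtop : Tendsto (fun n => ‖x n‖) 𝒰 atTop := by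
      rw [Filter.tendsto_atTop]
      intro R
      have h1 : ∀ᶠ n in (𝒰 : Filter ℕ), ¬ ‖x n‖ ≤ R :=
        Ultrafilter.eventually_not.2 fun h => hbdd ⟨R, h⟩
      filter_upwards [h1] with n hn
      exact (not_le.1 hn).le
    have hrtop : Tendsto (fun n => gauge D (x n)) 𝒰 atTop :=
      tendsto_atTop_mono (fun n => hcD (x n)) (hxtop.const_mul_atTop hc)
    have hbound : ∀ y, ‖(gauge D y)⁻¹ • y‖ ≤ c⁻¹ := fun y => by
      rw [norm_smul, norm_inv, Real.norm_of_nonneg (gauge_nonneg _), inv_mul_eq_div]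
      refine div_le_of_le_mul₀ (gauge_nonneg _) (by positivity) ?_
      rw [inv_mul_eq_div, le_div_iff₀ hc, mul_comm]
      exact hcD y
    obtain ⟨w, -, hw⟩ := (isCompact_closedBall (0 : EuclideanSpace ℝ (Fin 2))
      c⁻¹).ultrafilter_le_nhds (𝒰.map fun n => (gauge D (x n))⁻¹ • x n) (by
        rw [le_principal_iff, Ultrafilter.mem_coe, Ultrafilter.mem_map]
        filter_upwards with n
        simpa using hbound (x n))
    have hw' : Tendsto (fun n => (gauge D (x n))⁻¹ • x n) 𝒰 (nhds w) := hw
    have hw1 : gauge D w = 1 := by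
      refine tendsto_nhds_unique ((hcont.tendsto w).comp hw') (tendsto_const_nhds.congr' ?_)
      filter_upwards [hrtop.eventually_gt_atTop 0] with n hn
      rw [Function.comp_apply, gauge_smul_of_nonneg (by positivity), smul_eq_mul,
        inv_mul_cancel₀ hn.ne']
    have hwne : w ≠ 0 := by
      intro h0
      simp [h0] at hw1
    obtain ⟨e, he, hwe, hxe⟩ : ∃ e : EuclideanSpace ℝ (Fin 2), e ≠ 0 ∧ ⟪w, e⟫ = 0 ∧
        ∀ᶠ n in (𝒰 : Filter ℕ), 0 ≤ ⟪x n, e⟫ := by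
      obtain ⟨e, he, hwe⟩ := exists_orthogonal_ne_zero hwne
      by_cases h : ∀ᶠ n in (𝒰 : Filter ℕ), 0 ≤ ⟪x n, e⟫
      · exact ⟨e, he, hwe, h⟩
      · refine ⟨-e, neg_ne_zero.2 he, by rw [inner_neg_right, hwe, neg_zero], ?_⟩
        filter_upwards [Ultrafilter.eventually_not.2 h] with n hn
        rw [inner_neg_right]
        linarith
    obtain ⟨v, hv, -, hgrad⟩ := exists_extremePoint_isSideGradient hDconvex hD0 hw1 hp he hwe
    obtain ⟨u, σ, d', hvu, hσ0, hσd', hd', hσ⟩ := hsep v hv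
    have hd'0 : 0 < d' := hσ0.trans_lt hσd'
    obtain ⟨L₀, hL₀, hden⟩ := exists_card_limitLevels hQpos hQ hd'0 hd' 𝒰 hrtop
    refine hg0 (hg.eq_zero_of_eq_zero_on_cone hΩ (z₀ := 0) (ℓ := fun y => ⟪v, y⟫)
      (Λ := limitLevels 𝒰 Q fun n => gauge D (x n)) (d' := d') (w := w) (e := e)
      (L₀ := L₀) one_pos le_rfl hL₀ hd'0 hσ0
      (fun y => ⟨_, _, exists_eq_smul_add_smul hwne he hwe y⟩)
      (fun y _ z _ => by simp [inner_sub_right]) (fun y _ => hden _) ?_ hvu hσ (by simpa using hσd')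
      0)
    rintro y ⟨α, β, hβ, -, hy⟩ ⟨q, hqQ, hq⟩
    rw [zero_add]
    have hye : 0 ≤ ⟪y, e⟫ := by
      rw [hy, inner_add_left, real_inner_smul_left, real_inner_smul_left, hwe,
        real_inner_self_eq_norm_sq, mul_zero, zero_add]
      positivity
    have hlim := hgrad.tendsto_sub (l := 𝒰) (x := x) (tendsto_const_nhds (x := y)) fun τ hτ =>
      (eventually_mem_sideCone hwne he hwe hrtop hw' hxe hτ).and
        (eventually_mem_sideCone hwne he hwe hrtop (x := fun n => x n + y) (by
          have h1 := hw'.add ((tendsto_inv_atTop_zero.comp hrtop).smul_const y)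
          rw [zero_smul, add_zero] at h1
          exact h1.congr fun n => (smul_add _ _ _).symm) (by
          filter_upwards [hxe] with n hn
          rw [inner_add_left]
          exact add_nonneg hn hye) hτ)
    have hpos : ∀ᶠ n in (𝒰 : Filter ℕ), 0 < gauge D (x n + y) := by
      have h1 := hrtop.atTop_add hlim
      filter_upwards [h1.eventually_gt_atTop 0] with n hn
      linarith
    have hdiff : Tendsto (fun n => q n - gauge D (x n + y)) 𝒰 (nhds 0) := by
      have h1 := hq.sub hlim
      rw [sub_self] at h1
      exact h1.congr fun n => by ring
    refine hgz 𝒰 h𝒰top (fun n => (q n - gauge D (x n + y)) •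
      ((gauge D (x n + y))⁻¹ • (x n + y)) + y) y ?_ ?_
    · have h1 : Tendsto (fun n => (q n - gauge D (x n + y)) •
          ((gauge D (x n + y))⁻¹ • (x n + y))) 𝒰 (nhds 0) := by
        refine squeeze_zero_norm (fun n => ?_) (by simpa using hdiff.norm.mul_const c⁻¹)
        rw [norm_smul]
        exact mul_le_mul_of_nonneg_left (hbound _) (norm_nonneg _)
      simpa using h1.add_const y
    · filter_upwards [hpos, hqQ] with n hn hqn
      have h1 : x n + ((q n - gauge D (x n + y)) • ((gauge D (x n + y))⁻¹ • (x n + y)) + y) =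
          (q n / gauge D (x n + y)) • (x n + y) := by
        rw [smul_smul, sub_mul, mul_inv_cancel₀ hn.ne', ← div_eq_mul_inv, sub_smul, one_smul]
        abel
      have hq0 : 0 < q n := hQpos hqn
      rw [h1, gauge_smul_of_nonneg (by positivity), smul_eq_mul,
        div_mul_cancel₀ _ hn.ne']
      exact hqn

/-- The trigonometric sum with coefficients `a` and frequencies `θ`. -/
def trigSum (n : ℕ) (a : ℕ → ℂ) (θ : ℕ → ℝ) (s : ℝ) : ℂ :=
  ∑ k ∈ Finset.range n, a k * (Real.fourierChar (θ k * s) : ℂ)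

lemma exists_fourierChar_div_notMem {L : ℝ} (hL : 0 < L) (A : Finset ℂ) :
    ∃ s : ℝ, (Real.fourierChar (s / L) : ℂ) ∉ A := by
  have hinf : Infinite Circle := by
    have : Infinite (Set.Ioc (-Real.pi) Real.pi) :=
      (Set.Ioc_infinite (by linarith [Real.pi_pos])).to_subtype
    exact Infinite.of_injective _ Circle.argEquiv.symm.injective
  have hfin : ((fun z : Circle => (z : ℂ)) ⁻¹' (A : Set ℂ)).Finite :=
    A.finite_toSet.preimage Circle.coe_injective.injOn
  obtain ⟨z, hz⟩ := hfin.exists_notMem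
  refine ⟨L * (Complex.arg z / (2 * Real.pi)), ?_⟩
  rw [mul_div_cancel_left₀ _ hL.ne', Real.fourierChar_apply', mul_div_cancel₀ _ (by positivity),
    Circle.exp_arg]
  exact fun h => hz h

/-- A trigonometric sum of period `L` can be prescribed `2 * N` zeros, with frequencies at most
`N / L`. -/
lemma exists_trigSum_eq_zero {L : ℝ} (hL : 0 < L) {N : ℕ} {S : Finset ℝ} (hS : S.card ≤ 2 * N) :
    ∃ (n : ℕ) (a : ℕ → ℂ) (θ : ℕ → ℝ), (∀ k < n, |θ k| ≤ N / L) ∧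
      Function.Periodic (fun s => ‖trigSum n a θ s‖) L ∧ (∀ q ∈ S, trigSum n a θ q = 0) ∧
      ∃ s, trigSum n a θ s ≠ 0 := by
  classical
  set p : Polynomial ℂ := ∏ q ∈ S, (Polynomial.X - Polynomial.C (Real.fourierChar (q / L) : ℂ))
    with hp
  have hmonic : p.Monic := Polynomial.monic_prod_of_monic _ _ fun q _ => Polynomial.monic_X_sub_C _
  have hdeg : p.natDegree = S.card := by
    rw [hp, Polynomial.natDegree_prod_of_monic _ _ fun q _ => Polynomial.monic_X_sub_C _]
    simp
  have hF : ∀ s, trigSum (p.natDegree + 1) p.coeff (fun k => ((k : ℝ) - N) / L) s =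
      (Real.fourierChar (-(N / L * s)) : ℂ) * p.eval (Real.fourierChar (s / L) : ℂ) := by
    intro s
    rw [trigSum, Polynomial.eval_eq_sum_range, Finset.mul_sum]
    refine Finset.sum_congr rfl fun k _ => ?_
    have h1 : ((k : ℝ) - N) / L * s = -(N / L * s) + k • (s / L) := by
      rw [nsmul_eq_mul]; ring
    rw [h1, AddChar.map_add_eq_mul, AddChar.map_nsmul_eq_pow]
    push_cast
    ring
  have hnorm : ∀ s, ‖trigSum (p.natDegree + 1) p.coeff (fun k => ((k : ℝ) - N) / L) s‖ =
      ‖p.eval (Real.fourierChar (s / L) : ℂ)‖ := fun s => by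
    rw [hF, norm_mul, Circle.norm_coe, one_mul]
  refine ⟨p.natDegree + 1, p.coeff, fun k => ((k : ℝ) - N) / L, fun k hk => ?_, fun s => ?_,
    fun q hq => ?_, ?_⟩
  · rw [abs_div, abs_of_pos hL]
    have h1 : (k : ℝ) ≤ 2 * N := by
      have : k ≤ 2 * N := by omega
      exact_mod_cast this
    have h2 : (0 : ℝ) ≤ k := Nat.cast_nonneg k
    gcongr
    rw [abs_le]
    constructor <;> linarith
  · have h1 : (Real.fourierChar ((s + L) / L) : ℂ) = Real.fourierChar (s / L) := by
      rw [add_div, div_self hL.ne', AddChar.map_add_eq_mul]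
      have h2 : Real.fourierChar (1 : ℝ) = 1 := by
        rw [Real.fourierChar_apply', mul_one, Circle.exp_two_pi]
      rw [h2, mul_one]
    simp only [hnorm, h1]
  · rw [← norm_eq_zero, hnorm, norm_eq_zero, hp, Polynomial.eval_prod]
    exact Finset.prod_eq_zero hq (by simp)
  · obtain ⟨s, hs⟩ := exists_fourierChar_div_notMem hL p.roots.toFinset
    refine ⟨s, ?_⟩
    rw [← norm_ne_zero_iff, hnorm, norm_ne_zero_iff]
    intro h0
    exact hs (Multiset.mem_toFinset.2 ((Polynomial.mem_roots hmonic.ne_zero).2 h0))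

lemma memBernstein_trigSum {n : ℕ} {a : ℕ → ℂ} {θ : ℕ → ℝ} {η : ℝ} (hθ : ∀ k < n, |θ k| ≤ η) :
    MemBernstein (Set.Icc (-η) η) (trigSum n a θ) := by
  refine MemBernstein.sum _ fun k hk => MemBernstein.const_mul ?_ _
  have h1 := MemBernstein.fourierChar (Ω := Set.Icc (-η) η) (ω := θ k)
    (abs_le.1 (hθ k (Finset.mem_range.1 hk)))
  simpa [mul_comm] using h1

/-- A trigonometric sum with spectrum slightly longer than the density of `Q` can vanish on all
points of `Q` in a long interval around a point where its modulus is maximal. -/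
lemma exists_trigSum_of_lowerUniformDensity {Q : Set ℝ} (hQpos : Q ⊆ Set.Ioi 0)
    (hQ : UniformlyDiscrete Q) {ε K : ℝ} (hε : 0 < ε) (hK : 0 ≤ K) (T : ℝ) :
    ∃ (n : ℕ) (a : ℕ → ℂ) (θ : ℕ → ℝ) (t : ℝ), T ≤ t ∧
      (∀ k < n, |θ k| ≤ (lowerUniformDensity (Q ∪ -Q) + ε) / 2) ∧
      (∀ s, ‖trigSum n a θ s‖ ≤ 1) ∧ ‖trigSum n a θ t‖ = 1 ∧
      ∀ q ∈ Q, |q - t| ≤ K → trigSum n a θ q = 0 := by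
  classical
  set d := lowerUniformDensity (Q ∪ -Q) with hd
  have hd0 : 0 ≤ d := lowerUniformDensity_nonneg hQpos hQ
  set η := (d + ε) / 2 with hη
  have hη0 : 0 < η := by positivity
  obtain ⟨B, hB0, hB⟩ := MemBernstein.exists_lipschitz (isCompact_Icc : IsCompact (Set.Icc (-η) η))
  set s₀ := 1 / (B + 1) with hs₀
  have hs₀pos : 0 < s₀ := by positivity
  set J := ⌈K / s₀⌉₊ with hJ
  set L := (2 * J + 3) * 2 / ε + 1 with hLdef
  have hL : 0 < L := by positivity
  obtain ⟨s, hsT, hs⟩ := exists_ncard_lt_of_lowerUniformDensity_lt hQpos hQ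
    (d' := d + ε / 2) (by positivity) (by linarith) hL T
  have hfin : (Q ∩ Set.Ico s (s + L)).Finite :=
    (hQ.finite_inter_Icc s (s + L)).subset (Set.inter_subset_inter_right _ Set.Ico_subset_Icc_self)
  set net : Finset ℝ := (Finset.Icc (-(J : ℤ)) J).image fun j : ℤ => s + j * s₀ with hnet
  have hnetcard : (net.card : ℝ) ≤ 2 * J + 1 := by
    have h1 : net.card ≤ (Finset.Icc (-(J : ℤ)) J).card := Finset.card_image_le
    rw [Int.card_Icc] at h1
    have h2 : net.card ≤ 2 * J + 1 := by omega
    exact_mod_cast h2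
  set N := ⌊η * L⌋₊ with hN
  have hNle : (N : ℝ) ≤ η * L := Nat.floor_le (by positivity)
  have hNlt : η * L < N + 1 := Nat.lt_floor_add_one _
  have hScard : (hfin.toFinset ∪ net).card ≤ 2 * N := by
    have h1 := Finset.card_union_le hfin.toFinset net
    rw [Set.ncard_eq_toFinset_card _ hfin] at hs
    have h2 : ((hfin.toFinset ∪ net).card : ℝ) ≤ hfin.toFinset.card + net.card := by
      exact_mod_cast h1
    have h3 : (2 * J + 3) * 2 ≤ ε * L := by
      have : ε * L = (2 * J + 3) * 2 + ε := by rw [hLdef]; field_simp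
      linarith
    have h4 : ((hfin.toFinset ∪ net).card : ℝ) ≤ 2 * N := by
      have h5 : η * L = (d + ε / 2) * L / 2 + ε * L / 4 := by rw [hη]; ring
      linarith
    exact_mod_cast h4
  obtain ⟨n, a, θ, hθ, hper, hzero, s₁, hs₁⟩ := exists_trigSum_eq_zero hL hScard
  have hθη : ∀ k < n, |θ k| ≤ η := fun k hk => (hθ k hk).trans (by
    rw [div_le_iff₀ hL]; exact hNle)
  have hmem := memBernstein_trigSum (a := a) hθη
  obtain ⟨t₀, -, ht₀⟩ := (isCompact_Icc (a := s) (b := s + L)).exists_isMaxOn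
    ⟨s, le_rfl, by linarith⟩ hmem.1.norm.continuousOn
  obtain ⟨t, htI, ht⟩ := hper.exists_mem_Ico hL t₀ s
  set M := ‖trigSum n a θ t‖ with hM
  have hle : ∀ r, ‖trigSum n a θ r‖ ≤ M := by
    intro r
    obtain ⟨r', hr', hrr⟩ := hper.exists_mem_Ico hL r s
    have h1 := ht₀ (Set.Ico_subset_Icc_self hr')
    rw [hrr, ← ht]
    exact h1
  have hMpos : 0 < M := (norm_pos_iff.2 hs₁).trans_le (hle s₁)
  have hlip := hB _ hmem M hle
  have hfar : ∀ r, ‖trigSum n a θ r‖ = M → K < |r - s| := by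
    intro r hr
    by_contra! hrK
    set j : ℤ := round ((r - s) / s₀) with hj
    have h1 : |(r - s) / s₀ - j| ≤ 1 / 2 := abs_sub_round _
    have hjJ : |j| ≤ (J : ℤ) := by
      have h2 : |(r - s) / s₀| ≤ J := by
        rw [abs_div, abs_of_pos hs₀pos]
        exact (div_le_div_of_nonneg_right hrK hs₀pos.le).trans (Nat.le_ceil _)
      have h3 : |(j : ℝ)| < J + 1 := by
        have := abs_sub_abs_le_abs_sub (j : ℝ) ((r - s) / s₀)
        rw [abs_sub_comm] at this
        linarith
      have h4 : |j| < (J : ℤ) + 1 := by exact_mod_cast h3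
      omega
    have hjnet : s + j * s₀ ∈ hfin.toFinset ∪ net :=
      Finset.mem_union_right _ (Finset.mem_image.2 ⟨j, Finset.mem_Icc.2 (abs_le.1 hjJ), rfl⟩)
    have h5 := hlip r (s + j * s₀)
    rw [hzero _ hjnet, sub_zero, hr, Real.norm_eq_abs] at h5
    have h6 : |r - (s + j * s₀)| ≤ s₀ / 2 := by
      have h7 : r - (s + j * s₀) = ((r - s) / s₀ - j) * s₀ := by field_simp; ring
      rw [h7, abs_mul, abs_of_pos hs₀pos]
      nlinarith
    have h8 : B * M * |r - (s + j * s₀)| ≤ B * M * (s₀ / 2) := by gcongr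
    have h9 : B * M * (s₀ / 2) = M * (B / (B + 1)) / 2 := by rw [hs₀]; ring
    have h10 : B / (B + 1) ≤ 1 := by rw [div_le_one (by positivity)]; linarith
    nlinarith
  have hfar1 := hfar t rfl
  have hfar2 := hfar (t - L) (by
    have := hper (t - L)
    simp only [sub_add_cancel] at this
    rw [← this])
  rw [abs_of_nonneg (by linarith [htI.1])] at hfar1
  rw [abs_of_nonpos (by linarith [htI.2])] at hfar2
  have hsum : ∀ r, trigSum n (fun k => ((M⁻¹ : ℝ) : ℂ) * a k) θ r =
      ((M⁻¹ : ℝ) : ℂ) * trigSum n a θ r := fun r => by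
    simp only [trigSum, Finset.mul_sum, mul_assoc]
  have hsumn : ∀ r, ‖trigSum n (fun k => ((M⁻¹ : ℝ) : ℂ) * a k) θ r‖ =
      ‖trigSum n a θ r‖ / M := fun r => by
    rw [hsum, norm_mul, Complex.norm_real, Real.norm_of_nonneg (by positivity), inv_mul_eq_div]
  refine ⟨n, fun k => ((M⁻¹ : ℝ) : ℂ) * a k, θ, t, by linarith [htI.1], hθη, fun r => ?_, ?_,
    fun q hq hqt => ?_⟩
  · rw [hsumn, div_le_one hMpos]; exact hle r
  · rw [hsumn, ← hM, div_self hMpos.ne']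
  · rw [hsum, hzero q, mul_zero]
    refine Finset.mem_union_left _ (hfin.mem_toFinset.2 ⟨hq, ?_⟩)
    have h1 := abs_le.1 hqt
    constructor <;> linarith

/-- If `d⁻(Q) • v` is a difference of two points of `Ω`, then `B_Ω` contains an extremal function
which vanishes on the lines `⟪v, y⟫ = a`, for `a` a limit of levels of `Q` far away. -/
lemma exists_eq_zero_on_limitLevels {Ω : Set V} (hΩ : IsCompact Ω) (hΩc : Convex ℝ Ω)
    {Q : Set ℝ} (hQpos : Q ⊆ Set.Ioi 0) (hQ : UniformlyDiscrete Q) {v : V}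
    (hv : lowerUniformDensity (Q ∪ -Q) • v ∈ Ω - Ω) :
    ∃ (g : V → ℂ) (t : ℕ → ℝ), MemBernstein Ω g ∧ Tendsto t atTop atTop ∧ (∀ x, ‖g x‖ ≤ 1) ∧
      ‖g 0‖ = 1 ∧ ∀ (l : Filter ℕ) [l.NeBot], l ≤ atTop → ∀ y, ⟪v, y⟫ ∈ limitLevels l Q t →
        g y = 0 := by
  obtain ⟨ω₁, hω₁, ω₂, hω₂, hω⟩ := hv
  set d := lowerUniformDensity (Q ∪ -Q) with hd
  have hd0 : 0 ≤ d := lowerUniformDensity_nonneg hQpos hQ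
  have hεpos : ∀ n : ℕ, 0 < 1 / (((n : ℝ) + 1) * (‖v‖ + 1)) := fun n => by positivity
  choose k a θ t htT hθ hF1 hFt hFQ using fun n : ℕ =>
    exists_trigSum_of_lowerUniformDensity hQpos hQ (hεpos n) (Nat.cast_nonneg n) (n : ℝ)
  set m : V := (1 / 2 : ℝ) • (ω₁ + ω₂) with hm
  have hfreq : ∀ n i, i < k n → m + θ n i • v ∈ cthickening (1 / ((n : ℝ) + 1)) Ω := by
    intro n i hi
    have h1 := abs_le.1 (hθ n i hi)
    rw [← hd] at h1
    have hε := hεpos n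
    set c := max (-(d / 2)) (min (θ n i) (d / 2)) with hc
    have hc1 : -(d / 2) ≤ c := le_max_left _ _
    have hc2 : c ≤ d / 2 := max_le (by linarith) (min_le_right _ _)
    have hcθ : |θ n i - c| ≤ 1 / (((n : ℝ) + 1) * (‖v‖ + 1)) / 2 := by
      rw [abs_le, hc]
      rcases le_total (θ n i) (d / 2) with h2 | h2
      · rw [min_eq_left h2]
        rcases le_total (-(d / 2)) (θ n i) with h3 | h3
        · rw [max_eq_right h3]; constructor <;> linarith
        · rw [max_eq_left h3]; constructor <;> linarith
      · rw [min_eq_right h2, max_eq_right (by linarith)]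
        constructor <;> linarith
    obtain ⟨s, hs1, hs2, hs⟩ : ∃ s : ℝ, -(1 / 2) ≤ s ∧ s ≤ 1 / 2 ∧ c = s * d := by
      rcases hd0.eq_or_lt with h0 | h0
      · refine ⟨0, by norm_num, by norm_num, ?_⟩
        rw [← h0] at hc1 hc2
        linarith
      · refine ⟨c / d, ?_, ?_, (div_mul_cancel₀ _ h0.ne').symm⟩
        · rw [le_div_iff₀ h0]; linarith
        · rw [div_le_iff₀ h0]; linarith
    refine mem_cthickening_of_dist_le _ (m + c • v) _ _ ?_ ?_
    · have h2 : m + c • v = (1 / 2 + s) • ω₁ + (1 / 2 - s) • ω₂ := by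
        have h3 : ω₁ - ω₂ = d • v := hω
        rw [hs, mul_smul, ← h3, hm]
        module
      rw [h2]
      exact hΩc hω₁ hω₂ (by linarith) (by linarith) (by ring)
    · rw [dist_add_left, dist_eq_norm, ← sub_smul, norm_smul, Real.norm_eq_abs]
      calc |θ n i - c| * ‖v‖ ≤ 1 / (((n : ℝ) + 1) * (‖v‖ + 1)) / 2 * (‖v‖ + 1) := by
            gcongr
            linarith
        _ = 1 / ((n : ℝ) + 1) / 2 := by field_simp
        _ ≤ 1 / ((n : ℝ) + 1) := half_le_self (by positivity)
  set f : ℕ → V → ℂ := fun n y =>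
    (Real.fourierChar ⟪m, y⟫ : ℂ) * trigSum (k n) (a n) (θ n) (⟪v, y⟫ + t n) with hf
  have hfΩ : ∀ n : ℕ, MemBernstein (cthickening (1 / ((n : ℝ) + 1)) Ω) (f n) := by
    intro n
    have h1 := MemBernstein.sum (Finset.range (k n)) fun i hi =>
      (MemBernstein.fourierChar (hfreq n i (Finset.mem_range.1 hi))).const_mul
        (a n i * Real.fourierChar (θ n i * t n))
    convert h1 using 1
    funext y
    simp only [hf, trigSum, Finset.mul_sum]
    refine Finset.sum_congr rfl fun i _ => ?_
    have h2 : θ n i * (⟪v, y⟫ + t n) = θ n i * t n + θ n i * ⟪v, y⟫ := by ring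
    rw [inner_add_left, real_inner_smul_left v, h2, AddChar.map_add_eq_mul,
      AddChar.map_add_eq_mul]
    push_cast
    ring
  have hnorm : ∀ n y, ‖f n y‖ = ‖trigSum (k n) (a n) (θ n) (⟪v, y⟫ + t n)‖ := fun n y => by
    rw [hf, norm_mul, Circle.norm_coe, one_mul]
  obtain ⟨g, φ, hφ, hg, hgΩ⟩ := MemBernstein.exists_subseq_limit hΩ (f := f)
    (ε := fun n => 1 / ((n : ℝ) + 1)) (M := 1) (fun n => by
      rw [div_le_one (by positivity)]
      linarith [(Nat.cast_nonneg n : (0 : ℝ) ≤ n)])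
    tendsto_one_div_add_atTop_nhds_zero_nat hfΩ (fun n x => by rw [hnorm]; exact hF1 n _)
  refine ⟨g, t ∘ φ, hgΩ, ?_, fun x => ?_, ?_, fun l _ hl y hy => ?_⟩
  · exact (tendsto_atTop_mono htT tendsto_natCast_atTop_atTop).comp hφ.tendsto_atTop
  · refine le_of_tendsto (hg x).norm (Eventually.of_forall fun n => ?_)
    rw [hnorm]
    exact hF1 _ _
  · refine tendsto_nhds_unique (hg 0).norm (tendsto_const_nhds.congr fun n => ?_)
    rw [hnorm, inner_zero_right, zero_add, hFt]
  · obtain ⟨q, hqQ, hq⟩ := hy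
    obtain ⟨B, hB0, hB⟩ := MemBernstein.exists_lipschitz
      (isCompact_Icc : IsCompact (Set.Icc (-((d + 1) / 2)) ((d + 1) / 2)))
    have hmem : ∀ n, MemBernstein (Set.Icc (-((d + 1) / 2)) ((d + 1) / 2))
        (trigSum (k n) (a n) (θ n)) := fun n => memBernstein_trigSum fun i hi =>
      (hθ n i hi).trans (by
        have h1 : 1 / (((n : ℝ) + 1) * (‖v‖ + 1)) ≤ 1 := by
          rw [div_le_one (by positivity)]
          nlinarith [norm_nonneg v, (Nat.cast_nonneg n : (0 : ℝ) ≤ n)]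
        linarith)
    have hdiff : Tendsto (fun n => ⟪v, y⟫ - (q n - t (φ n))) l (nhds 0) := by
      simpa using (tendsto_const_nhds (x := ⟪v, y⟫)).sub hq
    have hlim : Tendsto (fun n => f (φ n) y) l (nhds 0) := by
      have hdiff' : Tendsto (fun n => B * 1 * ‖⟪v, y⟫ - (q n - t (φ n))‖) l (nhds 0) := by
        simpa using hdiff.norm.const_mul (B * 1)
      refine squeeze_zero_norm' ?_ hdiff'
      have hφl : Tendsto (fun n => (φ n : ℝ)) l atTop :=
        (tendsto_natCast_atTop_atTop.comp hφ.tendsto_atTop).mono_left hl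
      filter_upwards [hqQ, hq.abs.eventually_lt_const (lt_add_one _),
        hφl.eventually_ge_atTop (|⟪v, y⟫| + 1)] with n hn1 hn2 hn3
      have h1 := hB _ (hmem (φ n)) 1 (hF1 _) (⟪v, y⟫ + t (φ n)) (q n)
      rw [hFQ (φ n) _ hn1 (hn2.le.trans hn3), sub_zero] at h1
      rw [hnorm]
      rwa [add_sub_assoc, ← neg_sub (q n), ← sub_eq_add_neg] at h1
    exact tendsto_nhds_unique ((hg y).mono_left hl) hlim

/-- There are multipliers turning a slightly dilated function of `B_Ω` into a decaying one. -/
lemma exists_decaying_multiplier {Ω : Set V} (hΩc : Convex ℝ Ω) {ω₀ : V} {c : ℝ} (hc : 0 < c)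
    (hball : closedBall ω₀ c ⊆ Ω) :
    ∃ h : V → ℂ, Continuous h ∧ h 0 = 1 ∧ (∀ x, ‖h x‖ ≤ 1) ∧ Tendsto h (cocompact V) (nhds 0) ∧
      ∀ g, MemBernstein Ω g → ∀ ε : ℝ, 0 < ε → ε < 1 → MemBernstein Ω fun y =>
        (Real.fourierChar ⟪ε • ω₀, y⟫ : ℂ) * (g ((1 - ε) • y) * h ((c * ε) • y)) := by
  let b : ContDiffBump (0 : V) := ⟨1 / 2, 1, by norm_num, by norm_num⟩
  set η : V → ℂ := fun x => (b.normed volume x : ℂ) with hη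
  have hηint : Integrable η := b.integrable_normed.ofReal
  refine ⟨𝓕 η, continuous_fourier_of_integrable hηint, ?_, fun x => ?_, ?_, fun g hg ε hε hε1 => ?_⟩
  · rw [Real.fourier_eq]
    simp only [inner_zero_right, neg_zero, AddChar.map_zero_eq_one, one_smul, hη]
    rw [integral_complex_ofReal, b.integral_normed, Complex.ofReal_one]
  · refine (norm_fourier_le_integral_norm η x).trans_eq ?_
    simp only [hη, Complex.norm_real, Real.norm_of_nonneg (b.nonneg_normed _)]
    exact b.integral_normed
  · exact (tendsto_integral_exp_inner_smul_cocompact η).congr fun x => (Real.fourier_eq η x).symm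
  · have hcε : 0 < c * ε := by positivity
    have h1 : MemBernstein {x | ∃ ω ∈ Ω, x = ((1 - ε) / (c * ε)) • ω}
        fun y => g (((1 - ε) / (c * ε)) • y) :=
      hg.comp_smul (div_pos (by linarith) hcε).ne' fun ω hω => ⟨ω, hω, rfl⟩
    have h2 := h1.mul_fourier hηint
      (Ω' := {x | ∃ ω ∈ Ω, ∃ ξ : V, ‖ξ‖ ≤ 1 ∧ x = ((1 - ε) / (c * ε)) • ω - ξ}) (by
        rintro _ ⟨ω, hω, rfl⟩ ξ hξ
        refine ⟨ω, hω, ξ, ?_, rfl⟩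
        have h3 : ξ ∈ Function.support (b.normed volume) := fun h0 => hξ (by simp [hη, h0])
        rw [b.support_normed_eq, mem_ball_zero_iff] at h3
        exact h3.le)
    have h3 := h2.comp_smul (s := c * ε) hcε.ne'
      (Ω' := {x | ∃ ω ∈ Ω, ∃ ξ : V, ‖ξ‖ ≤ 1 ∧ x = (1 - ε) • ω - (c * ε) • ξ}) (by
        rintro _ ⟨ω, hω, ξ, hξ, rfl⟩
        refine ⟨ω, hω, ξ, hξ, ?_⟩
        rw [smul_sub, smul_smul, mul_div_cancel₀ _ hcε.ne'])
    have h4 := h3.fourierChar_mul (Ω' := Ω) (ε • ω₀) (by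
      rintro _ ⟨ω, hω, ξ, hξ, rfl⟩
      have h5 : (1 - ε) • ω - (c * ε) • ξ + ε • ω₀ = (1 - ε) • ω + ε • (ω₀ - c • ξ) := by
        rw [smul_sub, smul_smul, mul_comm c]
        abel
      rw [h5]
      refine hΩc hω (hball ?_) (by linarith) hε.le (by ring)
      rw [mem_closedBall, dist_eq_norm, sub_sub_cancel_left, norm_neg, norm_smul,
        Real.norm_of_nonneg hc.le]
      nlinarith)
    convert h4 using 5
    rw [smul_smul, div_mul_cancel₀ _ hcε.ne']

/-- A function of `B_Ω` can be replaced by a decaying one which is almost zero on the zero set. -/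
lemma MemBernstein.exists_tendsto_zero {Ω : Set V} (hΩ : IsCompact Ω) (hΩc : Convex ℝ Ω)
    (hΩint : (interior Ω).Nonempty) {g : V → ℂ} (hg : MemBernstein Ω g) (hg1 : ∀ x, ‖g x‖ ≤ 1)
    (hg0 : ‖g 0‖ = 1) {N : ℕ} (hN : 0 < N) :
    ∃ f : V → ℂ, MemBernstein Ω f ∧ ‖f 0‖ = 1 ∧ Tendsto f (cocompact V) (nhds 0) ∧
      ∀ y, g y = 0 → ‖f y‖ ≤ 2 / N := by
  classical
  obtain ⟨ω₀, hω₀⟩ := hΩint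
  obtain ⟨c, hc, hball⟩ := Metric.nhds_basis_closedBall.mem_iff.1
    (mem_interior_iff_mem_nhds.1 hω₀)
  obtain ⟨h, hhc, hh0, hh1, hhlim, hmem⟩ := exists_decaying_multiplier hΩc hc hball
  obtain ⟨K, hK0, hK⟩ := MemBernstein.exists_lipschitz hΩ
  have hNpos : (0 : ℝ) < N := Nat.cast_pos.2 hN
  obtain ⟨R, hR⟩ : ∃ R : ℝ, ∀ x : V, R ≤ ‖x‖ → ‖h x‖ ≤ 1 / N := by
    have h1 : ∀ᶠ x in cocompact V, ‖h x‖ < 1 / N :=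
      hhlim.norm.eventually_lt_const (by rw [norm_zero]; positivity)
    rw [← Metric.cobounded_eq_cocompact, ← comap_norm_atTop, eventually_comap] at h1
    obtain ⟨R, hR⟩ := eventually_atTop.1 h1
    exact ⟨R, fun x hx => (hR _ hx x rfl).le⟩
  set r := 1 / (N * (K + 1)) with hr
  have hrpos : 0 < r := by positivity
  set R' := max (R / c) 0 + r + 1 with hR'
  have hR'pos : 0 < R' := by positivity
  set ρ := r / R' with hρ
  have hρpos : 0 < ρ := by positivity
  have hρ1 : ρ < 1 := by
    rw [hρ, div_lt_one hR'pos, hR']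
    linarith [le_max_right (R / c) 0]
  set ε : ℕ → ℝ := fun i => ρ ^ (i + 1) with hε
  have hεpos : ∀ i, 0 < ε i := fun i => by positivity
  have hε1 : ∀ i, ε i < 1 := fun i => pow_lt_one₀ hρpos.le hρ1 (by omega)
  set G : ℕ → V → ℂ := fun i y =>
    (Real.fourierChar ⟪ε i • ω₀, y⟫ : ℂ) * (g ((1 - ε i) • y) * h ((c * ε i) • y)) with hG
  have hGnorm : ∀ i y, ‖G i y‖ = ‖g ((1 - ε i) • y)‖ * ‖h ((c * ε i) • y)‖ := fun i y => by
    rw [hG, norm_mul, norm_mul, Circle.norm_coe, one_mul]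
  have hG1 : ∀ i y, ‖G i y‖ ≤ 1 := fun i y => by
    rw [hGnorm]
    exact mul_le_one₀ (hg1 _) (norm_nonneg _) (hh1 _)
  have hGh : ∀ i y, ‖G i y‖ ≤ ‖h ((c * ε i) • y)‖ := fun i y => by
    rw [hGnorm]
    exact mul_le_of_le_one_left (norm_nonneg _) (hg1 _)
  have hGfar : ∀ i y, R' ≤ ε i * ‖y‖ → ‖G i y‖ ≤ 1 / N := fun i y hy => by
    refine (hGh i y).trans (hR _ ?_)
    rw [norm_smul, Real.norm_of_nonneg (by have := hεpos i; positivity), mul_assoc]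
    have h1 : R / c ≤ ε i * ‖y‖ := by
      have := le_max_left (R / c) 0
      linarith
    rwa [div_le_iff₀' hc] at h1
  have hGnear : ∀ i y, g y = 0 → ε i * ‖y‖ ≤ r → ‖G i y‖ ≤ 1 / N := fun i y hgy hy => by
    have h1 := hK g hg 1 hg1 ((1 - ε i) • y) y
    have h2 : (1 - ε i) • y - y = -(ε i • y) := by module
    rw [hgy, sub_zero, h2, norm_neg, norm_smul, Real.norm_of_nonneg (hεpos i).le] at h1
    have h3 : K * 1 * (ε i * ‖y‖) ≤ (K + 1) * r := by
      have := mul_le_mul_of_nonneg_left hy hK0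
      nlinarith
    have h4 : (K + 1) * r = 1 / N := by rw [hr]; field_simp
    rw [hGnorm]
    exact (mul_le_of_le_one_right (norm_nonneg _) (hh1 _)).trans (by linarith)
  have hone : ∀ (y : V) (i j : ℕ), i < j → (r < ε i * ‖y‖ ∧ ε i * ‖y‖ < R') →
      (r < ε j * ‖y‖ ∧ ε j * ‖y‖ < R') → False := by
    rintro y i j hij ⟨-, h1⟩ ⟨h2, -⟩
    have h3 : ε j ≤ ρ * ε i := by
      have : ρ * ε i = ρ ^ (i + 1 + 1) := by rw [hε]; ring
      rw [this]
      exact pow_le_pow_of_le_one hρpos.le hρ1.le (by omega)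
    have h4 : ε j * ‖y‖ ≤ ρ * (ε i * ‖y‖) := by
      rw [← mul_assoc]
      gcongr
    have h5 : ρ * R' = r := by rw [hρ]; field_simp
    nlinarith
  refine ⟨fun y => ((N : ℂ))⁻¹ * ∑ i ∈ Finset.range N, G i y,
    (MemBernstein.sum _ fun i _ => hmem g hg _ (hεpos i) (hε1 i)).const_mul _, ?_, ?_,
    fun y hy => ?_⟩
  · simp [hG, hh0, hg0, hN.ne']
  · have h1 : ∀ i, Tendsto (G i) (cocompact V) (nhds 0) := fun i => by
      refine squeeze_zero_norm (hGh i) ?_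
      have hci : c * ε i ≠ 0 := (mul_pos hc (hεpos i)).ne'
      have := (hhlim.comp (Homeomorph.smulOfNeZero _ hci).isClosedEmbedding.tendsto_cocompact).norm
      rwa [norm_zero] at this
    have h2 := (tendsto_finsetSum (Finset.range N) fun i _ => h1 i).const_mul ((N : ℂ))⁻¹
    simpa using h2
  · rw [norm_mul, norm_inv, Complex.norm_natCast, inv_mul_eq_div]
    refine div_le_div_of_nonneg_right ((norm_sum_le _ _).trans ?_) hNpos.le
    have hsmall : ∀ i, ¬ (r < ε i * ‖y‖ ∧ ε i * ‖y‖ < R') → ‖G i y‖ ≤ 1 / N := fun i hi => by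
      rcases le_or_gt (ε i * ‖y‖) r with h1 | h1
      · exact hGnear i y hy h1
      · exact hGfar i y (not_lt.1 fun h2 => hi ⟨h1, h2⟩)
    have hle : ∀ i ∈ Finset.range N, ‖G i y‖ ≤
        1 / N + if r < ε i * ‖y‖ ∧ ε i * ‖y‖ < R' then 1 else 0 := fun i _ => by
      split_ifs with hi
      · have : (0 : ℝ) ≤ 1 / N := by positivity
        linarith [hG1 i y]
      · rw [add_zero]; exact hsmall i hi
    refine (Finset.sum_le_sum hle).trans ?_
    rw [Finset.sum_add_distrib, Finset.sum_const, Finset.card_range, nsmul_eq_mul,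
      mul_one_div_cancel hNpos.ne', Finset.sum_boole]
    have hcard : (Finset.filter (fun i => r < ε i * ‖y‖ ∧ ε i * ‖y‖ < R')
        (Finset.range N)).card ≤ 1 := by
      rw [Finset.card_le_one]
      intro i hi j hj
      rcases lt_trichotomy i j with hij | hij | hij
      · exact (hone y i j hij (Finset.mem_filter.1 hi).2 (Finset.mem_filter.1 hj).2).elim
      · exact hij
      · exact (hone y j i hij (Finset.mem_filter.1 hj).2 (Finset.mem_filter.1 hi).2).elim
    have : ((Finset.filter (fun i => r < ε i * ‖y‖ ∧ ε i * ‖y‖ < R')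
        (Finset.range N)).card : ℝ) ≤ 1 := by exact_mod_cast hcard
    linarith

/-- A sequence with prescribed gauge approaching the direction `w` from the side of `e`. -/
lemma exists_gauge_eq_tendsto {D : Set V} (hDconvex : Convex ℝ D) (hD0 : 0 ∈ interior D)
    {w e : V} (hw1 : gauge D w = 1) (he : e ≠ 0) (hwe : ⟪w, e⟫ = 0) {t : ℕ → ℝ}
    (ht : Tendsto t atTop atTop) :
    ∃ x : ℕ → V, (∀ᶠ n in atTop, gauge D (x n) = t n) ∧
      Tendsto (fun n => (t n)⁻¹ • x n) atTop (nhds w) ∧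
      Tendsto (fun n => ⟪x n, e⟫) atTop atTop := by
  have hcont : Continuous (gauge D) := continuous_gauge hDconvex (mem_interior_iff_mem_nhds.1 hD0)
  have he' : 0 < ‖e‖ := norm_pos_iff.2 he
  have hsqrt : Tendsto (fun n => √(t n)) atTop atTop := Real.tendsto_sqrt_atTop.comp ht
  set z : ℕ → V := fun n => w + (√(t n))⁻¹ • e with hz
  have hzlim : Tendsto z atTop (nhds w) := by
    simpa using (tendsto_const_nhds (x := w)).add
      ((tendsto_inv_atTop_zero.comp hsqrt).smul_const e)
  have hpz : Tendsto (fun n => gauge D (z n)) atTop (nhds 1) :=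
    hw1 ▸ (hcont.tendsto w).comp hzlim
  have hpinv : Tendsto (fun n => (gauge D (z n))⁻¹) atTop (nhds 1) := by
    simpa using hpz.inv₀ one_ne_zero
  have hpos : ∀ᶠ n in atTop, 0 < t n ∧ 0 < gauge D (z n) :=
    (ht.eventually_gt_atTop 0).and (hpz.eventually_const_lt one_pos)
  refine ⟨fun n => (t n / gauge D (z n)) • z n, ?_, ?_, ?_⟩
  · filter_upwards [hpos] with n hn
    rw [gauge_smul_of_nonneg (div_pos hn.1 hn.2).le, smul_eq_mul, div_mul_cancel₀ _ hn.2.ne']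
  · have h1 := hpinv.smul hzlim
    rw [one_smul] at h1
    refine h1.congr' ?_
    filter_upwards [hpos] with n hn
    rw [smul_smul, div_eq_mul_inv, inv_mul_cancel_left₀ hn.1.ne']
  · have h1 : Tendsto (fun n => √(t n) * ((gauge D (z n))⁻¹ * ‖e‖ ^ 2)) atTop atTop :=
      hsqrt.atTop_mul_pos (C := 1 * ‖e‖ ^ 2) (by positivity) (hpinv.mul_const _)
    refine h1.congr' ?_
    filter_upwards [hpos] with n hn
    have h2 : √(t n) ≠ 0 := (Real.sqrt_pos.2 hn.1).ne'
    have h3 : √(t n) * √(t n) = t n := Real.mul_self_sqrt hn.1.le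
    rw [real_inner_smul_left, hz, inner_add_left, real_inner_smul_left, hwe, zero_add,
      real_inner_self_eq_norm_sq]
    nth_rewrite 2 [← h3]
    field_simp

/-- The density condition fails at some extreme point only if sampling fails. -/
lemma not_isSamplingSet_of_mem_sub {Ω D : Set (EuclideanSpace ℝ (Fin 2))} (hΩ : IsCompact Ω)
    (hΩc : Convex ℝ Ω) (hΩint : (interior Ω).Nonempty) (hDclosed : IsClosed D)
    (hDconvex : Convex ℝ D) (hDbdd : Bornology.IsBounded D) (hD0 : 0 ∈ interior D) {Q : Set ℝ}
    (hQpos : Q ⊆ Set.Ioi 0) (hQ : UniformlyDiscrete Q) {v : EuclideanSpace ℝ (Fin 2)}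
    (hv : v ∈ Set.extremePoints ℝ (polarSet D))
    (hvΩ : lowerUniformDensity (Q ∪ -Q) • v ∈ Ω - Ω) :
    ¬ IsSamplingSet Ω {x | gauge D x ∈ Q} := by
  rintro ⟨C, hC, hsamp⟩
  obtain ⟨c, hc, hcD⟩ := exists_smul_norm_le_gauge hDbdd hD0
  have hp : ∀ y, y ≠ 0 → 0 < gauge D y := fun y hy =>
    (mul_pos hc (norm_pos_iff.2 hy)).trans_le (hcD y)
  obtain ⟨w, e, hw1, he, hwe, -, hgrad⟩ :=
    exists_isSideGradient_of_mem_extremePoints hDclosed hDbdd hDconvex hD0 hp hv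
  have hw : w ≠ 0 := by
    rintro rfl
    simp at hw1
  obtain ⟨g, t, hg, ht, hg1, hg0, hgz⟩ := exists_eq_zero_on_limitLevels hΩ hΩc hQpos hQ hvΩ
  obtain ⟨N, hN⟩ := exists_nat_gt (3 * C)
  have hNpos : (0 : ℝ) < N := lt_trans (by positivity) hN
  obtain ⟨f, hf, hf0, hflim, hfz⟩ := hg.exists_tendsto_zero hΩ hΩc hΩint hg1 hg0
    (Nat.cast_pos.1 hNpos)
  obtain ⟨x, hxt, hxw, hxe⟩ := exists_gauge_eq_tendsto hDconvex hD0 hw1 he hwe ht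
  obtain ⟨n, hn⟩ : ∃ n, ∀ y, gauge D (x n + y) ∈ Q → ‖f y‖ ≤ 3 / N := by
    by_contra! hcon
    choose y hyQ hyf using hcon
    obtain ⟨R, hR⟩ : ∃ R : ℝ, ∀ n, ‖y n‖ ≤ R := by
      have h1 : ∀ᶠ z in cocompact (EuclideanSpace ℝ (Fin 2)), ‖f z‖ < 3 / N :=
        hflim.norm.eventually_lt_const (by rw [norm_zero]; positivity)
      rw [← Metric.cobounded_eq_cocompact, ← comap_norm_atTop, eventually_comap] at h1
      obtain ⟨R, hR⟩ := eventually_atTop.1 h1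
      exact ⟨R, fun n => le_of_not_gt fun h => (hyf n).not_gt (hR _ h.le _ rfl)⟩
    set 𝒰 : Ultrafilter ℕ := hyperfilter ℕ
    have h𝒰 : (𝒰 : Filter ℕ) ≤ atTop := Nat.hyperfilter_le_atTop
    obtain ⟨y₀, -, hy₀⟩ := (isCompact_closedBall (0 : EuclideanSpace ℝ (Fin 2))
      R).ultrafilter_le_nhds (𝒰.map y) (by
        rw [le_principal_iff, Ultrafilter.mem_coe, Ultrafilter.mem_map]
        exact Eventually.of_forall fun n => by simpa using hR n)
    have hylim : Tendsto y 𝒰 (nhds y₀) := hy₀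
    have ht' : Tendsto t 𝒰 atTop := ht.mono_left h𝒰
    have hxe' : Tendsto (fun n => ⟪x n, e⟫) 𝒰 atTop := hxe.mono_left h𝒰
    have hxye : Tendsto (fun n => ⟪x n + y n, e⟫) 𝒰 atTop := by
      simp only [inner_add_left]
      exact hxe'.atTop_add (hylim.inner tendsto_const_nhds)
    have hxyw : Tendsto (fun n => (t n)⁻¹ • (x n + y n)) 𝒰 (nhds w) := by
      simpa [smul_add] using
        (hxw.mono_left h𝒰).add ((tendsto_inv_atTop_zero.comp ht').smul hylim)
    have hlev : ⟪v, y₀⟫ ∈ limitLevels (𝒰 : Filter ℕ) Q t := by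
      refine ⟨fun n => gauge D (x n + y n), Eventually.of_forall hyQ, ?_⟩
      have h1 := hgrad.tendsto_sub hylim fun τ hτ =>
        (eventually_mem_sideCone hw he hwe ht' (hxw.mono_left h𝒰)
          (hxe'.eventually_ge_atTop 0) hτ).and
        (eventually_mem_sideCone hw he hwe ht' hxyw (hxye.eventually_ge_atTop 0) hτ)
      refine h1.congr' ?_
      filter_upwards [h𝒰 hxt] with n hn
      rw [hn]
    have h2 := hfz y₀ (hgz 𝒰 h𝒰 y₀ hlev)
    have h3 : 3 / (N : ℝ) ≤ ‖f y₀‖ :=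
      ge_of_tendsto ((hf.1.norm.tendsto y₀).comp hylim) (Eventually.of_forall fun n => (hyf n).le)
    have h4 : 2 / (N : ℝ) < 3 / N := by gcongr; norm_num
    linarith
  have h1 := hsamp _ (hf.comp_add_right (-x n)) (x n)
  rw [add_neg_cancel, hf0] at h1
  have h2 : sSup ((fun z => ‖f (z + -x n)‖) '' {z | gauge D z ∈ Q}) ≤ 3 / N := by
    refine Real.sSup_le ?_ (by positivity)
    rintro _ ⟨z, hz, rfl⟩
    exact hn _ (by simpa using hz)
  have h3 : C * (3 / N) < 1 := by
    rw [mul_div_assoc', div_lt_one hNpos]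
    linarith
  linarith [mul_le_mul_of_nonneg_left h2 hC.le]

lemma interior_nonempty_of_convex_of_volume_pos {Ω : Set V} (hΩc : Convex ℝ Ω)
    (hΩpos : 0 < volume Ω) : (interior Ω).Nonempty := by
  rw [Set.nonempty_iff_ne_empty]
  intro h
  have h1 : volume (frontier Ω) = 0 := hΩc.addHaar_frontier volume
  rw [frontier, h, Set.sdiff_empty] at h1
  exact hΩpos.ne' (measure_mono_null subset_closure h1)

/-- Theorem 3 (dilations of a convex curve): `P = Q·∂D` is a sampling set for `B_Ω`
iff `d⁻(Q)·v ∉ Ω − Ω` for every extreme point `v` of the polar set `D°`. -/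
theorem dilated_convex_curve_sampling
    (Ω : Set (EuclideanSpace ℝ (Fin 2))) (hΩcompact : IsCompact Ω) (hΩconvex : Convex ℝ Ω)
    (hΩpos : 0 < volume Ω)
    (D : Set (EuclideanSpace ℝ (Fin 2))) (hDclosed : IsClosed D) (hDconvex : Convex ℝ D)
    (hDpos : 0 < volume D) (hDfin : volume D < ⊤) (hD0 : 0 ∈ interior D)
    (Q : Set ℝ) (hQpos : Q ⊆ Set.Ioi 0) (hQud : UniformlyDiscrete Q)
    (P : Set (EuclideanSpace ℝ (Fin 2))) (hP : P = {x | ∃ q ∈ Q, ∃ w ∈ frontier D, x = q • w}) :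
    IsSamplingSet Ω P ↔
      ∀ v ∈ Set.extremePoints ℝ {x : EuclideanSpace ℝ (Fin 2) | ∀ y ∈ D, ⟪x, y⟫ ≤ 1},
        lowerUniformDensity (Q ∪ -Q) • v ∉ Ω - Ω := by
  have hP' : P = {x | gauge D x ∈ Q} :=
    hP.trans (Set.ext fun _ => exists_eq_smul_mem_frontier_iff hDconvex hD0 hQpos)
  have hDbdd := isBounded_of_convex_of_volume_lt_top hDconvex hDfin hD0
  have hΩint := interior_nonempty_of_convex_of_volume_pos hΩconvex hΩpos
  rw [hP']
  constructor
  · intro hs v hv hvΩ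
    exact not_isSamplingSet_of_mem_sub hΩcompact hΩconvex hΩint hDclosed hDconvex hDbdd hD0 hQpos
      hQud hv hvΩ hs
  · exact isSamplingSet_of_forall_notMem hΩcompact hΩconvex (hΩint.mono interior_subset) hDconvex
      hDbdd hD0 hQpos hQud
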